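/- Suppose (r−1)(n−1) ≥ 2. Then the second homotopy group of the irreducible locus X_r(U(n))^{irr} is cyclic of order n: π₂(X_r(U(n))^{irr}) ≅ ℤ/nℤ. The same holds with SU(n) in place of U(n). -/

import Mathlib

/-!
Let `E` be the space of irreducible `r`-tuples of unitary matrices (`ESet n r False`), or of special
unitary ones (`ESet n r True`), and let `B` be its quotient by simultaneous conjugation, which is the
irreducible locus. In both cases `SU(n)` acts on `E` with quotient `B`. By Schur's lemma all
stabilizers are the group `Z ≅ ℤ/n` of scalar matrices in `SU(n)`, and there are local slices
(`exists_slice`): near an irreducible tuple `A`, conjugate `A'` by the unitary part of the matrix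
that best intertwines `A'` and `A`. Hence `E → B` is a bundle with fibre `SU(n)/Z` (`isBundle_of_conj`), and
the connecting map `π₂(B) → π₁(SU(n)/Z) = Z` is an isomorphism (`IsBundle.homotopyGroup_equiv`) once
the following facts are known.

* `SU(n)` is simply connected: the columns of a family of unitary matrices over a space of dimension
  at most two can be straightened one after the other (`su_null`).
* Paths in `SU(n)` from `1` to `Z` have null-homotopic orbits in `E`, and maps of spheres `S² → E` are
  null-homotopic (`exists_null`). In the space of all tuples the homotopies are easy to find: for
  `SU(n)` by `su_null`, and for `U(n)` after lifting the determinants to `ℝ` (`exists_log`). A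
  homotopy is a map from a space of dimension at most three, and it can be pushed off the reducible
  tuples (`exists_push`), because these have codimension
  `2 (r - 1) a b ≥ 2 (r - 1) (n - 1) ≥ 4`, where `a + b = n` are the dimensions of an invariant
  subspace and its complement.

The general position argument avoids any manifold structure on `U(n)`. Tuples of unitary matrices are
regarded as elements of the vector space of all tuples of matrices, and the bad set there consists of
the tuples `(uᵢ pᵢ)` with `(uᵢ)` reducible and `pᵢ` positive semidefinite. The Cayley transform shows
that it is covered by the images of countably many `C¹` maps from vector spaces of small dimension
(`exists_paramMap`, `finrank_paramSpace_lt`), so that `exists_avoid`, an estimate of Hausdorff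
dimensions, gives a small perturbation that avoids it. The polar part of the perturbed family is then
unitary and irreducible.
-/

/-- The unitary group `U(n)` of `n × n` complex unitary matrices. -/
abbrev Un (n : ℕ) : Type := ↥(Matrix.unitaryGroup (Fin n) ℂ)

/-- The character variety `X_r(U(n))`: the quotient topological space of `U(n)^r`
by the diagonal conjugation action `g • (A₁, …, A_r) = (g A₁ g⁻¹, …, g A_r g⁻¹)`. -/
abbrev CharVarU (n r : ℕ) : Type :=
  Quotient (MulAction.orbitRel (ConjAct (Un n)) (Fin r → Un n))

/-- A tuple `(A₁, …, A_r)` of `n × n` unitary matrices is irreducible if no subspace of `ℂⁿ`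
other than `{0}` and `ℂⁿ` is invariant under all the `Aᵢ`. -/
def IsIrreducibleTupleU {n r : ℕ} (A : Fin r → Un n) : Prop :=
  ∀ p : Submodule ℂ (Fin n → ℂ),
    (∀ i, ∀ v ∈ p, (A i : Matrix (Fin n) (Fin n) ℂ).mulVec v ∈ p) → p = ⊥ ∨ p = ⊤

/-- The irreducible locus `X_r(U(n))^{irr}`: the subspace of classes of irreducible tuples. -/
def irrLocusU (n r : ℕ) : Set (CharVarU n r) :=
  {x | ∃ A : Fin r → Un n, IsIrreducibleTupleU A ∧
    Quotient.mk (MulAction.orbitRel (ConjAct (Un n)) (Fin r → Un n)) A = x}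

/-- The special unitary group `SU(n)`, as the subgroup of the unitary group `U(n)`
consisting of the unitary matrices of determinant `1`. -/
def SUsubgroup (n : ℕ) : Subgroup (Un n) :=
  MonoidHom.ker (Matrix.detMonoidHom.comp (Matrix.unitaryGroup (Fin n) ℂ).subtype)

/-- The special unitary group `SU(n)`. -/
abbrev SUn (n : ℕ) : Type := ↥(SUsubgroup n)

/-- The character variety `X_r(SU(n))`: the quotient topological space of `SU(n)^r`
by the diagonal conjugation action. -/
abbrev CharVarSU (n r : ℕ) : Type :=
  Quotient (MulAction.orbitRel (ConjAct (SUn n)) (Fin r → SUn n))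

/-- A tuple `(A₁, …, A_r)` of special unitary matrices is irreducible if no subspace of `ℂⁿ`
other than `{0}` and `ℂⁿ` is invariant under all the `Aᵢ`. -/
def IsIrreducibleTupleSU {n r : ℕ} (A : Fin r → SUn n) : Prop :=
  ∀ p : Submodule ℂ (Fin n → ℂ),
    (∀ i, ∀ v ∈ p, ((A i : Un n) : Matrix (Fin n) (Fin n) ℂ).mulVec v ∈ p) → p = ⊥ ∨ p = ⊤

/-- The irreducible locus `X_r(SU(n))^{irr}`: the subspace of classes of irreducible tuples. -/
def irrLocusSU (n r : ℕ) : Set (CharVarSU n r) :=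
  {x | ∃ A : Fin r → SUn n, IsIrreducibleTupleSU A ∧
    Quotient.mk (MulAction.orbitRel (ConjAct (SUn n)) (Fin r → SUn n)) A = x}

/-! ### General position -/

section
open Set Topology Module

/-- General position in a finite-dimensional real vector space `V`: a map `H` from a compact subset
`Y` of a Euclidean space `E` can be perturbed, relative to a closed set `C` on which it is already
safe, off the images of countably many `C¹` maps `Φ i` whose sources have dimension less than
`dim V - dim E`. The perturbation is a smooth approximation of `H` translated by a small vector `v`;
a `v` that fails lies in the union of the images of `(w, x) ↦ Φ i w - P x`, which has Hausdorff
dimension less than `dim V`. -/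
theorem exists_avoid {V E Y ι : Type} [NormedAddCommGroup V] [NormedSpace ℝ V]
    [FiniteDimensional ℝ V] [NormedAddCommGroup E] [NormedSpace ℝ E] [FiniteDimensional ℝ E]
    [TopologicalSpace Y] [CompactSpace Y] [T2Space Y] [Countable ι]
    {j : Y → E} (hj : IsClosedEmbedding j)
    (W : ι → Type) [∀ i, NormedAddCommGroup (W i)] [∀ i, NormedSpace ℝ (W i)]
    [∀ i, FiniteDimensional ℝ (W i)] (Φ : ∀ i, W i → V) (hΦ : ∀ i, ContDiff ℝ 1 (Φ i))
    (hdim : ∀ i, finrank ℝ (W i) + finrank ℝ E < finrank ℝ V)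
    {H : Y → V} (hH : Continuous H) {C : Set Y} (hC : IsClosed C)
    {O : Set V} (hO : IsOpen O) (hHO : ∀ y ∈ C, H y ∈ O) (hOΦ : ∀ i w, Φ i w ∉ O)
    {ε : ℝ} (hε : 0 < ε) :
    ∃ H' : Y → V, Continuous H' ∧ (∀ y, dist (H' y) (H y) < ε) ∧ (∀ y ∈ C, H' y = H y) ∧
      ∀ y i w, H' y ≠ Φ i w := by
  have : TietzeExtension V := TietzeExtension.of_tvs ℝ
  -- a smaller `ε`, so that the `ε`-thickening of `H '' C` lies in `O`
  obtain ⟨δ, hδ, hδO⟩ : ∃ δ > 0, Metric.cthickening δ (H '' C) ⊆ O :=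
    (hC.isCompact.image hH).exists_cthickening_subset_open hO (by rintro _ ⟨y, hy, rfl⟩; exact hHO y hy)
  set η := min ε (δ / 2) with hη
  have hη0 : 0 < η := by positivity
  obtain ⟨H₁, hH₁⟩ := ContinuousMap.exists_extension hj ⟨H, hH⟩
  obtain ⟨P, hP, hPH, -⟩ := Continuous.exists_contDiff_approx (n := 1) H₁.continuous
    (continuous_const : Continuous fun _ : E => η / 2) (fun _ => by positivity)
  -- the translations `v` for which `P + v` meets the image of some `Φ i`
  have hdense : Dense (⋃ i, range fun p : W i × E => Φ i p.1 - P p.2)ᶜ := by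
    rcases isEmpty_or_nonempty ι with hι | ⟨⟨i₀⟩⟩
    · simp
    apply dense_compl_of_dimH_lt_finrank
    rw [dimH_iUnion]
    have hle : ∀ i, dimH (range fun p : W i × E => Φ i p.1 - P p.2) ≤
        ((finrank ℝ V - 1 : ℕ) : ENNReal) := by
      intro i
      have hcd : ContDiff ℝ 1 fun p : W i × E => Φ i p.1 - P p.2 :=
        ((hΦ i).comp contDiff_fst).sub ((hP.of_le (by norm_num)).comp contDiff_snd)
      refine hcd.dimH_range_le.trans ?_
      rw [Module.finrank_prod]
      have := hdim i
      exact_mod_cast (by omega)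
    refine (iSup_le hle).trans_lt ?_
    have := hdim i₀
    exact_mod_cast (by omega)
  obtain ⟨v, hv, hvη⟩ := hdense.exists_dist_lt (0 : V) (ε := η / 2) (by positivity)
  have hv' : ‖v‖ < η / 2 := by simpa [dist_eq_norm] using hvη
  have hclose : ∀ y, ‖P (j y) + v - H y‖ < η := by
    intro y
    have h1 := hPH (j y)
    have h2 : H₁ (j y) = H y := congrArg (fun f => f y) hH₁
    rw [h2, dist_eq_norm] at h1
    calc ‖P (j y) + v - H y‖ = ‖(P (j y) - H y) + v‖ := by congr 1; abel
      _ ≤ ‖P (j y) - H y‖ + ‖v‖ := norm_add_le _ _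
      _ < η := by linarith
  let N : Set Y := H ⁻¹' Metric.thickening (δ / 2) (H '' C)
  have hN : IsOpen N := Metric.isOpen_thickening.preimage hH
  -- a cutoff which keeps `H` on `C` and is `1` away from the neighbourhood `N` of `C`
  obtain ⟨τ, hτ0, hτ1, hτ⟩ := exists_continuous_zero_one_of_isClosed hC hN.isClosed_compl
    (by
      rw [Set.disjoint_compl_right_iff_subset]
      intro y hy
      exact Metric.self_subset_thickening (by positivity) _ (mem_image_of_mem _ hy))
  refine ⟨fun y => H y + τ y • (P (j y) + v - H y), ?_, ?_, ?_, ?_⟩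
  · exact hH.add (τ.continuous.smul (((hP.continuous.comp hj.continuous).add continuous_const).sub hH))
  · intro y
    rw [dist_eq_norm, add_sub_cancel_left, norm_smul]
    calc ‖τ y‖ * ‖P (j y) + v - H y‖ ≤ 1 * ‖P (j y) + v - H y‖ := by
          gcongr; rw [Real.norm_eq_abs, abs_of_nonneg (hτ y).1]; exact (hτ y).2
      _ < ε := by rw [one_mul]; exact (hclose y).trans_le (min_le_left _ _)
  · intro y hy
    simp [hτ0 hy]
  · intro y i w he
    by_cases hy : y ∈ N
    · apply hOΦ i w
      rw [← he]
      apply hδO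
      obtain ⟨z, hz, hzd⟩ := Metric.mem_thickening_iff.1 hy
      refine Metric.mem_cthickening_of_dist_le _ z _ _ hz ?_
      rw [dist_eq_norm] at hzd ⊢
      calc ‖H y + τ y • (P (j y) + v - H y) - z‖ = ‖(H y - z) + τ y • (P (j y) + v - H y)‖ := by
            congr 1; abel
        _ ≤ ‖H y - z‖ + ‖τ y‖ * ‖P (j y) + v - H y‖ := by
            rw [← norm_smul]; exact norm_add_le _ _
        _ ≤ δ / 2 + 1 * (δ / 2) := by
            gcongr
            · rw [Real.norm_eq_abs, abs_of_nonneg (hτ y).1]; exact (hτ y).2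
            · exact (hclose y).le.trans (min_le_right _ _)
        _ = δ := by ring
    · beta_reduce at he
      rw [hτ1 hy] at he
      apply hv
      refine mem_iUnion.2 ⟨i, (w, j y), ?_⟩
      simp only [Pi.one_apply, one_smul] at he
      simp only [← he]; abel

end

/-! ### Closed graphs and the polar decomposition -/

section
open Set Topology Module

section Graph
variable {X Z : Type*} [TopologicalSpace X] [TopologicalSpace Z] {K : Set Z} {R : Set (X × Z)}

theorem isClosed_exists_of_isCompact (hK : IsCompact K) (hR : IsClosed R) :
    IsClosed {x | ∃ z ∈ K, (x, z) ∈ R} := by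
  have : CompactSpace K := isCompact_iff_compactSpace.1 hK
  have h := isClosedMap_fst_of_compactSpace (X := X) (Y := K) {p | (p.1, (p.2 : Z)) ∈ R}
    (hR.preimage (by fun_prop))
  convert h using 1
  ext x
  constructor
  · rintro ⟨z, hz, h⟩
    exact ⟨(x, ⟨z, hz⟩), h, rfl⟩
  · rintro ⟨⟨x', z⟩, h, rfl⟩
    exact ⟨z, z.2, h⟩

theorem isOpen_forall_of_isCompact (hK : IsCompact K) (hR : IsClosed R) :
    IsOpen {x | ∀ z ∈ K, (x, z) ∉ R} := by
  rw [← isClosed_compl_iff]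
  convert isClosed_exists_of_isCompact hK hR using 1
  ext x; simp

/-- A map into a compact set whose graph is closed is continuous. -/
theorem continuous_of_closed_graph [T2Space Z] (hK : IsCompact K) (hR : IsClosed R) {f : X → Z}
    (h₁ : ∀ x, f x ∈ K ∧ (x, f x) ∈ R) (h₂ : ∀ x, ∀ z ∈ K, (x, z) ∈ R → z = f x) :
    Continuous f := by
  rw [continuous_iff_isClosed]
  intro F hF
  convert isClosed_exists_of_isCompact (hK.inter_right hF) hR using 1
  ext x
  constructor
  · intro hx
    exact ⟨f x, ⟨(h₁ x).1, hx⟩, (h₁ x).2⟩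
  · rintro ⟨z, ⟨hz, hzF⟩, hR⟩
    rw [h₂ x z hz hR] at hzF
    exact hzF
end Graph

section Polar
open scoped MatrixOrder ComplexOrder
open Matrix

variable {n : ℕ}

theorem isCompact_unitaryGroup :
    IsCompact (Matrix.unitaryGroup (Fin n) ℂ : Set (Matrix (Fin n) (Fin n) ℂ)) := by
  have hcl : IsClosed (Matrix.unitaryGroup (Fin n) ℂ : Set (Matrix (Fin n) (Fin n) ℂ)) := by
    have : (Matrix.unitaryGroup (Fin n) ℂ : Set (Matrix (Fin n) (Fin n) ℂ)) =
        {A | A * star A = 1} := by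
      ext A; exact Matrix.mem_unitaryGroup_iff
    rw [this]
    exact isClosed_eq (by fun_prop) continuous_const
  have hK : IsCompact (Set.pi univ fun _ : Fin n => Set.pi univ fun _ : Fin n =>
      Metric.closedBall (0 : ℂ) 1) :=
    isCompact_univ_pi fun _ => isCompact_univ_pi fun _ => isCompact_closedBall _ _
  refine hK.of_isClosed_subset hcl ?_
  intro A hA i _ j _
  simpa using entry_norm_bound_of_unitary hA i j

theorem isClosed_posSemidef : IsClosed {A : Matrix (Fin n) (Fin n) ℂ | A.PosSemidef} := by
  simp only [Matrix.posSemidef_iff_dotProduct_mulVec, Matrix.IsHermitian, Set.ofPred_and, Set.ofPred_forall]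
  refine (isClosed_eq (by fun_prop) (by fun_prop)).inter (isClosed_iInter fun x => ?_)
  have hc : Continuous fun A : Matrix (Fin n) (Fin n) ℂ => star x ⬝ᵥ A *ᵥ x := by fun_prop
  exact isClosed_Ici.preimage hc

/-- The unitary part `A (A* A)^{-1/2}` of the polar decomposition of `A`. -/
noncomputable def polar (A : Matrix (Fin n) (Fin n) ℂ) : Matrix (Fin n) (Fin n) ℂ :=
  A * (CFC.sqrt (star A * A))⁻¹

theorem polar_spec {A : Matrix (Fin n) (Fin n) ℂ} (hA : A.det ≠ 0) :
    polar A ∈ Matrix.unitaryGroup (Fin n) ℂ ∧ (star (polar A) * A).PosSemidef := by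
  have h0 : (0 : Matrix (Fin n) (Fin n) ℂ) ≤ star A * A := star_mul_self_nonneg A
  set p := CFC.sqrt (star A * A) with hp
  have hpp : p * p = star A * A := CFC.sqrt_mul_sqrt_self _ h0
  have hp0 : p.PosSemidef := Matrix.nonneg_iff_posSemidef.1 (CFC.sqrt_nonneg _)
  have hps : star p = p := hp0.1
  have hdet : p.det ≠ 0 := by
    intro h
    have := congrArg Matrix.det hpp
    rw [Matrix.det_mul, Matrix.det_mul, h, Matrix.star_eq_conjTranspose,
      Matrix.det_conjTranspose] at this
    simp [hA] at this
  have hu : IsUnit p.det := isUnit_iff_ne_zero.2 hdet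
  have hpi : star p⁻¹ = p⁻¹ := by
    rw [Matrix.star_eq_conjTranspose, Matrix.conjTranspose_nonsing_inv, ← Matrix.star_eq_conjTranspose, hps]
  have key : star (polar A) * A = p := by
    rw [polar, ← hp, star_mul, hpi, mul_assoc, ← hpp, ← mul_assoc, Matrix.nonsing_inv_mul _ hu, one_mul]
  refine ⟨?_, key ▸ hp0⟩
  rw [Matrix.mem_unitaryGroup_iff']
  have h1 : polar A = A * p⁻¹ := rfl
  calc star (polar A) * polar A = star (polar A) * A * p⁻¹ := by rw [mul_assoc, ← h1]
    _ = 1 := by rw [key, Matrix.mul_nonsing_inv _ hu]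

theorem polar_unique {A u : Matrix (Fin n) (Fin n) ℂ} (hA : A.det ≠ 0)
    (hu : u ∈ Matrix.unitaryGroup (Fin n) ℂ) (hp : (star u * A).PosSemidef) : u = polar A := by
  have h1 : CFC.sqrt (star A * A) = star u * A := by
    refine CFC.sqrt_unique ?_ (Matrix.nonneg_iff_posSemidef.2 hp)
    have hs : star (star u * A) = star u * A := hp.1
    calc star u * A * (star u * A) = star (star u * A) * (star u * A) := by rw [hs]
      _ = star A * (u * star u) * A := by simp only [star_mul, star_star, mul_assoc]
      _ = star A * A := by rw [Matrix.mem_unitaryGroup_iff.1 hu, mul_one]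
  have hdet : IsUnit (star u * A).det := by
    rw [Matrix.det_mul]
    refine (IsUnit.mul ?_ (isUnit_iff_ne_zero.2 hA))
    rw [← Matrix.isUnit_iff_isUnit_det]
    exact IsUnit.of_mul_eq_one u (Matrix.mem_unitaryGroup_iff'.1 hu)
  rw [polar, h1]
  have h2 : A = u * (star u * A) := by
    rw [← mul_assoc, Matrix.mem_unitaryGroup_iff.1 hu, one_mul]
  conv_rhs => enter [1]; rw [h2]
  rw [mul_assoc, Matrix.mul_nonsing_inv _ hdet, mul_one]

theorem polar_of_unitary {u : Matrix (Fin n) (Fin n) ℂ}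
    (hu : u ∈ Matrix.unitaryGroup (Fin n) ℂ) : polar u = u := by
  have hdet : u.det ≠ 0 := by
    rw [← isUnit_iff_ne_zero, ← Matrix.isUnit_iff_isUnit_det]
    exact IsUnit.of_mul_eq_one (star u) (Matrix.mem_unitaryGroup_iff.1 hu)
  refine (polar_unique hdet hu ?_).symm
  rw [Matrix.mem_unitaryGroup_iff'.1 hu]
  exact Matrix.PosSemidef.one

theorem polar_mul {A h : Matrix (Fin n) (Fin n) ℂ} (hA : A.det ≠ 0)
    (hh : h ∈ Matrix.unitaryGroup (Fin n) ℂ) : polar (h * A) = h * polar A := by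
  have hdet : h.det ≠ 0 := by
    rw [← isUnit_iff_ne_zero, ← Matrix.isUnit_iff_isUnit_det]
    exact IsUnit.of_mul_eq_one (star h) (Matrix.mem_unitaryGroup_iff.1 hh)
  refine (polar_unique (by rw [Matrix.det_mul]; exact mul_ne_zero hdet hA)
    (mul_mem hh (polar_spec hA).1) ?_).symm
  rw [star_mul, mul_assoc, ← mul_assoc (star h), Matrix.mem_unitaryGroup_iff'.1 hh, one_mul]
  exact (polar_spec hA).2

theorem continuousOn_polar :
    ContinuousOn (polar (n := n)) {A | A.det ≠ 0} := by
  rw [continuousOn_iff_continuous_domRestrict]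
  refine continuous_of_closed_graph (X := {A : Matrix (Fin n) (Fin n) ℂ | A.det ≠ 0})
    (K := (Matrix.unitaryGroup (Fin n) ℂ : Set (Matrix (Fin n) (Fin n) ℂ)))
    (R := {p | (star p.2 * (p.1 : Matrix (Fin n) (Fin n) ℂ)).PosSemidef})
    isCompact_unitaryGroup (isClosed_posSemidef.preimage (by fun_prop)) ?_ ?_
  · intro x
    exact polar_spec x.2
  · intro x z hz hR
    exact polar_unique x.2 hz hR
end Polar

end

/-! ### Parametrization of reducible tuples -/

section
open Set Topology Module Matrix

section Param
variable {n r : ℕ}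

/-- The skew-Hermitian matrix with real coordinates `y`. -/
noncomputable def skewOf (y : Fin n → Fin n → ℝ) : Matrix (Fin n) (Fin n) ℂ :=
  Matrix.of fun i j => ((y i j - y j i : ℝ) : ℂ) + ((y i j + y j i : ℝ) : ℂ) * Complex.I

/-- Extension by zero of a family of reals indexed by the entries satisfying `Q`. -/
noncomputable def extZero (Q : Fin n → Fin n → Prop) [∀ i j, Decidable (Q i j)] (y : {p : Fin n × Fin n // Q p.1 p.2} → ℝ) :
    Fin n → Fin n → ℝ :=
  fun i j => if h : Q i j then y ⟨(i, j), h⟩ else 0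

theorem exists_skewOf {Q : Fin n → Fin n → Prop} [∀ i j, Decidable (Q i j)] (hQ : ∀ i j, Q i j → Q j i)
    {M : Matrix (Fin n) (Fin n) ℂ} (hM : star M = -M) (hz : ∀ i j, ¬ Q i j → M i j = 0) :
    ∃ y, skewOf (extZero Q y) = M := by
  refine ⟨fun p => ((M p.1.1 p.1.2).im + (M p.1.1 p.1.2).re) / 2, ?_⟩
  ext i j
  have h1 : M j i = - star (M i j) := by
    have := congrFun (congrFun hM j) i
    rw [Matrix.star_apply, Matrix.neg_apply] at this
    rw [this, neg_neg]
  simp only [skewOf, Matrix.of_apply, extZero]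
  by_cases h : Q i j
  · have h' : Q j i := hQ _ _ h
    simp only [h, h', dif_pos, h1]
    apply Complex.ext <;> simp <;> ring
  · have h' : ¬ Q j i := fun h' => h (hQ _ _ h')
    simp [h, h', hz i j h]

/-- Two coordinates are in the same block of the partition `S, Sᶜ`. -/
abbrev SameBlock (S : Finset (Fin n)) (i j : Fin n) : Prop := i ∈ S ↔ j ∈ S

/-- Two coordinates are in different blocks of the partition `S, Sᶜ`. -/
abbrev DiffBlock (S : Finset (Fin n)) (i j : Fin n) : Prop := ¬ (i ∈ S ↔ j ∈ S)

/-- The parameters for the tuples `(uᵢ pᵢ)` with `uᵢ` unitary and reducible of type `S`: an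
off-diagonal block matrix `Λ` (a subspace of dimension `|S|`), for each `i` a block diagonal matrix
(for `uᵢ`) and an arbitrary one (for `pᵢ`), all skew-Hermitian and given by real coordinates. -/
abbrev ParamSpace (r : ℕ) (S : Finset (Fin n)) : Type :=
  ({p : Fin n × Fin n // DiffBlock S p.1 p.2} → ℝ) ×
  (Fin r → {p : Fin n × Fin n // SameBlock S p.1 p.2} → ℝ) × (Fin r → Fin n → Fin n → ℝ)

/-- The skew-Hermitian matrix `(1 + Λ) Y (1 - Λ)`. -/
noncomputable def paramX (S : Finset (Fin n)) (w : ParamSpace r S) (i : Fin r) :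
    Matrix (Fin n) (Fin n) ℂ :=
  (1 + skewOf (extZero _ w.1)) * skewOf (extZero _ (w.2.1 i)) * (1 - skewOf (extZero _ w.1))

/-- The parametrization of the tuples `(uᵢ pᵢ)` with `uᵢ` unitary and reducible, `pᵢ` positive
semidefinite. Up to the scalar `c i`, the unitary factor is the Cayley transform of `paramX`. -/
noncomputable def paramMap (S : Finset (Fin n)) (c : Fin r → ℂ) (w : ParamSpace r S) :
    Fin r → Fin n → Fin n → ℂ := fun i =>
  c i • ((1 - paramX S w i) * ((Complex.I • skewOf (w.2.2 i)) * (Complex.I • skewOf (w.2.2 i))) *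
    (1 - paramX S w i) :
    Matrix (Fin n) (Fin n) ℂ)

section ContDiffEntries
variable {E : Type*} [NormedAddCommGroup E] [NormedSpace ℝ E]

/-- Matrix-valued maps with `C¹` entries. Entrywise, since `Matrix` carries no global norm. -/
def CDE (f : E → Matrix (Fin n) (Fin n) ℂ) : Prop := ∀ i j, ContDiff ℝ 1 fun w => f w i j

theorem CDE.mul {f g : E → Matrix (Fin n) (Fin n) ℂ} (hf : CDE f) (hg : CDE g) :
    CDE fun w => f w * g w := by
  intro i j
  simp only [Matrix.mul_apply]
  exact ContDiff.sum fun k _ => (hf i k).mul (hg k j)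

theorem CDE.add {f g : E → Matrix (Fin n) (Fin n) ℂ} (hf : CDE f) (hg : CDE g) :
    CDE fun w => f w + g w := fun i j => (hf i j).add (hg i j)

theorem CDE.sub {f g : E → Matrix (Fin n) (Fin n) ℂ} (hf : CDE f) (hg : CDE g) :
    CDE fun w => f w - g w := fun i j => (hf i j).sub (hg i j)

theorem CDE.const (M : Matrix (Fin n) (Fin n) ℂ) : CDE fun _ : E => M := fun _ _ => contDiff_const

theorem CDE.smul {f : E → Matrix (Fin n) (Fin n) ℂ} (hf : CDE f) (c : ℂ) :
    CDE fun w => c • f w := fun i j => contDiff_const.mul (hf i j)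

theorem CDE.skewOf {y : E → Fin n → Fin n → ℝ} (hy : ∀ i j, ContDiff ℝ 1 fun w => y w i j) :
    CDE fun w => skewOf (y w) := by
  intro i j
  simp only [_root_.skewOf, Matrix.of_apply]
  have ho : ContDiff ℝ 1 (fun x : ℝ => (x : ℂ)) := Complex.ofRealCLM.contDiff
  exact (ho.comp ((hy i j).sub (hy j i))).add ((ho.comp ((hy i j).add (hy j i))).mul contDiff_const)
end ContDiffEntries

theorem contDiff_extZero {E : Type*} [NormedAddCommGroup E] [NormedSpace ℝ E]
    (Q : Fin n → Fin n → Prop) [∀ i j, Decidable (Q i j)] {y : E → {p : Fin n × Fin n // Q p.1 p.2} → ℝ}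
    (hy : ContDiff ℝ 1 y) (i j : Fin n) : ContDiff ℝ 1 fun w => extZero Q (y w) i j := by
  by_cases h : Q i j
  · simp only [extZero, h, dif_pos]
    exact contDiff_pi.1 hy _
  · simp only [extZero, h, dif_neg, not_false_eq_true]
    exact contDiff_const

theorem contDiff_paramMap (S : Finset (Fin n)) (c : Fin r → ℂ) :
    ContDiff ℝ 1 (paramMap S c) := by
  have hL : CDE fun w : ParamSpace r S => skewOf (extZero _ w.1) :=
    CDE.skewOf (contDiff_extZero _ contDiff_fst)
  have hX : ∀ i, CDE fun w : ParamSpace r S => paramX S w i := fun i =>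
    (((CDE.const 1).add hL).mul (CDE.skewOf (contDiff_extZero _
      (contDiff_pi.1 (contDiff_fst.comp contDiff_snd) i)))).mul ((CDE.const 1).sub hL)
  refine contDiff_pi.2 fun i => contDiff_pi.2 fun k => contDiff_pi.2 fun l => ?_
  have hM : CDE fun w : ParamSpace r S => Complex.I • skewOf (w.2.2 i) :=
    CDE.smul (CDE.skewOf fun a b =>
      contDiff_pi.1 (contDiff_pi.1 (contDiff_pi.1 (contDiff_snd.comp contDiff_snd) i) a) b) _
  exact CDE.smul (CDE.mul (((CDE.const 1).sub (hX i)).mul (hM.mul hM))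
    ((CDE.const 1).sub (hX i))) (c i) k l

/-- Reducible tuples of type `S` have codimension
`2 (r - 1) |S| |Sᶜ| ≥ 2 (r - 1) (n - 1) ≥ 4`. -/
theorem finrank_paramSpace_lt (h : 2 ≤ (r - 1) * (n - 1)) {S : Finset (Fin n)}
    (h0 : S.Nonempty) (h1 : Sᶜ.Nonempty) {d : ℕ} (hd : d ≤ 3) :
    finrank ℝ (ParamSpace r S) + d < finrank ℝ (Fin r → Fin n → Fin n → ℂ) := by
  classical
  have e1 : finrank ℝ (ParamSpace r S) = Fintype.card {p : Fin n × Fin n // DiffBlock S p.1 p.2} +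
      (r * Fintype.card {p : Fin n × Fin n // SameBlock S p.1 p.2} + r * (n * n)) := by
    simp [ParamSpace, Module.finrank_pi_fintype]
  have e2 : finrank ℝ (Fin r → Fin n → Fin n → ℂ) = r * (n * (n * 2)) := by
    simp [Module.finrank_pi_fintype]
  have e3 : Fintype.card {p : Fin n × Fin n // SameBlock S p.1 p.2} +
      Fintype.card {p : Fin n × Fin n // DiffBlock S p.1 p.2} = n * n := by
    have := Fintype.card_subtype_compl (fun p : Fin n × Fin n => SameBlock S p.1 p.2)
    have h' := Fintype.card_subtype_le (fun p : Fin n × Fin n => SameBlock S p.1 p.2)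
    simp only [Fintype.card_prod, Fintype.card_fin] at this h'
    have h3 : Fintype.card {p : Fin n × Fin n // DiffBlock S p.1 p.2} = 
      Fintype.card {p : Fin n × Fin n // ¬ SameBlock S p.1 p.2} :=
      Fintype.card_congr (Equiv.refl _)
    omega
  have e4 : 2 * (S.card * Sᶜ.card) ≤ Fintype.card {p : Fin n × Fin n // DiffBlock S p.1 p.2} := by
    rw [Fintype.card_subtype]
    have hsub : S ×ˢ Sᶜ ∪ Sᶜ ×ˢ S ⊆
        Finset.univ.filter fun p : Fin n × Fin n => DiffBlock S p.1 p.2 := by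
      rintro ⟨a, b⟩ hab
      simp only [Finset.mem_union, Finset.mem_product, Finset.mem_compl] at hab
      refine Finset.mem_filter.2 ⟨Finset.mem_univ _, ?_⟩
      simp only
      tauto
    have hdis : Disjoint (S ×ˢ Sᶜ) (Sᶜ ×ˢ S) := by
      rw [Finset.disjoint_left]
      rintro ⟨a, b⟩ hab hab'
      simp only [Finset.mem_product, Finset.mem_compl] at hab hab'
      tauto
    have := Finset.card_le_card hsub
    rw [Finset.card_union_of_disjoint hdis, Finset.card_product, Finset.card_product] at this
    linarith [mul_comm S.card Sᶜ.card]
  have e5 : S.card + Sᶜ.card = n := by rw [Finset.card_add_card_compl, Fintype.card_fin]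
  have hs := h0.card_pos
  have ht := h1.card_pos
  rw [e1, e2]
  generalize Fintype.card {p : Fin n × Fin n // DiffBlock S p.1 p.2} = off at *
  generalize Fintype.card {p : Fin n × Fin n // SameBlock S p.1 p.2} = on at *
  generalize S.card = a at *
  generalize Sᶜ.card = b at *
  obtain ⟨r, rfl⟩ : ∃ r', r = r' + 1 := ⟨r - 1, by
    rcases r with _ | r
    · simp at h
    · rfl⟩
  simp only [Nat.add_sub_cancel] at h
  have h6 : n - 1 ≤ a * b := by
    obtain ⟨a, rfl⟩ : ∃ a', a = a' + 1 := ⟨a - 1, by omega⟩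
    obtain ⟨b, rfl⟩ : ∃ b', b = b' + 1 := ⟨b - 1, by omega⟩
    have : (a + 1) * (b + 1) = a * b + a + b + 1 := by ring
    omega
  have h7 : 2 ≤ r * (a * b) := h.trans (Nat.mul_le_mul_left _ h6)
  have h8 : 4 ≤ r * off := by
    calc 4 ≤ 2 * (r * (a * b)) := by omega
      _ = r * (2 * (a * b)) := by ring
      _ ≤ r * off := Nat.mul_le_mul_left _ e4
  have h9 : (r + 1) * (n * (n * 2)) = (r + 1) * (n * n) + ((r + 1) * on + (r * off + off)) := by
    rw [show n * (n * 2) = n * n + (on + off) by rw [e3]; ring]; ring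
  omega
end Param

end

/-! ### Reducible tuples lie in the image of the parametrization -/

section
open Set Topology Module Matrix
open scoped ComplexOrder MatrixOrder

section Reducible
variable {n r : ℕ}

/-- A subspace in coordinate form: for a suitable set `S` of coordinates and a skew-Hermitian
matrix `Λ` off-diagonal for the partition `S, Sᶜ`, the subspace is the graph-like image of
`(1 + Λ) D`, where `D` is the coordinate projection onto `S`. -/
theorem exists_offBlock (W : Submodule ℂ (Fin n → ℂ)) :
    ∃ (S : Finset (Fin n)) (Λ : Matrix (Fin n) (Fin n) ℂ), star Λ = -Λ ∧
      (∀ i j, ¬ DiffBlock S i j → Λ i j = 0) ∧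
      (∀ v, (1 + Λ) *ᵥ (diagonal (fun i => if i ∈ S then (1:ℂ) else 0) *ᵥ v) ∈ W) ∧
      (∀ v ∈ W, (1 + Λ) *ᵥ (diagonal (fun i => if i ∈ S then (1:ℂ) else 0) *ᵥ v) = v) := by
  -- a maximal set of coordinates spanning a complement of `W`
  obtain ⟨T, hT⟩ := (Set.toFinite {T : Finset (Fin n) |
    ∀ v ∈ W, (∀ i ∉ T, v i = 0) → v = 0}).exists_maximal
    ⟨∅, fun v _ hv => funext fun i => hv i (by simp)⟩
  have hw : ∀ j, ∃ w : Fin n → ℂ, j ∉ T → w ∈ W ∧ w j = 1 ∧ ∀ i ∉ T, i ≠ j → w i = 0 := by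
    intro j
    by_cases hj : j ∈ T
    · exact ⟨0, fun h => (h hj).elim⟩
    have : insert j T ∉ {T : Finset (Fin n) | ∀ v ∈ W, (∀ i ∉ T, v i = 0) → v = 0} := by
      intro hmem
      exact hj (hT.2 hmem (Finset.subset_insert j T) (Finset.mem_insert_self j T))
    simp only [Set.mem_ofPred_eq, not_forall] at this
    obtain ⟨v, hv, hv0, hne⟩ := this
    have hvj : v j ≠ 0 := by
      intro h0
      refine hne (hT.1 v hv fun i hi => ?_)
      by_cases hij : i = j
      · rw [hij, h0]
      · exact hv0 i (by simp [hij, hi])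
    refine ⟨(v j)⁻¹ • v, fun _ => ⟨W.smul_mem _ hv, by simp [hvj], fun i hi hij => ?_⟩⟩
    simp [hv0 i (by simp [hij, hi])]
  choose w hw using hw
  have key : ∀ v : Fin n → ℂ, (1 + Matrix.of fun i j =>
      if i ∈ T ∧ j ∉ T then w j i else if i ∉ T ∧ j ∈ T then - star (w i j) else 0) *ᵥ
      (diagonal (fun i => if i ∈ Tᶜ then (1:ℂ) else 0) *ᵥ v) =
      ∑ j ∈ Tᶜ, v j • w j := by
    intro v
    ext i
    rw [Matrix.add_mulVec, Pi.add_apply, Matrix.one_mulVec, Matrix.mulVec_diagonal, Finset.sum_apply]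
    simp only [Matrix.mulVec, dotProduct, Matrix.diagonal_apply, Matrix.of_apply, ite_mul, zero_mul,
      Finset.sum_ite_eq, Finset.mem_univ, if_true, Finset.mem_compl, Pi.smul_apply, smul_eq_mul,
      one_mul]
    by_cases hi : i ∈ T
    · simp only [hi, not_true_eq_false, if_false, zero_add, true_and, false_and]
      refine (Finset.sum_subset_zero_on_sdiff (Finset.subset_univ Tᶜ) ?_ ?_).symm
      · intro x hx
        simp at hx
        simp [hx]
      · intro x hx
        simp at hx
        simp [hx, mul_comm]
    · simp only [hi, not_false_eq_true, if_true, false_and, if_false, true_and]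
      rw [Finset.sum_eq_zero, add_zero, Finset.sum_eq_single i]
      · rw [(hw i hi).2.1, mul_one]
      · intro b hb hbi
        rw [(hw b (by simpa using hb)).2.2 i hi (Ne.symm hbi), mul_zero]
      · intro h; simp [hi] at h
      · intro x _
        by_cases hx : x ∈ T <;> simp [hx]
  refine ⟨Tᶜ, Matrix.of fun i j =>
      if i ∈ T ∧ j ∉ T then w j i else if i ∉ T ∧ j ∈ T then - star (w i j) else 0,
      ?_, ?_, fun v => ?_, fun v hv => ?_⟩
  rotate_left 2
  · rw [key]
    exact W.sum_mem fun j hj => W.smul_mem _ (hw j (by simpa using hj)).1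
  · rw [key]
    have hs : ∑ j ∈ Tᶜ, v j • w j ∈ W :=
      W.sum_mem fun j hj => W.smul_mem _ (hw j (by simpa using hj)).1
    refine sub_eq_zero.1 (hT.1 _ (W.sub_mem hs hv) fun i hi => ?_)
    rw [Pi.sub_apply, Finset.sum_apply, Finset.sum_eq_single i]
    · simp [(hw i hi).2.1]
    · intro b hb hbi
      simp [(hw b (by simpa using hb)).2.2 i hi (Ne.symm hbi)]
    · intro h; simp [hi] at h
  · ext i j
    simp only [Matrix.star_apply, Matrix.of_apply, Matrix.neg_apply]
    by_cases hi : i ∈ T <;> by_cases hj : j ∈ T <;> simp [hi, hj]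
  · intro i j hij
    by_cases hi : i ∈ T <;> by_cases hj : j ∈ T <;> simp_all

theorem exists_inv_of_isUnit {A : Matrix (Fin n) (Fin n) ℂ} (h : IsUnit A) :
    ∃ K, A * K = 1 ∧ K * A = 1 := by
  obtain ⟨⟨_, K, h1, h2⟩, rfl⟩ := h
  exact ⟨K, h1, h2⟩

theorem isUnit_one_add_skew {X : Matrix (Fin n) (Fin n) ℂ} (hX : star X = -X) :
    IsUnit (1 + X) := by
  have h : (1 + star X * X).PosDef :=
    PosDef.one.add_posSemidef (posSemidef_conjTranspose_mul_self X)
  have h2 : (1 - X) * (1 + X) = 1 + star X * X := by rw [hX]; noncomm_ring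
  have h3 := h.isUnit
  rw [← h2, Matrix.isUnit_iff_isUnit_det, det_mul] at h3
  exact (Matrix.isUnit_iff_isUnit_det _).2 (isUnit_of_mul_isUnit_right h3)

/-- A unitary matrix preserving the range of an orthogonal projection commutes with it. -/
theorem commute_of_preserves {q U : Matrix (Fin n) (Fin n) ℂ} (hq : star q = q) (hqq : q * q = q)
    (hU : star U * U = 1) (h : q * U * q = U * q) : q * U = U * q := by
  have h0 : ((q * U - q * U * q)ᴴ * (q * U - q * U * q)).trace = 0 := by
    rw [← star_eq_conjTranspose, star_sub, star_mul, star_mul, star_mul, hq]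
    have e1 : (star U * q - q * (star U * q)) * (q * U - q * U * q) =
      star U * q * U - star U * (q * U * q) - q * (star U * (q * U)) +
       q * (star U * (q * U * q)) := by
      have : (star U * q - q * (star U * q)) * (q * U - q * U * q) =
        star U * (q * q) * U - star U * ((q * q) * U * q) - q * (star U * ((q * q) * U)) +
         q * (star U * ((q * q) * U * q)) := by noncomm_ring
      rw [this, hqq]
    rw [e1, h, ← mul_assoc (star U) U, hU, one_mul, hqq, trace_add, trace_sub, trace_sub,
      trace_mul_comm q, trace_mul_comm (star U * q) U, ← mul_assoc, mul_eq_one_comm.1 hU, one_mul,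
      mul_assoc, h, ← mul_assoc, hU, one_mul]
    ring
  have := trace_conjTranspose_mul_self_eq_zero_iff.1 h0
  rw [sub_eq_zero.1 this, h]

/-- Among infinitely many scalars `-σ k` one is not an eigenvalue of `u`. Hence countably many
phases suffice for the Cayley transform to reach every unitary matrix. -/
theorem exists_unit_add {u : Matrix (Fin n) (Fin n) ℂ} {σ : ℕ → ℂ} (hσ : Function.Injective σ) :
    ∃ k, IsUnit (σ k • (1 : Matrix (Fin n) (Fin n) ℂ) + u) := by
  have hf := Polynomial.finite_setOfPred_isRoot (Matrix.charpoly_monic (-u)).ne_zero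
  obtain ⟨x, ⟨k, rfl⟩, hx⟩ := (Set.infinite_range_of_injective hσ).exists_notMem_finite hf
  refine ⟨k, ?_⟩
  rw [Matrix.isUnit_iff_isUnit_det, isUnit_iff_ne_zero]
  intro h
  apply hx
  show Polynomial.eval _ _ = 0
  rw [Matrix.eval_charpoly, sub_neg_eq_add, ← h]
  congr 2
  ext i j
  simp [Matrix.scalar_apply, Matrix.diagonal_apply, Matrix.one_apply]

/-- A unitary matrix `u` with eigenvalues other than `-a` is `a` times the Cayley transform
`(1 - X) (1 + X)⁻¹` of a skew-Hermitian `X` that commutes with whatever commutes with `u`. Writing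
the positive semidefinite factor `p` as `(1 + X) (i M)² (1 - X)` removes the inverse from `u p`. -/
theorem exists_cayley {u p : Matrix (Fin n) (Fin n) ℂ} (hu : u ∈ unitaryGroup (Fin n) ℂ)
    (hp : p.PosSemidef) {a : ℂ} (ha : star a * a = 1)
    (hau : IsUnit (a • (1 : Matrix (Fin n) (Fin n) ℂ) + u)) :
    ∃ X M, star X = -X ∧ (∀ q, q * u = u * q → q * X = X * q) ∧ star M = -M ∧
      a • ((1 - X) * ((Complex.I • M) * (Complex.I • M)) * (1 - X)) = u * p := by
  have haa : a * star a = 1 := by rw [mul_comm, ha]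
  set u' := star a • u with hu'
  have huu : u = a • u' := by rw [hu', smul_smul, haa, one_smul]
  have hs1 : star u' * u' = 1 := by
    rw [hu', star_smul, star_star, smul_mul_smul_comm, haa, one_smul]
    exact Unitary.star_mul_self_of_mem hu
  have hs2 : u' * star u' = 1 := mul_eq_one_comm.1 hs1
  have hun : IsUnit (1 + u') := by
    have : 1 + u' = star a • (a • (1 : Matrix (Fin n) (Fin n) ℂ) + u) := by
      rw [smul_add, smul_smul, ha, one_smul]
    rw [this, Matrix.isUnit_iff_isUnit_det, det_smul]
    refine IsUnit.mul (IsUnit.pow _ (IsUnit.of_mul_eq_one _ ha)) ?_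
    exact (Matrix.isUnit_iff_isUnit_det _).1 hau
  obtain ⟨K, h1, h2⟩ := exists_inv_of_isUnit hun
  -- `K` is the inverse of `1 + u'`
  have hsK1 : star K * (1 + star u') = 1 := by
    have := congrArg star h1
    simpa using this
  have hsK2 : (1 + star u') * star K = 1 := mul_eq_one_comm.1 hsK1
  set X := (1 - u') * K with hX
  have hskew : star X = - X := by
    have e : (1 - star u') * (1 + u') = - ((1 + star u') * (1 - u')) := by
      have e1 : (1 - star u') * (1 + u') = 1 + u' - star u' - star u' * u' := by noncomm_ring
      have e2 : (1 + star u') * (1 - u') = 1 - u' + star u' - star u' * u' := by noncomm_ring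
      rw [e1, e2, hs1]; abel
    calc star X = star K * (1 - star u') := by simp [hX]
      _ = star K * ((1 - star u') * ((1 + u') * K)) := by rw [h1, mul_one]
      _ = star K * ((1 - star u') * (1 + u')) * K := by noncomm_ring
      _ = - (star K * (1 + star u') * (1 - u') * K) := by rw [e]; noncomm_ring
      _ = - X := by rw [hsK1, one_mul]
  have hcomm : ∀ q, q * u = u * q → q * X = X * q := by
    intro q hq
    have hq' : q * u' = u' * q := by rw [hu', mul_smul_comm, hq, smul_mul_assoc]
    have hK : q * K = K * q := by
      calc q * K = K * (1 + u') * q * K := by rw [h2, one_mul]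
        _ = K * (q + u' * q) * K := by noncomm_ring
        _ = K * q * ((1 + u') * K) := by rw [← hq']; noncomm_ring
        _ = K * q := by rw [h1, mul_one]
    calc q * X = (q - q * u') * K := by rw [hX]; noncomm_ring
      _ = (1 - u') * (q * K) := by rw [hq']; noncomm_ring
      _ = X * q := by rw [hK, hX]; noncomm_ring
  have hX2 : u' * (1 + X) = 1 - X := by
    have e := hcomm (1 + u') (by rw [huu]; simp [mul_add, add_mul])
    have e2 : (1 + X) * (1 + u') = 1 + u' + (1 - u') * (K * (1 + u')) := by rw [hX]; noncomm_ring
    have e3 : u' * (1 + X) - (1 - X) = (1 + u') * X - (1 - u') := by noncomm_ring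
    rw [← sub_eq_zero, e3, e, hX, mul_assoc, h2]; simp
  obtain ⟨L, l1, l2⟩ := exists_inv_of_isUnit (isUnit_one_add_skew hskew)
  have l3 : star L * (1 - X) = 1 := by
    have := congrArg star l1
    rw [star_mul, star_add, hskew] at this
    simpa [sub_eq_add_neg] using this
  obtain ⟨t, ht, htt⟩ : ∃ t, star t = t ∧ t * t = L * p * star L := by
    have hP : (L * p * star L).PosSemidef := hp.mul_mul_conjTranspose_same L
    refine ⟨CFC.sqrt (L * p * star L), ?_, CFC.sqrt_mul_sqrt_self _ (Matrix.nonneg_iff_posSemidef.2 hP)⟩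
    exact (Matrix.nonneg_iff_posSemidef.1 (CFC.sqrt_nonneg (L * p * star L))).1
  refine ⟨X, -Complex.I • t, hskew, hcomm, ?_, ?_⟩
  · rw [star_smul, ht]
    simp
  · rw [smul_smul]
    have : Complex.I * -Complex.I = 1 := by simp
    rw [this, one_smul, htt]
    calc a • ((1 - X) * (L * p * star L) * (1 - X)) =
        a • ((u' * (1 + X)) * (L * p * (star L * (1 - X)))) := by rw [hX2]; noncomm_ring
      _ = a • (u' * ((1 + X) * L) * p) := by rw [l3]; noncomm_ring
      _ = u * p := by rw [l1, mul_one, ← smul_mul_assoc, ← huu]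

theorem diagonal_mul_offBlock {S : Finset (Fin n)} {Λ : Matrix (Fin n) (Fin n) ℂ}
    (hoff : ∀ i j, ¬ DiffBlock S i j → Λ i j = 0) :
    diagonal (fun i => if i ∈ S then (1:ℂ) else 0) * Λ =
      Λ * (1 - diagonal (fun i => if i ∈ S then (1:ℂ) else 0)) := by
  ext i j
  rw [mul_sub, mul_one, Matrix.sub_apply, diagonal_mul, mul_diagonal]
  have := hoff i j
  by_cases hi : i ∈ S <;> by_cases hj : j ∈ S <;> simp_all

theorem eq_zero_of_commute_diagonal {S : Finset (Fin n)} {Y : Matrix (Fin n) (Fin n) ℂ}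
    (hc : diagonal (fun i => if i ∈ S then (1:ℂ) else 0) * Y =
      Y * diagonal (fun i => if i ∈ S then (1:ℂ) else 0)) (a b : Fin n)
    (hab : ¬ SameBlock S a b) : Y a b = 0 := by
  have := congrFun (congrFun hc a) b
  rw [diagonal_mul, mul_diagonal] at this
  replace hab : ¬ (a ∈ S ↔ b ∈ S) := hab
  by_cases ha : a ∈ S <;> by_cases hb : b ∈ S <;> simp_all

/-- Algebra of the (orthogonal) projection `(1 + Λ) D (1 + Λ)⁻¹`. -/
theorem projection_algebra {D Λ g : Matrix (Fin n) (Fin n) ℂ} (hDD : D * D = D)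
    (hDs : star D = D) (hΛ : star Λ = -Λ) (hDL : D * Λ = Λ * (1 - D)) (g1 : (1 + Λ) * g = 1)
    (g2 : g * (1 + Λ) = 1) :
    star g * (1 - Λ) = 1 ∧ (1 + Λ) * D * g = star g * D * (1 - Λ) ∧
      star ((1 + Λ) * D * g) = (1 + Λ) * D * g ∧
      (1 + Λ) * D * g * ((1 + Λ) * D) = (1 + Λ) * D ∧
      ((1 + Λ) * D * g) * ((1 + Λ) * D * g) = (1 + Λ) * D * g := by
  have s1 : star g * (1 - Λ) = 1 := by
    have := congrArg star g1
    rw [star_mul, star_add, hΛ] at this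
    simpa [sub_eq_add_neg] using this
  have hcom : (1 - Λ) * (1 + Λ) * D = D * ((1 - Λ) * (1 + Λ)) := by
    have e1 : D * ((1 - Λ) * (1 + Λ)) = D - D * Λ * Λ := by noncomm_ring
    have e2 : Λ * (1 - D) * Λ = Λ * (Λ - D * Λ) := by noncomm_ring
    rw [e1, hDL, e2, hDL]; noncomm_ring
  have hq' : (1 + Λ) * D * g = star g * D * (1 - Λ) := by
    calc (1 + Λ) * D * g = star g * (1 - Λ) * (1 + Λ) * D * g := by rw [s1, one_mul]
      _ = star g * ((1 - Λ) * (1 + Λ) * D) * g := by simp only [mul_assoc]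
      _ = star g * D * (1 - Λ) * ((1 + Λ) * g) := by rw [hcom]; simp only [mul_assoc]
      _ = _ := by rw [g1, mul_one]
  have hqD : (1 + Λ) * D * g * ((1 + Λ) * D) = (1 + Λ) * D := by
    calc (1 + Λ) * D * g * ((1 + Λ) * D) = (1 + Λ) * D * (g * (1 + Λ)) * D := by
          simp only [mul_assoc]
      _ = (1 + Λ) * (D * D) := by rw [g2, mul_one, mul_assoc]
      _ = _ := by rw [hDD]
  refine ⟨s1, hq', ?_, hqD, ?_⟩
  · conv_rhs => rw [hq']
    rw [star_mul, star_mul, hDs, star_add, hΛ]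
    simp [sub_eq_add_neg, mul_assoc]
  · rw [← mul_assoc ((1 + Λ) * D * g), hqD]

/-- The congruence by `(1 + Λ)⁻¹` makes a matrix commuting with the projection block diagonal. -/
theorem commute_conj {D Λ g X : Matrix (Fin n) (Fin n) ℂ} (s1 : star g * (1 - Λ) = 1)
    (hq' : (1 + Λ) * D * g = star g * D * (1 - Λ)) (g2 : g * (1 + Λ) = 1)
    (hX : (1 + Λ) * D * g * X = X * ((1 + Λ) * D * g)) :
    D * (g * X * star g) = g * X * star g * D := by
  have s2 : (1 - Λ) * star g = 1 := mul_eq_one_comm.1 s1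
  calc D * (g * X * star g) = g * (1 + Λ) * D * g * X * star g := by
        rw [g2, one_mul]; simp only [mul_assoc]
    _ = g * ((1 + Λ) * D * g * X) * star g := by simp only [mul_assoc]
    _ = g * X * star g * D * ((1 - Λ) * star g) := by
        rw [hX, hq']; simp only [mul_assoc]
    _ = _ := by rw [s2, mul_one]

/-- If the unitary matrices `u i` have a common proper invariant subspace, then the tuple `(uᵢ pᵢ)`
is in the image of one of countably many maps `paramMap`. The subspace is the graph of an off-diagonal `Λ`, and
the congruence by `(1 + Λ)⁻¹` makes the Cayley preimage of each `u i` block diagonal. -/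
theorem exists_paramMap {u p : Fin r → Matrix (Fin n) (Fin n) ℂ}
    (hu : ∀ i, u i ∈ unitaryGroup (Fin n) ℂ) (hp : ∀ i, (p i).PosSemidef)
    {W : Submodule ℂ (Fin n → ℂ)} (hW : ∀ i, ∀ v ∈ W, u i *ᵥ v ∈ W) (h0 : W ≠ ⊥) (h1 : W ≠ ⊤)
    {σ : ℕ → ℂ} (hσ : Function.Injective σ) (hσ1 : ∀ k, star (σ k) * σ k = 1) :
    ∃ S : Finset (Fin n), S.Nonempty ∧ Sᶜ.Nonempty ∧ ∃ (k : Fin r → ℕ) (w : ParamSpace r S),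
      paramMap S (fun i => σ (k i)) w = fun i => u i * p i := by
  obtain ⟨S, Λ, hΛ, hoff, hmem, hfix⟩ := exists_offBlock W
  set D : Matrix (Fin n) (Fin n) ℂ := diagonal (fun i => if i ∈ S then (1:ℂ) else 0) with hD
  have hDD : D * D = D := by rw [hD, diagonal_mul_diagonal]; congr 1; ext i; split_ifs <;> simp
  have hDs : star D = D := by
    rw [hD, star_eq_conjTranspose, diagonal_conjTranspose]; congr 1; ext i
    simp only [Pi.star_apply]; split_ifs <;> simp
  have hDL : D * Λ = Λ * (1 - D) := diagonal_mul_offBlock hoff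
  obtain ⟨g, g1, g2⟩ := exists_inv_of_isUnit (isUnit_one_add_skew hΛ)
  obtain ⟨s1, hq', hqs, hqD, hqq⟩ := projection_algebra hDD hDs hΛ hDL g1 g2
  set q := (1 + Λ) * D * g with hq
  have hqW : ∀ v, q *ᵥ v ∈ W := fun v => by
    rw [hq, ← mulVec_mulVec, ← mulVec_mulVec]; exact hmem _
  have hqf : ∀ v ∈ W, q *ᵥ v = v := fun v hv => by
    rw [← hfix v hv, mulVec_mulVec v (1 + Λ) D, mulVec_mulVec, hqD]
  have hcq : ∀ i, q * u i = u i * q := by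
    intro i
    refine commute_of_preserves hqs hqq (Unitary.star_mul_self_of_mem (hu i)) ?_
    refine Matrix.toLin'.injective (LinearMap.ext fun v => ?_)
    rw [toLin'_apply, toLin'_apply, mul_assoc, ← mulVec_mulVec]
    refine hqf _ ?_
    rw [← mulVec_mulVec]
    exact hW i _ (hqW v)
  have hSne : S.Nonempty := by
    by_contra hS
    rw [Finset.not_nonempty_iff_eq_empty] at hS
    refine h0 ((Submodule.eq_bot_iff _).2 fun v hv => ?_)
    rw [← hfix v hv, hD, hS]; simp
  have hSc : Sᶜ.Nonempty := by
    by_contra hS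
    rw [Finset.not_nonempty_iff_eq_empty, Finset.compl_eq_empty_iff] at hS
    refine h1 (eq_top_iff.2 fun v _ => ?_)
    have hq1 : q = 1 := by rw [hq, hD, hS]; simpa using g1
    have := hqW v
    rwa [hq1, one_mulVec] at this
  choose k hk using fun i => exists_unit_add (u := u i) hσ
  choose X M hX hXc hM hXM using fun i => exists_cayley (hu i) (hp i) (hσ1 (k i)) (hk i)
  refine ⟨S, hSne, hSc, k, ?_⟩
  obtain ⟨yΛ, hyΛ⟩ := exists_skewOf (Q := DiffBlock S) (fun i j h => fun h' => h h'.symm) hΛ hoff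
  have hY : ∀ i, ∃ y, skewOf (extZero (SameBlock S) y) = g * X i * star g := by
    intro i
    refine exists_skewOf (fun i j h => h.symm) ?_ ?_
    · simp [hX, mul_assoc]
    · exact eq_zero_of_commute_diagonal (commute_conj s1 hq' g2 (hXc i q (hcq i)))
  choose yY hyY using hY
  have hMM : ∀ i, ∃ y : Fin n → Fin n → ℝ, skewOf y = M i := by
    intro i
    obtain ⟨y, hy⟩ := exists_skewOf (Q := fun _ _ => True) (fun _ _ h => h) (hM i) (by simp)
    exact ⟨_, hy⟩
  choose yM hyM using hMM
  refine ⟨(yΛ, yY, yM), funext fun i => ?_⟩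
  have hXi : paramX S (yΛ, yY, yM) i = X i := by
    simp only [paramX]
    rw [hyΛ, hyY]
    calc (1 + Λ) * (g * X i * star g) * (1 - Λ) =
      ((1 + Λ) * g) * X i * (star g * (1 - Λ)) := by simp only [mul_assoc]
      _ = X i := by rw [g1, s1]; simp
  rw [paramMap, hXi]
  simp only
  rw [hyM]
  exact hXM i
end Reducible

end

/-! ### Irreducible tuples and simultaneous conjugation -/

section
open Set Topology Module Matrix

section Irr
variable {n r : ℕ}

/-- Irreducibility of a tuple of matrices. -/
def Irr (A : Fin r → Matrix (Fin n) (Fin n) ℂ) : Prop :=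
  ∀ p : Submodule ℂ (Fin n → ℂ), (∀ i, ∀ v ∈ p, A i *ᵥ v ∈ p) → p = ⊥ ∨ p = ⊤

/-- Schur's lemma. -/
theorem Irr.eq_smul_one [NeZero n] {A : Fin r → Matrix (Fin n) (Fin n) ℂ} (hA : Irr A)
    {M : Matrix (Fin n) (Fin n) ℂ} (hM : ∀ i, A i * M = M * A i) : ∃ c : ℂ, M = c • 1 := by
  obtain ⟨c, hc⟩ := Module.End.exists_eigenvalue (Matrix.toLin' M)
  refine ⟨c, ?_⟩
  have := hA (Module.End.eigenspace (Matrix.toLin' M) c) (fun i v hv => by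
    rw [Module.End.mem_eigenspace_iff, toLin'_apply] at hv ⊢
    rw [mulVec_mulVec, ← hM, ← mulVec_mulVec, hv, mulVec_smul])
  rcases this with h | h
  · exact (hc h).elim
  · refine Matrix.toLin'.injective (LinearMap.ext fun v => ?_)
    have hv : v ∈ Module.End.eigenspace (Matrix.toLin' M) c := by rw [h]; trivial
    rw [Module.End.mem_eigenspace_iff] at hv
    rw [hv]; simp [smul_mulVec]

/-- The orthogonal projection to a nontrivial subspace invariant under unitary matrices. -/
theorem exists_projection [NeZero n] {A : Fin r → Matrix (Fin n) (Fin n) ℂ}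
    (hA : ∀ i, A i ∈ unitaryGroup (Fin n) ℂ) {W : Submodule ℂ (Fin n → ℂ)}
    (hW : ∀ i, ∀ v ∈ W, A i *ᵥ v ∈ W) (h0 : W ≠ ⊥) (h1 : W ≠ ⊤) :
    ∃ q, star q = q ∧ (∀ i, A i * q = q * A i) ∧ ∀ c : ℂ, q ≠ c • 1 := by
  obtain ⟨S, Λ, hΛ, hoff, hmem, hfix⟩ := exists_offBlock W
  set D : Matrix (Fin n) (Fin n) ℂ := diagonal (fun i => if i ∈ S then (1:ℂ) else 0) with hD
  have hDD : D * D = D := by rw [hD, diagonal_mul_diagonal]; congr 1; ext i; split_ifs <;> simp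
  have hDs : star D = D := by
    rw [hD, star_eq_conjTranspose, diagonal_conjTranspose]; congr 1; ext i
    simp only [Pi.star_apply]; split_ifs <;> simp
  have hDL : D * Λ = Λ * (1 - D) := diagonal_mul_offBlock hoff
  obtain ⟨g, g1, g2⟩ := exists_inv_of_isUnit (isUnit_one_add_skew hΛ)
  obtain ⟨s1, hq', hqs, hqD, hqq⟩ := projection_algebra hDD hDs hΛ hDL g1 g2
  set q := (1 + Λ) * D * g with hq
  have hqW : ∀ v, q *ᵥ v ∈ W := fun v => by
    rw [hq, ← mulVec_mulVec, ← mulVec_mulVec]; exact hmem _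
  have hqf : ∀ v ∈ W, q *ᵥ v = v := fun v hv => by
    rw [← hfix v hv, mulVec_mulVec v (1 + Λ) D, mulVec_mulVec, hqD]
  refine ⟨q, hqs, fun i => ?_, ?_⟩
  · refine (commute_of_preserves hqs hqq (Unitary.star_mul_self_of_mem (hA i)) ?_).symm
    refine Matrix.toLin'.injective (LinearMap.ext fun v => ?_)
    rw [toLin'_apply, toLin'_apply, mul_assoc, ← mulVec_mulVec]
    refine hqf _ ?_
    rw [← mulVec_mulVec]
    exact hW i _ (hqW v)
  · intro c hc
    obtain ⟨v, hv, hv0⟩ := (Submodule.ne_bot_iff W).1 h0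
    have hc1 : c = 1 := by
      have := hqf v hv
      rw [hc, smul_mulVec, one_mulVec] at this
      by_contra hne
      have h2 : (c - 1) • v = 0 := by rw [sub_smul, this]; simp
      rcases smul_eq_zero.1 h2 with h | h
      · exact hne (sub_eq_zero.1 h)
      · exact hv0 h
    refine h1 (eq_top_iff.2 fun v _ => ?_)
    have := hqW v
    rwa [hc, hc1, one_smul, one_mulVec] at this

/-- Traceless Hermitian matrices of Frobenius norm one. -/
def hermSphere (n : ℕ) : Set (Matrix (Fin n) (Fin n) ℂ) :=
  {M | star M = M ∧ M.trace = 0 ∧ ∑ i, ∑ j, ‖M i j‖ ^ 2 = 1}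

theorem isCompact_of_frobenius {K : Set (Matrix (Fin n) (Fin n) ℂ)} (hK : IsClosed K)
    (h : ∀ M ∈ K, ∑ i, ∑ j, ‖M i j‖ ^ 2 = 1) : IsCompact K := by
  have hc : IsCompact (Set.univ.pi fun _ : Fin n => Set.univ.pi fun _ : Fin n =>
      Metric.closedBall (0 : ℂ) 1) :=
    isCompact_univ_pi fun _ => isCompact_univ_pi fun _ => isCompact_closedBall _ _
  refine IsCompact.of_isClosed_subset hc hK fun M hM => ?_
  intro i _ j _
  rw [mem_closedBall_zero_iff]
  have h1 : ‖M i j‖ ^ 2 ≤ 1 := by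
    rw [← h M hM]
    refine le_trans ?_ (Finset.single_le_sum (f := fun i => ∑ j, ‖M i j‖ ^ 2)
      (fun i _ => Finset.sum_nonneg fun j _ => by positivity) (Finset.mem_univ i))
    exact Finset.single_le_sum (f := fun j => ‖M i j‖ ^ 2) (fun j _ => by positivity)
      (Finset.mem_univ j)
  nlinarith [norm_nonneg (M i j)]

theorem continuous_frobenius : Continuous fun M : Matrix (Fin n) (Fin n) ℂ =>
    ∑ i, ∑ j, ‖M i j‖ ^ 2 := by
  refine continuous_finsetSum _ fun i _ => continuous_finsetSum _ fun j _ => ?_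
  exact (continuous_id.matrix_elem i j).norm.pow 2

theorem isCompact_hermSphere : IsCompact (hermSphere n) := by
  refine isCompact_of_frobenius ?_ fun M hM => hM.2.2
  refine (isClosed_eq continuous_id.matrix_conjTranspose continuous_id).inter
    ((isClosed_eq continuous_id.matrix_trace continuous_const).inter
      (isClosed_eq continuous_frobenius continuous_const))

theorem frobenius_pos {M : Matrix (Fin n) (Fin n) ℂ} (hM : M ≠ 0) :
    0 < ∑ i, ∑ j, ‖M i j‖ ^ 2 := by
  obtain ⟨i, j, hij⟩ : ∃ i j, M i j ≠ 0 := by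
    by_contra! h
    exact hM (Matrix.ext h)
  refine Finset.sum_pos' (fun i _ => Finset.sum_nonneg fun j _ => by positivity)
    ⟨i, Finset.mem_univ _, Finset.sum_pos' (fun j _ => by positivity)
      ⟨j, Finset.mem_univ _, by positivity⟩⟩

theorem frobenius_smul (c : ℂ) (M : Matrix (Fin n) (Fin n) ℂ) :
    ∑ i, ∑ j, ‖(c • M) i j‖ ^ 2 = ‖c‖ ^ 2 * ∑ i, ∑ j, ‖M i j‖ ^ 2 := by
  simp_rw [Finset.mul_sum, Matrix.smul_apply, smul_eq_mul, norm_mul, mul_pow]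

/-- Irreducibility as the absence of a commuting matrix in the compact set `hermSphere n`: one
direction is Schur's lemma, for the other one normalizes the traceless part of the orthogonal
projection to an invariant subspace. -/
theorem irr_iff [NeZero n] {A : Fin r → Matrix (Fin n) (Fin n) ℂ}
    (hA : ∀ i, A i ∈ unitaryGroup (Fin n) ℂ) :
    Irr A ↔ ∀ M ∈ hermSphere n, (A, M) ∉ {x : (Fin r → Matrix (Fin n) (Fin n) ℂ) × _ |
      ∀ i, x.1 i * x.2 = x.2 * x.1 i} := by
  have hn : (n : ℂ) ≠ 0 := by exact_mod_cast NeZero.ne n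
  constructor
  · intro h M hM hc
    obtain ⟨c, rfl⟩ := h.eq_smul_one hc
    have h1 := hM.2.1
    rw [trace_smul, trace_one, Fintype.card_fin, smul_eq_mul] at h1
    have hc0 : c = 0 := (mul_eq_zero.1 h1).resolve_right hn
    have h2 := hM.2.2
    simp [hc0] at h2
  · intro h W hW
    by_contra! hne
    obtain ⟨q, hqs, hqc, hq⟩ := exists_projection hA hW hne.1 hne.2
    set M := q - (q.trace / n) • (1 : Matrix (Fin n) (Fin n) ℂ) with hM
    have hM0 : M ≠ 0 := fun h0 => hq _ (sub_eq_zero.1 h0)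
    have htr : M.trace = 0 := by
      rw [hM, trace_sub, trace_smul, trace_one, Fintype.card_fin, smul_eq_mul,
        div_mul_cancel₀ _ hn, sub_self]
    have hMs : star M = M := by
      have : star q.trace = q.trace := by
        rw [← trace_conjTranspose, ← star_eq_conjTranspose, hqs]
      rw [hM, star_sub, star_smul, hqs, star_div₀, this]
      simp
    have hMc : ∀ i, A i * M = M * A i := fun i => by
      rw [hM, mul_sub, sub_mul, hqc]; simp
    have hpos := frobenius_pos hM0
    set s := ∑ i, ∑ j, ‖M i j‖ ^ 2 with hs
    refine h (((Real.sqrt s)⁻¹ : ℝ) • M : Matrix (Fin n) (Fin n) ℂ) ⟨?_, ?_, ?_⟩ ?_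
    · rw [star_smul, hMs]; simp
    · rw [trace_smul, htr, smul_zero]
    · rw [show ((Real.sqrt s)⁻¹ : ℝ) • M = (((Real.sqrt s)⁻¹ : ℝ) : ℂ) • M from by
        ext i j; simp, frobenius_smul, ← hs, Complex.norm_real, Real.norm_eq_abs, sq_abs, inv_pow,
        Real.sq_sqrt hpos.le, inv_mul_cancel₀ hpos.ne']
    · intro i
      simp only [mul_smul_comm, smul_mul_assoc, hMc]

/-- Irreducibility is an open condition on unitary tuples. -/
theorem exists_isOpen_irr (n r : ℕ) [NeZero n] :
    ∃ O : Set (Fin r → Matrix (Fin n) (Fin n) ℂ), IsOpen O ∧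
      ∀ A, (∀ i, A i ∈ unitaryGroup (Fin n) ℂ) → (A ∈ O ↔ Irr A) := by
  refine ⟨_, isOpen_forall_of_isCompact (X := Fin r → Matrix (Fin n) (Fin n) ℂ)
    (isCompact_hermSphere (n := n))
    (R := {x : (Fin r → Matrix (Fin n) (Fin n) ℂ) × _ | ∀ i, x.1 i * x.2 = x.2 * x.1 i}) ?_,
    fun A hA => (irr_iff hA).symm⟩
  rw [Set.ofPred_forall]
  refine isClosed_iInter fun i => isClosed_eq ?_ ?_ <;> fun_prop

/-- Simultaneous conjugation of a tuple by a (unitary) matrix. -/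
def conjT (g : Matrix (Fin n) (Fin n) ℂ) (A : Fin r → Matrix (Fin n) (Fin n) ℂ) :
    Fin r → Matrix (Fin n) (Fin n) ℂ := fun i => g * A i * star g

theorem conjT_conjT (g h : Matrix (Fin n) (Fin n) ℂ) (A : Fin r → Matrix (Fin n) (Fin n) ℂ) :
    conjT g (conjT h A) = conjT (g * h) A := by
  funext i; simp [conjT, mul_assoc]

@[simp] theorem conjT_one (A : Fin r → Matrix (Fin n) (Fin n) ℂ) : conjT 1 A = A := by
  funext i; simp [conjT]

theorem Irr.conjT {g : Matrix (Fin n) (Fin n) ℂ} (hg : g ∈ unitaryGroup (Fin n) ℂ)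
    {A : Fin r → Matrix (Fin n) (Fin n) ℂ} (hA : Irr A) : Irr (conjT g A) := by
  have h1 : star g * g = 1 := Unitary.star_mul_self_of_mem hg
  have h2 : g * star g = 1 := Unitary.mul_star_self_of_mem hg
  intro p hp
  have := hA (p.comap (Matrix.toLin' g)) (fun i v hv => by
    rw [Submodule.mem_comap, toLin'_apply] at hv ⊢
    have := hp i _ hv
    rwa [_root_.conjT, mulVec_mulVec, mul_assoc, h1, mul_one, ← mulVec_mulVec] at this)
  have hs : ∀ v, g *ᵥ (star g *ᵥ v) = v := fun v => by rw [mulVec_mulVec, h2, one_mulVec]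
  rcases this with h | h
  · left
    refine (Submodule.eq_bot_iff _).2 fun v hv => ?_
    have : star g *ᵥ v ∈ p.comap (Matrix.toLin' g) := by
      rw [Submodule.mem_comap, toLin'_apply, hs]; exact hv
    rw [h, Submodule.mem_bot] at this
    rw [← hs v, this, mulVec_zero]
  · right
    refine eq_top_iff.2 fun v _ => ?_
    have : star g *ᵥ v ∈ p.comap (Matrix.toLin' g) := by rw [h]; trivial
    rwa [Submodule.mem_comap, toLin'_apply, hs] at this

/-- The stabilizer of an irreducible tuple consists of scalars. -/
theorem Irr.scalar_of_conjT_eq [NeZero n] {g : Matrix (Fin n) (Fin n) ℂ}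
    (hg : g ∈ unitaryGroup (Fin n) ℂ) {A : Fin r → Matrix (Fin n) (Fin n) ℂ} (hA : Irr A)
    (h : _root_.conjT g A = A) : ∃ c : ℂ, g = c • 1 := by
  refine hA.eq_smul_one fun i => ?_
  have := congrFun h i
  conv_lhs => rw [← this]
  rw [_root_.conjT, mul_assoc, Unitary.star_mul_self_of_mem hg, mul_one]
end Irr

end

/-! ### Polar parts of parametrized tuples -/

section
open Set Topology Module Matrix
open scoped ComplexOrder

section Avoid
variable {n r : ℕ}

theorem star_skewOf (y : Fin n → Fin n → ℝ) : star (skewOf y) = - skewOf y := by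
  ext i j
  simp only [star_apply, skewOf, of_apply, neg_apply]
  apply Complex.ext <;> simp <;> ring

theorem skewOf_extZero_apply {Q : Fin n → Fin n → Prop} [∀ i j, Decidable (Q i j)]
    (hQ : ∀ i j, Q i j → Q j i) (y : {p : Fin n × Fin n // Q p.1 p.2} → ℝ) {i j : Fin n}
    (h : ¬ Q i j) : skewOf (extZero Q y) i j = 0 := by
  have h' : ¬ Q j i := fun h' => h (hQ _ _ h')
  simp [skewOf, extZero, h, h']

/-- The Cayley transform of a skew-Hermitian matrix is unitary. -/
theorem cayley_mem {X L : Matrix (Fin n) (Fin n) ℂ} (hX : star X = -X) (l1 : (1 + X) * L = 1) :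
    (1 - X) * L ∈ unitaryGroup (Fin n) ℂ := by
  have l2 : L * (1 + X) = 1 := mul_eq_one_comm.1 l1
  have l3 : star L * (1 - X) = 1 := by
    have := congrArg star l1
    rw [star_mul, star_add, hX] at this
    simpa [sub_eq_add_neg] using this
  have hs : star (1 - X) = 1 + X := by simp [hX]
  have hc : (1 + X) * (1 - X) = (1 - X) * (1 + X) := by noncomm_ring
  rw [mem_unitaryGroup_iff', star_mul, hs]
  calc star L * (1 + X) * ((1 - X) * L) = star L * ((1 + X) * (1 - X)) * L := by
        simp only [mul_assoc]
    _ = (star L * (1 - X)) * ((1 + X) * L) := by rw [hc]; simp only [mul_assoc]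
    _ = 1 := by rw [l3, l1, one_mul]

/-- The polar part of a tuple in the image of `paramMap` is reducible. -/
theorem not_irr_polar_paramMap [NeZero n] {S : Finset (Fin n)} (h0 : S.Nonempty)
    (h1 : Sᶜ.Nonempty) {c : Fin r → ℂ} (hc : ∀ i, star (c i) * c i = 1) (w : ParamSpace r S)
    (hdet : ∀ i, Matrix.det (paramMap S c w i) ≠ 0) :
    ¬ Irr (fun i => polar (paramMap S c w i)) := by
  intro hirr
  set Λ := skewOf (extZero (DiffBlock S) w.1) with hΛdef
  have hΛ : star Λ = -Λ := star_skewOf _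
  have hoff : ∀ i j, ¬ DiffBlock S i j → Λ i j = 0 := fun i j h =>
    skewOf_extZero_apply (Q := DiffBlock S) (fun i j h => fun h' => h h'.symm) _ h
  set D : Matrix (Fin n) (Fin n) ℂ := diagonal (fun i => if i ∈ S then (1:ℂ) else 0) with hD
  have hDD : D * D = D := by rw [hD, diagonal_mul_diagonal]; congr 1; ext i; split_ifs <;> simp
  have hDs : star D = D := by
    rw [hD, star_eq_conjTranspose, diagonal_conjTranspose]; congr 1; ext i
    simp only [Pi.star_apply]; split_ifs <;> simp
  have hDL : D * Λ = Λ * (1 - D) := diagonal_mul_offBlock hoff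
  obtain ⟨g, g1, g2⟩ := exists_inv_of_isUnit (isUnit_one_add_skew hΛ)
  obtain ⟨s1, hq', hqs, hqD, hqq⟩ := projection_algebra hDD hDs hΛ hDL g1 g2
  set q := (1 + Λ) * D * g with hq
  have hcomm : ∀ i, polar (paramMap S c w i) * q = q * polar (paramMap S c w i) := by
    intro i
    set Y := skewOf (extZero (SameBlock S) (w.2.1 i)) with hYdef
    have hYD : D * Y = Y * D := by
      ext a b
      rw [hD, diagonal_mul, mul_diagonal]
      by_cases hab : SameBlock S a b
      · replace hab : (a ∈ S ↔ b ∈ S) := hab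
        simp [hab, mul_comm]
      · rw [hYdef, skewOf_extZero_apply (fun i j h => h.symm) _ hab]; simp
    set X := paramX S w i with hXdef
    have hX : X = (1 + Λ) * Y * (1 - Λ) := rfl
    have hXs : star X = - X := by
      rw [hX, star_mul, star_mul, star_sub, star_add, hΛ, hYdef, star_skewOf]
      simp [sub_eq_add_neg, mul_assoc]
    have hqX : q * X = X * q := by
      calc q * X = (1 + Λ) * D * (g * (1 + Λ)) * Y * (1 - Λ) := by
            rw [hX, hq]; simp only [mul_assoc]
        _ = (1 + Λ) * (D * Y) * (1 - Λ) := by rw [g2, mul_one]; simp only [mul_assoc]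
        _ = (1 + Λ) * Y * ((1 - Λ) * star g) * D * (1 - Λ) := by
            rw [hYD, mul_eq_one_comm.1 s1, mul_one]; simp only [mul_assoc]
        _ = X * q := by rw [hX, hq']; simp only [mul_assoc]
    obtain ⟨L, l1, l2⟩ := exists_inv_of_isUnit (isUnit_one_add_skew hXs)
    have hqL : q * L = L * q := by
      calc q * L = L * (1 + X) * (q * L) := by rw [l2, one_mul]
        _ = L * (q * (1 + X)) * L := by 
            rw [((Commute.one_right q).add_right (show Commute q X from hqX)).eq]
            simp only [mul_assoc]
        _ = L * q * ((1 + X) * L) := by simp only [mul_assoc]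
        _ = L * q := by rw [l1, mul_one]
    have hu := cayley_mem hXs l1
    set M := Complex.I • skewOf (w.2.2 i) with hM
    have hMs : star M = M := by rw [hM, star_smul, star_skewOf]; simp
    have hpol : c i • ((1 - X) * L) = polar (paramMap S c w i) := by
      refine polar_unique (hdet i) ?_ ?_
      · rw [mem_unitaryGroup_iff', star_smul, smul_mul_smul_comm, hc, one_smul]
        exact mem_unitaryGroup_iff'.1 hu
      · have e : (show Matrix (Fin n) (Fin n) ℂ from paramMap S c w i) =
            (c i • ((1 - X) * L)) * (((1 + X) * M) * star ((1 + X) * M)) := by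
          have hs : star (1 + X) = 1 - X := by rw [star_add, hXs]; simp [sub_eq_add_neg]
          have e1 : ∀ M : Matrix (Fin n) (Fin n) ℂ, star M = M →
              c i • ((1 - X) * (M * M) * (1 - X)) =
              (c i • ((1 - X) * L)) * (((1 + X) * M) * star ((1 + X) * M)) := by
            intro M hMs
            rw [star_mul, hMs, hs, smul_mul_assoc]
            congr 1
            calc (1 - X) * (M * M) * (1 - X) = (1 - X) * (L * (1 + X)) * (M * M) * (1 - X) := by
                  rw [l2, mul_one]
              _ = _ := by simp only [mul_assoc]
          exact e1 M hMs
        show (star (c i • ((1 - X) * L)) * (show Matrix (Fin n) (Fin n) ℂ from paramMap S c w i)).PosSemidef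
        rw [e, ← mul_assoc, star_smul, smul_mul_smul_comm, hc, one_smul,
          mem_unitaryGroup_iff'.1 hu, one_mul]
        exact posSemidef_self_mul_conjTranspose _
    rw [← hpol]
    exact (((((Commute.one_right q).sub_right (show Commute q X from hqX)).mul_right
      (show Commute q L from hqL))).smul_right (c i)).eq.symm
  obtain ⟨a, ha⟩ := hirr.eq_smul_one hcomm
  have hDa : D = a • 1 := by
    calc D = g * (1 + Λ) * D * (g * (1 + Λ)) := by rw [g2, one_mul, mul_one]
      _ = g * q * (1 + Λ) := by rw [hq]; simp only [mul_assoc]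
      _ = a • 1 := by rw [ha, mul_smul_comm, mul_one, smul_mul_assoc, g2]
  obtain ⟨i, hi⟩ := h0
  obtain ⟨j, hj⟩ := h1
  have e1 := congrFun (congrFun hDa i) i
  have e2 := congrFun (congrFun hDa j) j
  simp [hD, hi] at e1
  simp [hD, Finset.mem_compl.1 hj] at e2
  rw [← e1] at e2
  exact one_ne_zero e2.symm
end Avoid

end

/-! ### Pushing families into the irreducible locus -/

section
open Set Topology Module Matrix
open scoped ComplexOrder

section Push
variable {n r : ℕ}

/-- Unitary irreducible tuples, of determinant one if `D` holds. -/
def ESet (n r : ℕ) (D : Prop) : Set (Fin r → Matrix (Fin n) (Fin n) ℂ) :=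
  {A | (∀ i, A i ∈ unitaryGroup (Fin n) ℂ) ∧ Irr A ∧ (D → ∀ i, (A i).det = 1)}

theorem exists_unit_seq : ∃ σ : ℕ → ℂ, Function.Injective σ ∧ ∀ k, star (σ k) * σ k = 1 := by
  have hI : Infinite Circle := by
    have := (Set.Ioc_infinite (show -Real.pi < Real.pi by linarith [Real.pi_pos])).to_subtype
    exact Infinite.of_injective _ Circle.argEquiv.symm.injective
  refine ⟨fun k => (Infinite.natEmbedding Circle k : ℂ), ?_, fun k => ?_⟩
  · exact Circle.coe_injective.comp (Infinite.natEmbedding Circle).injective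
  · have := Circle.normSq_coe (Infinite.natEmbedding Circle k)
    rw [Complex.star_def, mul_comm, Complex.mul_conj, this]; simp

theorem Irr.smul {A : Fin r → Matrix (Fin n) (Fin n) ℂ} (hA : Irr A) {c : Fin r → ℂ}
    (hc : ∀ i, c i ≠ 0) : Irr fun i => c i • A i := by
  intro p hp
  refine hA p fun i v hv => ?_
  have := p.smul_mem (c i)⁻¹ (hp i v hv)
  rwa [smul_mulVec, smul_smul, inv_mul_cancel₀ (hc i), one_smul] at this

/-- A principal `n`-th root of the inverse of a complex number. -/
noncomputable def rootInv (n : ℕ) (z : ℂ) : ℂ := Complex.exp (-(Complex.log z / n))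

theorem rootInv_pow [NeZero n] {z : ℂ} (hz : z ≠ 0) : rootInv n z ^ n * z = 1 := by
  have hn : (n : ℂ) ≠ 0 := by exact_mod_cast NeZero.ne n
  rw [rootInv, ← Complex.exp_nat_mul, mul_neg, mul_div_cancel₀ _ hn, Complex.exp_neg,
    Complex.exp_log hz, inv_mul_cancel₀ hz]

theorem rootInv_one : rootInv n 1 = 1 := by simp [rootInv]

theorem star_rootInv_mul {z : ℂ} (hz : ‖z‖ = 1) :
    star (rootInv n z) * rootInv n z = 1 := by
  rw [rootInv, Complex.star_def, mul_comm, Complex.mul_conj, Complex.normSq_eq_norm_sq,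
    Complex.norm_exp]
  simp [Complex.div_natCast_re, Complex.log_re, hz]

theorem continuousOn_rootInv : ContinuousOn (rootInv n) Complex.slitPlane :=
  Complex.continuous_exp.comp_continuousOn
    (((continuousOn_id.clog fun _ h => h).div_const _).neg)

theorem norm_det_of_unitary {A : Matrix (Fin n) (Fin n) ℂ} (hA : A ∈ unitaryGroup (Fin n) ℂ) :
    ‖A.det‖ = 1 := by
  have h := congrArg Matrix.det (mem_unitaryGroup_iff'.1 hA)
  rw [det_mul, star_eq_conjTranspose, det_conjTranspose, det_one, Complex.star_def, mul_comm,
    Complex.mul_conj, Complex.normSq_eq_norm_sq] at h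
  have h2 : ‖A.det‖ ^ 2 = 1 := by exact_mod_cast h
  nlinarith [norm_nonneg A.det]

theorem smul_mem_unitary {c : ℂ} (hc : star c * c = 1) {A : Matrix (Fin n) (Fin n) ℂ}
    (hA : A ∈ unitaryGroup (Fin n) ℂ) : c • A ∈ unitaryGroup (Fin n) ℂ := by
  rw [mem_unitaryGroup_iff', star_smul, smul_mul_smul_comm, hc, one_smul]
  exact mem_unitaryGroup_iff'.1 hA

/-- General position: maps from spaces of dimension at most three to tuples of (special) unitary
matrices can be pushed into the irreducible locus, relative to a closed set. -/
theorem exists_push (h : 2 ≤ (r - 1) * (n - 1)) (D : Prop) {Y E : Type} [NormedAddCommGroup E]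
    [NormedSpace ℝ E] [FiniteDimensional ℝ E] (hE : finrank ℝ E ≤ 3)
    [TopologicalSpace Y] [CompactSpace Y] [T2Space Y] {j : Y → E} (hj : IsClosedEmbedding j)
    {H : Y → Fin r → Matrix (Fin n) (Fin n) ℂ} (hH : Continuous H)
    (hu : ∀ y i, H y i ∈ unitaryGroup (Fin n) ℂ) (hd : D → ∀ y i, (H y i).det = 1)
    {C : Set Y} (hC : IsClosed C) (hCi : ∀ y ∈ C, Irr (H y)) :
    ∃ H' : Y → Fin r → Matrix (Fin n) (Fin n) ℂ, Continuous H' ∧ (∀ y, H' y ∈ ESet n r D) ∧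
      ∀ y ∈ C, H' y = H y := by
  classical
  have hn : NeZero n := ⟨by rintro rfl; simp at h⟩
  obtain ⟨σ, hσ, hσ1⟩ := exists_unit_seq
  obtain ⟨O₁, hO₁, hO₁i⟩ := exists_isOpen_irr n r
  have hGL : IsOpen {A : Fin r → Matrix (Fin n) (Fin n) ℂ | ∀ i, (A i).det ≠ 0} := by
    rw [Set.ofPred_forall]
    refine isOpen_iInter_of_finite fun i => ?_
    exact isOpen_ne_fun (Continuous.matrix_det (continuous_apply i)) continuous_const
  have hpc : ContinuousOn (fun (A : Fin r → Matrix (Fin n) (Fin n) ℂ) i => polar (A i))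
      {A | ∀ i, (A i).det ≠ 0} := by
    refine continuousOn_pi.2 fun i => ?_
    exact continuousOn_polar.comp (continuous_apply i).continuousOn fun A hA => hA i
  have hdet0 : ∀ {u : Matrix (Fin n) (Fin n) ℂ}, u ∈ unitaryGroup (Fin n) ℂ → u.det ≠ 0 :=
    fun hu h0 => by have := norm_det_of_unitary hu; rw [h0] at this; simp at this
  -- `O`: invertible tuples with irreducible polar part, an open set disjoint from the bad set
  have hO : IsOpen ({A : Fin r → Matrix (Fin n) (Fin n) ℂ | ∀ i, (A i).det ≠ 0} ∩
      (fun A i => polar (A i)) ⁻¹' O₁) := hpc.isOpen_inter_preimage hGL hO₁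
  -- `O₂`: invertible tuples whose polar parts have determinant in the slit plane
  have hO₂ : IsOpen {A : Fin r → Matrix (Fin n) (Fin n) ℂ | (∀ i, (A i).det ≠ 0) ∧
      (D → ∀ i, (polar (A i)).det ∈ Complex.slitPlane)} := by
    by_cases hD : D
    · have : {A : Fin r → Matrix (Fin n) (Fin n) ℂ | (∀ i, (A i).det ≠ 0) ∧
          (D → ∀ i, (polar (A i)).det ∈ Complex.slitPlane)} =
          {A : Fin r → Matrix (Fin n) (Fin n) ℂ | ∀ i, (A i).det ≠ 0} ∩
          (fun A i => polar (A i)) ⁻¹' {A | ∀ i, (A i).det ∈ Complex.slitPlane} := by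
        ext A; simp [hD]
      rw [this]
      refine hpc.isOpen_inter_preimage hGL ?_
      rw [Set.ofPred_forall]
      exact isOpen_iInter_of_finite fun i =>
        Complex.isOpen_slitPlane.preimage (Continuous.matrix_det (continuous_apply i))
    · simpa [hD] using hGL
  -- `V` is the space of tuples, with the sup norm
  let V := Fin r → Fin n → Fin n → ℂ
  have hHV : Continuous (show Y → V from H) := hH
  obtain ⟨ε, hε, hεO⟩ := (isCompact_range hHV).exists_thickening_subset_open (α := V) hO₂ (by
    rintro _ ⟨y, rfl⟩
    refine ⟨fun i => hdet0 (hu y i), fun hD i => ?_⟩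
    show (polar (H y i)).det ∈ _
    rw [polar_of_unitary (hu y i), hd hD y i]
    exact Complex.one_mem_slitPlane)
  obtain ⟨H', hH', hclose, hHC, havoid⟩ := exists_avoid (V := V) (E := E) (Y := Y)
    (ι := {S : Finset (Fin n) // S.Nonempty ∧ Sᶜ.Nonempty} × (Fin r → ℕ)) hj
    (fun i => ParamSpace r i.1.1) (fun i => paramMap i.1.1 fun a => σ (i.2 a))
    (fun i => contDiff_paramMap _ _) (fun i => finrank_paramSpace_lt h i.1.2.1 i.1.2.2 hE)
    hHV hC hO (fun y hy => by
      refine ⟨fun i => hdet0 (hu y i), ?_⟩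
      show (fun i => polar (H y i)) ∈ O₁
      simp only [fun i => polar_of_unitary (hu y i)]
      exact (hO₁i _ (hu y)).2 (hCi y hy))
    (fun i w hw => by
      refine not_irr_polar_paramMap i.1.2.1 i.1.2.2 (fun a => hσ1 (i.2 a)) w hw.1 ?_
      exact (hO₁i _ fun a => (polar_spec (hw.1 a)).1).1 hw.2) hε
  -- the polar part of the perturbed family is the required one, up to scalars making the
  -- determinants equal to one
  let K : Y → Fin r → Matrix (Fin n) (Fin n) ℂ := H'
  have hK : Continuous K := hH'
  have hK2 : ∀ y, (∀ i, (K y i).det ≠ 0) ∧ (D → ∀ i, (polar (K y i)).det ∈ Complex.slitPlane) :=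
    fun y => hεO (Metric.mem_thickening_iff.2 ⟨H y, ⟨y, rfl⟩, hclose y⟩)
  have hKC : ∀ y ∈ C, K y = H y := hHC
  have hKa : ∀ y (S : {S : Finset (Fin n) // S.Nonempty ∧ Sᶜ.Nonempty}) (k : Fin r → ℕ) w,
    K y ≠ paramMap S.1 (fun a => σ (k a)) w := fun y S k w => havoid y (S, k) w
  have hpK : ∀ i, Continuous fun y => polar (K y i) := fun i =>
    continuousOn_polar.comp_continuous ((continuous_apply i).comp hK) fun y => (hK2 y).1 i
  have hpu : ∀ y i, polar (K y i) ∈ unitaryGroup (Fin n) ℂ := fun y i =>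
    (polar_spec ((hK2 y).1 i)).1
  have hirr : ∀ y, Irr fun i => polar (K y i) := by
    intro y W hW
    by_contra! hne
    obtain ⟨S, hS, hSc, k, w, hkw⟩ := exists_paramMap (hpu y)
      (fun i => (polar_spec ((hK2 y).1 i)).2) hW hne.1 hne.2 hσ hσ1
    refine hKa y ⟨S, hS, hSc⟩ k w ?_
    rw [hkw]
    funext i
    rw [← mul_assoc, mem_unitaryGroup_iff.1 (hpu y i), one_mul]
  by_cases hD : D
  · refine ⟨fun y i => rootInv n (polar (K y i)).det • polar (K y i), ?_, fun y => ⟨fun i => ?_, ?_,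
      fun _ i => ?_⟩, fun y hy => ?_⟩
    · refine continuous_pi fun i => Continuous.smul
        (f := fun y => rootInv n (polar (K y i)).det) ?_ (hpK i)
      exact continuousOn_rootInv.comp_continuous (hpK i).matrix_det fun y => (hK2 y).2 hD i
    · exact smul_mem_unitary (star_rootInv_mul (norm_det_of_unitary (hpu y i))) (hpu y i)
    · exact (hirr y).smul fun i => Complex.exp_ne_zero _
    · rw [det_smul, Fintype.card_fin]
      exact rootInv_pow (hdet0 (hpu y i))
    · funext i
      simp only
      rw [hKC y hy, polar_of_unitary (hu y i), hd hD, rootInv_one, one_smul]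
  · refine ⟨fun y i => polar (K y i), continuous_pi hpK, fun y => ⟨hpu y, hirr y, fun h => (hD h).elim⟩,
      fun y hy => ?_⟩
    funext i
    simp only
    rw [hKC y hy, polar_of_unitary (hu y i)]
end Push

end

/-! ### Rotating columns of unitary matrices -/

section
open Set Topology Module Matrix
open scoped ComplexOrder MatrixOrder unitInterval

section Rotation
variable {n : ℕ}

/-- The Euclidean norm of a vector. -/
noncomputable def nr (v : Fin n → ℂ) : ℝ := Real.sqrt (∑ i, ‖v i‖ ^ 2)

theorem star_dot_self (v : Fin n → ℂ) : star v ⬝ᵥ v = ((nr v ^ 2 : ℝ) : ℂ) := by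
  rw [nr, Real.sq_sqrt (Finset.sum_nonneg fun i _ => by positivity), dotProduct]
  push_cast
  refine Finset.sum_congr rfl fun i _ => ?_
  rw [Pi.star_apply, Complex.star_def, Complex.conj_mul']

theorem nr_nonneg (v : Fin n → ℂ) : 0 ≤ nr v := Real.sqrt_nonneg _

theorem nr_eq_zero {v : Fin n → ℂ} (h : nr v = 0) : v = 0 := by
  have := star_dot_self v
  rw [h] at this
  exact dotProduct_star_self_eq_zero.1 (by rw [dotProduct_comm]; simpa using this)

theorem continuous_nr : Continuous (nr : (Fin n → ℂ) → ℝ) := by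
  unfold nr; fun_prop

/-- A unitary matrix taking `v` to `w`, for non-antipodal unit vectors. -/
noncomputable def rot (v w : Fin n → ℂ) : Matrix (Fin n) (Fin n) ℂ :=
  -1 + (1 + star w ⬝ᵥ v)⁻¹ • vecMulVec (v + w) (star (v + w))

theorem rot_mulVec {v w : Fin n → ℂ} (hv : star v ⬝ᵥ v = 1) (h : 1 + star w ⬝ᵥ v ≠ 0) :
    rot v w *ᵥ v = w := by
  rw [rot, add_mulVec, smul_mulVec, vecMulVec_mulVec, star_add, add_dotProduct, hv, neg_mulVec,
    one_mulVec, op_smul_eq_smul, smul_smul, inv_mul_cancel₀ h, one_smul]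
  abel

theorem rot_mulVec_perp {v w x : Fin n → ℂ} (hv : star v ⬝ᵥ x = 0) (hw : star w ⬝ᵥ x = 0) :
    rot v w *ᵥ x = -x := by
  rw [rot, add_mulVec, smul_mulVec, vecMulVec_mulVec, star_add, add_dotProduct, hv, hw, neg_mulVec,
    one_mulVec]
  simp

theorem star_dot_comm (v w : Fin n → ℂ) : star (star v ⬝ᵥ w) = star w ⬝ᵥ v := by
  rw [star_dotProduct, star_star]

theorem rot_mem {v w : Fin n → ℂ} (hv : star v ⬝ᵥ v = 1) (hw : star w ⬝ᵥ w = 1)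
    (h : 1 + star w ⬝ᵥ v ≠ 0) : rot v w ∈ unitaryGroup (Fin n) ℂ := by
  set d := 1 + star w ⬝ᵥ v with hd
  have hd' : star d = 1 + star v ⬝ᵥ w := by rw [hd, star_add, star_one, star_dot_comm]
  have hd0 : star d ≠ 0 := star_ne_zero.2 h
  have hs : star (vecMulVec (v + w) (star (v + w))) = vecMulVec (v + w) (star (v + w)) := by
    rw [star_eq_conjTranspose, conjTranspose_vecMulVec, star_star]
  have ha : star (v + w) ⬝ᵥ (v + w) = d + star d := by
    rw [hd', hd, star_add, add_dotProduct, dotProduct_add, dotProduct_add, hv, hw]; ring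
  have hP : vecMulVec (v + w) (star (v + w)) * vecMulVec (v + w) (star (v + w)) =
      (d + star d) • vecMulVec (v + w) (star (v + w)) := by
    rw [vecMulVec_mul_vecMulVec, ha, vecMulVec_smul]
  rw [mem_unitaryGroup_iff', rot, star_add, star_smul, hs, ← hd, star_neg, star_one, star_inv₀]
  generalize vecMulVec (v + w) (star (v + w)) = P at *
  have : (-1 + (star d)⁻¹ • P) * (-1 + d⁻¹ • P) =
      1 + ((star d)⁻¹ * d⁻¹ * (d + star d) - d⁻¹ - (star d)⁻¹) • P := by
    rw [add_mul, mul_add, mul_add, smul_mul_smul_comm, hP, smul_smul, sub_smul, sub_smul]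
    simp only [neg_mul, one_mul, neg_neg, mul_neg, mul_one]
    abel
  rw [this]
  have h0 : (star d)⁻¹ * d⁻¹ * (d + star d) - d⁻¹ - (star d)⁻¹ = 0 := by
    field_simp; ring
  rw [h0, zero_smul, add_zero]

theorem rot_self_mul_self {v : Fin n → ℂ} (hv : star v ⬝ᵥ v = 1) : rot v v * rot v v = 1 := by
  have h2 : (1 + star v ⬝ᵥ v) ≠ 0 := by rw [hv]; norm_num
  have h := rot_mem hv hv h2
  have hs : star (rot v v) = rot v v := by
    rw [rot, hv, star_add, star_smul, star_eq_conjTranspose (vecMulVec _ _),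
      conjTranspose_vecMulVec, star_star, star_inv₀]
    simp
  have := mem_unitaryGroup_iff'.1 h
  rwa [hs] at this

theorem continuous_rot {X : Type*} [TopologicalSpace X] {v w : X → Fin n → ℂ} (hv : Continuous v)
    (hw : Continuous w) (h : ∀ x, 1 + star (w x) ⬝ᵥ v x ≠ 0) :
    Continuous fun x => rot (v x) (w x) := by
  unfold rot
  refine continuous_const.add (Continuous.smul (Continuous.inv₀ ?_ h) ?_)
  · exact continuous_const.add (Continuous.dotProduct hw.star hv)
  · exact Continuous.matrix_vecMulVec (hv.add hw) (hv.add hw).star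

theorem nr_unit {v : Fin n → ℂ} (hv : v ≠ 0) :
    star ((((nr v)⁻¹ : ℝ) : ℂ) • v) ⬝ᵥ ((((nr v)⁻¹ : ℝ) : ℂ) • v) = 1 := by
  have h0 : (nr v : ℂ) ≠ 0 := by
    exact_mod_cast fun h => hv (nr_eq_zero h)
  rw [star_smul, smul_dotProduct, dotProduct_smul, star_dot_self]
  simp only [Complex.star_def, Complex.conj_ofReal, smul_eq_mul]
  push_cast
  field_simp

/-- Normalized vectors that are not nonpositive multiples of `v` are not antipodal to `v`. -/
theorem one_add_ne_zero {v x : Fin n → ℂ} (hv : star v ⬝ᵥ v = 1)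
    (hx : ∀ s : ℝ, 0 ≤ s → x ≠ -((s : ℂ) • v)) :
    1 + star ((((nr x)⁻¹ : ℝ) : ℂ) • x) ⬝ᵥ v ≠ 0 := by
  intro h
  set w := (((nr x)⁻¹ : ℝ) : ℂ) • x with hw
  have hx0 : x ≠ 0 := by simpa using hx 0 le_rfl
  have hw1 : star w ⬝ᵥ w = 1 := nr_unit hx0
  have h1 : star w ⬝ᵥ v = -1 := by linear_combination h
  have h2 : star v ⬝ᵥ w = -1 := by rw [← star_dot_comm, h1]; simp
  have h3 : w + v = 0 := by
    refine dotProduct_star_self_eq_zero.1 ?_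
    rw [star_add, add_dotProduct, dotProduct_add, dotProduct_add, hv, hw1, h1, h2]
    ring
  refine hx (nr x) (nr_nonneg x) ?_
  have h0 : (nr x : ℂ) ≠ 0 := by
    exact_mod_cast fun h => hx0 (nr_eq_zero h)
  rw [← smul_neg, ← eq_neg_of_add_eq_zero_left h3, hw, smul_smul]
  push_cast
  rw [mul_inv_cancel₀ h0, one_smul]

theorem seg_ne {v x : Fin n → ℂ} (hv : v ≠ 0) (hx : ∀ s : ℝ, 0 ≤ s → x ≠ -((s : ℂ) • v)) (t : I) :
    ∀ s : ℝ, 0 ≤ s → ((1 - t : ℝ) : ℂ) • v + ((t : ℝ) : ℂ) • x ≠ -((s : ℂ) • v) := by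
  intro s hs h
  rcases eq_or_lt_of_le t.2.1 with h0 | h0
  · rw [← h0] at h
    have : ((1 + s : ℝ) : ℂ) • v = 0 := by
      rw [← sub_eq_zero] at h
      rw [← h]; push_cast; module
    rcases smul_eq_zero.1 this with h' | h'
    · have : 1 + s = 0 := by exact_mod_cast h'
      linarith
    · exact hv h'
  · have ht : ((t : ℝ) : ℂ) ≠ 0 := by exact_mod_cast h0.ne'
    refine hx ((1 - t + s) / t) (div_nonneg (by linarith [t.2.2]) h0.le) ?_
    have e : ((t : ℝ) : ℂ) • x = ((t : ℝ) : ℂ) • -((((1 - t + s) / t : ℝ) : ℂ) • v) := by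
      have e1 : ((t : ℝ) : ℂ) • x = -((s : ℂ) • v) - ((1 - t : ℝ) : ℂ) • v := by
        rw [← h]; abel
      rw [e1, smul_neg, smul_smul]
      have e2 : ((t : ℝ) : ℂ) * (((1 - t + s) / t : ℝ) : ℂ) = (1 - (t : ℝ) + s : ℝ) := by
        push_cast; field_simp
      rw [e2]; push_cast; module
    exact smul_right_injective _ ht e
end Rotation

section Columns
variable {n : ℕ} {Y : Type} [TopologicalSpace Y]

theorem unit_col (g : Un n) (j : Fin n) :
    star (fun i => (g : Matrix (Fin n) (Fin n) ℂ) i j) ⬝ᵥ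
      (fun i => (g : Matrix (Fin n) (Fin n) ℂ) i j) = 1 := by
  have := congrFun (congrFun (mem_unitaryGroup_iff'.1 g.2) j) j
  simpa [mul_apply, dotProduct] using this

theorem perp_col (g : Un n) {i j : Fin n} (h : i ≠ j)
    (hi : ∀ k, (g : Matrix (Fin n) (Fin n) ℂ) k i = (1 : Matrix (Fin n) (Fin n) ℂ) k i) :
    (g : Matrix (Fin n) (Fin n) ℂ) i j = 0 := by
  have := congrFun (congrFun (mem_unitaryGroup_iff'.1 g.2) i) j
  simpa [mul_apply, hi, one_apply, h] using this

/-- Rotating the `j`-th column of a family of unitary matrices to a prescribed direction. -/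
theorem exists_rotate {F : C(Y, Un n)} {C : Set Y} {j : Fin n}
    (hF : ∀ y, ∀ i < j, ∀ k, (F y : Matrix (Fin n) (Fin n) ℂ) k i = (1 : Matrix _ _ ℂ) k i)
    {x : Y → Fin n → ℂ} (hx : Continuous x) (hxj : ∀ y, ∀ i < j, x y i = 0)
    (hxn : ∀ y, ∀ s : ℝ, 0 ≤ s → x y ≠ -((s : ℂ) • fun i => (F y : Matrix _ _ ℂ) i j))
    (hxC : ∀ y ∈ C, x y = fun i => (F y : Matrix _ _ ℂ) i j) :
    ∃ F' : C(Y, Un n), F.HomotopicRel F' C ∧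
      (∀ y, ∀ i < j, ∀ k, (F' y : Matrix (Fin n) (Fin n) ℂ) k i = (1 : Matrix _ _ ℂ) k i) ∧
      ∀ y k, (F' y : Matrix _ _ ℂ) k j = (((nr (x y))⁻¹ : ℝ) : ℂ) * x y k := by
  set φ : Y → Fin n → ℂ := fun y i => (F y : Matrix _ _ ℂ) i j with hφ
  have hφc : Continuous φ := continuous_pi fun i =>
    (continuous_subtype_val.comp F.continuous).matrix_elem i j
  have hφ1 : ∀ y, star (φ y) ⬝ᵥ φ y = 1 := fun y => unit_col _ _
  have hφ0 : ∀ y, φ y ≠ 0 := fun y h => by have := hφ1 y; rw [h] at this; simp at this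
  let z : I × Y → Fin n → ℂ := fun p => ((1 - p.1 : ℝ) : ℂ) • φ p.2 + ((p.1 : ℝ) : ℂ) • x p.2
  have hzn : ∀ p, ∀ s : ℝ, 0 ≤ s → z p ≠ -((s : ℂ) • φ p.2) := fun p =>
    seg_ne (hφ0 _) (hxn _) _
  have hz0 : ∀ p, z p ≠ 0 := fun p => by simpa using hzn p 0 le_rfl
  have hzc : Continuous z := by
    have h1 : Continuous fun p : I × Y => ((1 - p.1 : ℝ) : ℂ) := by fun_prop
    have h2 : Continuous fun p : I × Y => ((p.1 : ℝ) : ℂ) := by fun_prop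
    exact (h1.smul (hφc.comp continuous_snd)).add (h2.smul (hx.comp continuous_snd))
  let w : I × Y → Fin n → ℂ := fun p => (((nr (z p))⁻¹ : ℝ) : ℂ) • z p
  have hwc : Continuous w := by
    refine Continuous.smul (Complex.continuous_ofReal.comp (Continuous.inv₀
      (continuous_nr.comp hzc) fun p h => hz0 p (nr_eq_zero h))) hzc
  have hw1 : ∀ p, star (w p) ⬝ᵥ w p = 1 := fun p => nr_unit (hz0 p)
  have hwφ : ∀ p, 1 + star (w p) ⬝ᵥ φ p.2 ≠ 0 := fun p => one_add_ne_zero (hφ1 _) (hzn p)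
  have hφφ : ∀ y, 1 + star (φ y) ⬝ᵥ φ y ≠ 0 := fun y => by rw [hφ1]; norm_num
  have hnφ : ∀ y, nr (φ y) = 1 := fun y => by
    have := star_dot_self (φ y)
    rw [hφ1] at this
    have h2 : nr (φ y) ^ 2 = 1 := by exact_mod_cast this.symm
    nlinarith [nr_nonneg (φ y)]
  -- where the segment is constant, nothing moves
  have hwz : ∀ p, z p = φ p.2 → w p = φ p.2 := fun p h => by
    simp only [w]; rw [h, hnφ]; simp
  let G : I × Y → Matrix (Fin n) (Fin n) ℂ := fun p =>
    rot (φ p.2) (w p) * rot (φ p.2) (φ p.2) * F p.2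
  have hG : ∀ p, G p ∈ unitaryGroup (Fin n) ℂ := fun p =>
    mul_mem (mul_mem (rot_mem (hφ1 _) (hw1 _) (hwφ _)) (rot_mem (hφ1 _) (hφ1 _) (hφφ _))) (F p.2).2
  have hGc : Continuous G := by
    refine ((continuous_rot (hφc.comp continuous_snd) hwc hwφ).mul
      (continuous_rot (hφc.comp continuous_snd) (hφc.comp continuous_snd) fun p => hφφ _)).mul ?_
    exact continuous_subtype_val.comp (F.continuous.comp continuous_snd)
  have hGF : ∀ p, z p = φ p.2 → G p = F p.2 := fun p h => by
    simp only [G]; rw [hwz p h, rot_self_mul_self (hφ1 _), one_mul]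
  have hcol : ∀ p k i, G p k i = (rot (φ p.2) (w p) *ᵥ (rot (φ p.2) (φ p.2) *ᵥ
      fun l => (F p.2 : Matrix _ _ ℂ) l i)) k := by
    intro p k i
    rw [mulVec_mulVec]
    rfl
  have hz0' : ∀ y, z (0, y) = φ y := fun y => by simp [z]
  have hz1' : ∀ y, z (1, y) = x y := fun y => by simp [z]
  let G' : C(I × Y, Un n) := ⟨fun p => ⟨G p, hG p⟩, hGc.subtype_mk _⟩
  refine ⟨⟨fun y => G' (1, y), by fun_prop⟩, ⟨⟨⟨G', fun y => ?_, fun y => rfl⟩, ?_⟩⟩, ?_, ?_⟩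
  · exact Subtype.ext (hGF (0, y) (hz0' y))
  · intro t y hy
    refine Subtype.ext (hGF (t, y) ?_)
    simp only [z, hxC y hy]
    push_cast; module
  · intro y i hi k
    have hperp : ∀ v : Fin n → ℂ, v i = 0 →
        star v ⬝ᵥ (fun l => (F y : Matrix (Fin n) (Fin n) ℂ) l i) = 0 := by
      intro v hv
      simp [hF y i hi, dotProduct, one_apply, hv]
    have hφi : φ y i = 0 := perp_col (F y) hi.ne (hF y i hi)
    have hwi : w (1, y) i = 0 := by simp [w, z, hxj y i hi]
    show G (1, y) k i = _
    rw [hcol, rot_mulVec_perp (hperp _ hφi) (hperp _ hφi), mulVec_neg,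
      rot_mulVec_perp (hperp _ hφi) (hperp _ hwi), neg_neg, hF y i hi]
  · intro y k
    show G (1, y) k j = _
    rw [hcol]
    have e := rot_mulVec (hφ1 y) (hφφ y)
    have e2 := rot_mulVec (hφ1 y) (hwφ (1, y))
    simp only at e2 ⊢
    rw [show (fun l => (F y : Matrix _ _ ℂ) l j) = φ y from rfl, e, e2]
    simp only [w, hz1', Pi.smul_apply, smul_eq_mul]
end Columns

end

/-! ### Null-homotopies in the special unitary group -/

section
open Set Topology Module Matrix
open scoped ComplexOrder MatrixOrder unitInterval

section
variable {n : ℕ} {Y : Type} [TopologicalSpace Y]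

/-- Some entry of a unit vector is bounded below by a constant depending only on `n`. -/
theorem exists_large_entry {v : Fin n → ℂ} (hv : star v ⬝ᵥ v = 1) :
    ∃ i, ((n : ℝ) + 1)⁻¹ ≤ ‖v i‖ := by
  by_contra! h
  have h1 : ∑ i, ‖v i‖ ^ 2 = 1 := by
    have := star_dot_self v
    rw [hv, nr, Real.sq_sqrt (Finset.sum_nonneg fun i _ => by positivity)] at this
    exact_mod_cast this.symm
  have h2 : ∑ i, ‖v i‖ ^ 2 ≤ ∑ _i : Fin n, (((n : ℝ) + 1)⁻¹) ^ 2 :=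
    Finset.sum_le_sum fun i _ => pow_le_pow_left₀ (norm_nonneg _) (h i).le 2
  rw [h1, Finset.sum_const, Finset.card_univ, Fintype.card_fin, nsmul_eq_mul, inv_pow,
    ← div_eq_mul_inv, le_div_iff₀ (by positivity)] at h2
  nlinarith [(Nat.cast_nonneg n : (0 : ℝ) ≤ n)]

/-- Straightening one column, by pushing it off a ray and rotating twice. -/
theorem col_step {E : Type} [NormedAddCommGroup E] [NormedSpace ℝ E] [FiniteDimensional ℝ E]
    [CompactSpace Y] [T2Space Y] (hE : finrank ℝ E ≤ 2) {j : Y → E} (hj : IsClosedEmbedding j)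
    {C : Set Y} (hC : IsClosed C) {F : C(Y, Un n)} (k : Fin n) (hk : (k : ℕ) + 2 ≤ n)
    (hF : ∀ y, ∀ i < k, ∀ l, (F y : Matrix (Fin n) (Fin n) ℂ) l i = (1 : Matrix _ _ ℂ) l i)
    (hFC : ∀ y ∈ C, F y = 1) :
    ∃ F' : C(Y, Un n), F.HomotopicRel F' C ∧
      ∀ y, ∀ i ≤ k, ∀ l, (F' y : Matrix (Fin n) (Fin n) ℂ) l i = (1 : Matrix _ _ ℂ) l i := by
  have hent : ∀ a b, Continuous fun y => (F y : Matrix (Fin n) (Fin n) ℂ) a b := fun a b =>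
    (continuous_subtype_val.comp F.continuous).matrix_elem a b
  let V := {i : Fin n // k ≤ i} → ℂ
  let κ : {i : Fin n // k ≤ i} := ⟨k, le_rfl⟩
  -- the ray of nonpositive multiples of the basis vector `e_k` is the image of a smooth map on `ℝ`
  let Φ : Unit → ℝ → V := fun _ t => Pi.single κ (-((t ^ 2 : ℝ) : ℂ))
  have hΦ : ∀ i, ContDiff ℝ 1 (Φ i) := by
    intro i
    refine contDiff_pi.2 fun l => ?_
    by_cases hl : l = κ
    · subst hl
      simp only [Φ, Pi.single_eq_same]
      exact (Complex.ofRealCLM.contDiff.comp (contDiff_id.pow 2)).neg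
    · simp only [Φ, Pi.single_eq_of_ne hl]
      exact contDiff_const
  let R : Set V := {v | (∀ i, i ≠ κ → v i = 0) ∧ (v κ).im = 0 ∧ (v κ).re ≤ 0}
  have hR : IsClosed R := by
    simp only [R, Set.ofPred_and, Set.ofPred_forall]
    exact (isClosed_iInter fun i => isClosed_iInter fun _ =>
      isClosed_eq (continuous_apply i) continuous_const).inter
      ((isClosed_eq (Complex.continuous_im.comp (continuous_apply κ)) continuous_const).inter
      (isClosed_le (Complex.continuous_re.comp (continuous_apply κ)) continuous_const))
  have hΦR : ∀ v ∈ R, ∃ t, v = Φ () t := by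
    intro v hv
    refine ⟨Real.sqrt (-(v κ).re), ?_⟩
    funext l
    by_cases hl : l = κ
    · subst hl
      simp only [Φ, Pi.single_eq_same]
      rw [Real.sq_sqrt (by linarith [hv.2.2])]
      apply Complex.ext <;> simp [hv.2.1]
    · simp only [Φ, Pi.single_eq_of_ne hl]
      exact hv.1 l hl
  have hΦR' : ∀ i t, Φ i t ∉ Rᶜ := by
    intro i t
    simp only [mem_compl_iff, not_not]
    refine ⟨fun l hl => by simp only [Φ, Pi.single_eq_of_ne hl], ?_, ?_⟩
    · simp only [Φ, Pi.single_eq_same, Complex.neg_im, Complex.ofReal_im, neg_zero]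
    · simp only [Φ, Pi.single_eq_same]
      rw [Complex.neg_re, Complex.ofReal_re]; nlinarith
  have hdim : finrank ℝ V = 2 * (n - k) := by
    have h1 : finrank ℝ V = finrank ℝ ℂ * finrank ℂ V := (finrank_mul_finrank ℝ ℂ V).symm
    rw [h1, Complex.finrank_real_complex, finrank_fintype_fun_eq_card, Fintype.card_subtype]
    congr 1
    have : (Finset.univ.filter fun x : Fin n => k ≤ x) = Finset.Ici k := by ext; simp
    rw [this, Fin.card_Ici]
  have hHc : Continuous fun y => (fun i => (F y : Matrix (Fin n) (Fin n) ℂ) i.1 k : V) :=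
    continuous_pi fun i => hent _ _
  obtain ⟨H', hH'c, hd, hH'C, hav⟩ := exists_avoid hj (fun _ : Unit => ℝ) Φ hΦ
    (fun _ => by rw [hdim, finrank_self]; omega) hHc hC hR.isOpen_compl
    (fun y hy => by
      rintro ⟨-, -, h⟩
      simp [hFC y hy, κ] at h
      linarith) hΦR' (ε := ((n : ℝ) + 1)⁻¹) (by positivity)
  let x : Y → Fin n → ℂ := fun y i => if h : k ≤ i then H' y ⟨i, h⟩ else 0
  have hxc : Continuous x := by
    refine continuous_pi fun i => ?_
    by_cases h : k ≤ i
    · simp only [x, h, dif_pos]; exact (continuous_apply _).comp hH'c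
    · simp only [x, h, dif_neg, not_false_iff]; exact continuous_const
  have hFk : ∀ y, ∀ i < k, (F y : Matrix _ _ ℂ) i k = 0 := fun y i hi =>
    perp_col (F y) hi.ne (hF y i hi)
  obtain ⟨F₁, h1, h2, h3⟩ := exists_rotate hF hxc (fun y i hi => by simp [x, not_le.2 hi])
    (by
      intro y s hs h
      obtain ⟨i, hi⟩ := exists_large_entry (unit_col (F y) k)
      have hki : k ≤ i := by
        by_contra! hlt
        rw [hFk y i hlt, norm_zero] at hi
        have : (0 : ℝ) < ((n : ℝ) + 1)⁻¹ := by positivity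
        linarith
      have e := congrFun h i
      simp only [x, hki, dif_pos, Pi.neg_apply, Pi.smul_apply, smul_eq_mul] at e
      have e2 := (dist_le_pi_dist (H' y) _ ⟨i, hki⟩).trans_lt (hd y)
      rw [dist_eq_norm, e, ← neg_add', norm_neg] at e2
      have e3 : (s : ℂ) * (F y : Matrix (Fin n) (Fin n) ℂ) i k + (F y : Matrix (Fin n) (Fin n) ℂ) i k
        = ((s + 1 : ℝ) : ℂ) * (F y : Matrix (Fin n) (Fin n) ℂ) i k := by push_cast; ring
      rw [e3, norm_mul, Complex.norm_real, Real.norm_of_nonneg (by linarith)] at e2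
      nlinarith [norm_nonneg ((F y : Matrix (Fin n) (Fin n) ℂ) i k)])
    (by
      intro y hy
      funext i
      by_cases h : k ≤ i
      · simp only [x, h, dif_pos, hH'C y hy]
      · simp only [x, h, dif_neg, not_false_iff]
        rw [hFk y i (not_le.1 h)])
  have hF1C : ∀ y ∈ C, F₁ y = 1 := fun y hy => by
    rw [← hFC y hy]
    exact (h1.some.fst_eq_snd hy).symm
  obtain ⟨F₂, h4, h5, h6⟩ := exists_rotate (F := F₁) (C := C) (x := fun _ => Pi.single k 1) h2
    continuous_const (fun y i hi => Pi.single_eq_of_ne hi.ne _)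
    (by
      intro y s hs h
      have hc : 0 ≤ (nr (x y))⁻¹ := inv_nonneg.2 (nr_nonneg _)
      have h0 : (nr (x y))⁻¹ * s ≠ 0 := by
        intro h0
        have e := congrFun h k
        simp only [Pi.single_eq_same, Pi.neg_apply, Pi.smul_apply, smul_eq_mul, h3] at e
        rw [← mul_assoc, ← Complex.ofReal_mul, mul_comm s, h0] at e
        simp at e
      have hxe : ∀ i, x y i = -((((nr (x y))⁻¹ * s)⁻¹ : ℝ) : ℂ) * (Pi.single k (1 : ℂ) : Fin n → ℂ) i := by
        intro i
        have e := congrFun h i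
        simp only [Pi.neg_apply, Pi.smul_apply, smul_eq_mul, h3] at e
        rw [e]
        have : (((nr (x y))⁻¹ * s : ℝ) : ℂ) ≠ 0 := by exact_mod_cast h0
        rw [Complex.ofReal_inv, neg_mul_neg]
        conv_lhs => rw [← inv_mul_cancel_left₀ this (x y i)]
        push_cast
        ring
      obtain ⟨t, ht⟩ := hΦR (H' y) ⟨fun i hi => by
          have := hxe i.1
          rw [Pi.single_eq_of_ne (fun h => hi (Subtype.ext h))] at this
          simpa only [x, i.2, dif_pos, mul_zero] using this, by
          have := hxe k
          simp only [x, le_refl, dif_pos, Pi.single_eq_same, mul_one] at this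
          rw [show κ = ⟨k, le_rfl⟩ from rfl, this, Complex.neg_im, Complex.ofReal_im, neg_zero], by
          have := hxe k
          simp only [x, le_refl, dif_pos, Pi.single_eq_same, mul_one] at this
          rw [show κ = ⟨k, le_rfl⟩ from rfl, this, Complex.neg_re, Complex.ofReal_re]
          have : 0 ≤ ((nr (x y))⁻¹ * s)⁻¹ := by positivity
          linarith⟩
      exact hav y () t ht)
    (by
      intro y hy
      funext i
      rw [hF1C y hy]
      simp [Pi.single_apply, one_apply])
  refine ⟨F₂, h1.trans h4, fun y i hi l => ?_⟩
  rcases hi.lt_or_eq with hi | rfl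
  · exact h5 y i hi l
  · rw [h6]
    have : nr (Pi.single i 1 : Fin n → ℂ) = 1 := by
      rw [nr, Finset.sum_eq_single i]
      · simp
      · intro b _ hb; rw [Pi.single_eq_of_ne hb]; simp
      · simp
    rw [this]
    simp [Pi.single_apply, one_apply]

/-- The first `m < n` columns of a family of unitary matrices can be made standard, rel `C`. -/
theorem col_steps {E : Type} [NormedAddCommGroup E] [NormedSpace ℝ E] [FiniteDimensional ℝ E]
    [CompactSpace Y] [T2Space Y] (hE : finrank ℝ E ≤ 2) {j : Y → E} (hj : IsClosedEmbedding j)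
    {C : Set Y} (hC : IsClosed C) {F : C(Y, Un n)} (hFC : ∀ y ∈ C, F y = 1) (m : ℕ)
    (hm : m + 1 ≤ n) :
    ∃ F' : C(Y, Un n), F.HomotopicRel F' C ∧
      ∀ y, ∀ i : Fin n, (i : ℕ) < m →
        ∀ l, (F' y : Matrix (Fin n) (Fin n) ℂ) l i = (1 : Matrix _ _ ℂ) l i := by
  induction m with
  | zero => exact ⟨F, .refl _, fun y i hi => absurd hi (Nat.not_lt_zero _)⟩
  | succ m ih =>
    obtain ⟨F₁, h1, h2⟩ := ih (by omega)
    obtain ⟨F₂, h3, h4⟩ := col_step hE hj hC (F := F₁) ⟨m, by omega⟩ (by show m + 2 ≤ n; omega)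
      (fun y i hi => h2 y i hi) (fun y hy => by rw [← hFC y hy]; exact (h1.some.fst_eq_snd hy).symm)
    exact ⟨F₂, h1.trans h3, fun y i hi => h4 y i (by rw [Fin.le_def]; simp; omega)⟩

/-- A map into `SU(n)` from a space of dimension at most `2` is null-homotopic rel `C`. -/
theorem su_null {E : Type} [NormedAddCommGroup E] [NormedSpace ℝ E] [FiniteDimensional ℝ E]
    [CompactSpace Y] [T2Space Y] (hE : finrank ℝ E ≤ 2) {j : Y → E} (hj : IsClosedEmbedding j)
    (hn : 0 < n) {C : Set Y} (hC : IsClosed C) {F : Y → Matrix (Fin n) (Fin n) ℂ} (hF : Continuous F)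
    (hFu : ∀ y, F y ∈ unitaryGroup (Fin n) ℂ) (hFd : ∀ y, (F y).det = 1) (hFC : ∀ y ∈ C, F y = 1) :
    ∃ G : I × Y → Matrix (Fin n) (Fin n) ℂ, Continuous G ∧ (∀ p, G p ∈ unitaryGroup (Fin n) ℂ) ∧
      (∀ p, (G p).det = 1) ∧ (∀ y, G (0, y) = F y) ∧ (∀ y, G (1, y) = 1) ∧
      ∀ t, ∀ y ∈ C, G (t, y) = 1 := by
  obtain ⟨F', ⟨h1⟩, h2⟩ := col_steps hE hj hC (F := ⟨fun y => ⟨F y, hFu y⟩, hF.subtype_mk _⟩)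
    (fun y hy => Subtype.ext (hFC y hy)) (n - 1) (by omega)
  let l : Fin n := ⟨n - 1, by omega⟩
  -- the retraction of `U(n)` onto `SU(n)` that rescales the last column
  let ρ : Matrix (Fin n) (Fin n) ℂ → Matrix (Fin n) (Fin n) ℂ := fun g =>
    g * diagonal fun i => if i = l then star g.det else 1
  have hρc : Continuous ρ := by
    refine continuous_id.mul (Continuous.matrix_diagonal ?_)
    refine continuous_pi fun i => ?_
    by_cases h : i = l
    · simp only [h, if_true]; exact continuous_id.matrix_det.star
    · simp only [h, if_false]; exact continuous_const
  have hdet : ∀ c : ℂ, (diagonal fun i : Fin n => if i = l then c else 1).det = c := by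
    intro c
    rw [det_diagonal, Finset.prod_ite_eq' Finset.univ l (fun _ => c)]
    simp
  have hρ1 : ∀ g : Matrix (Fin n) (Fin n) ℂ, g.det = 1 → ρ g = g := by
    intro g hg
    simp only [ρ, hg, star_one, ite_self]
    rw [diagonal_one, mul_one]
  have hdd : ∀ g ∈ unitaryGroup (Fin n) ℂ, g.det * star g.det = 1 := by
    intro g hg
    rw [← det_conjTranspose g, ← star_eq_conjTranspose, ← det_mul, mem_unitaryGroup_iff.1 hg, det_one]
  have hdg : ∀ c : ℂ, (diagonal fun i : Fin n => if i = l then c else 1) *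
      (diagonal fun i : Fin n => if i = l then star c else 1) =
      diagonal fun i : Fin n => if i = l then c * star c else 1 := by
    intro c
    rw [diagonal_mul_diagonal]
    congr 1; funext i; split_ifs <;> simp
  have hρd : ∀ g ∈ unitaryGroup (Fin n) ℂ, (ρ g).det = 1 := by
    intro g hg
    rw [det_mul, hdet, hdd g hg]
  have hρu : ∀ g ∈ unitaryGroup (Fin n) ℂ, ρ g ∈ unitaryGroup (Fin n) ℂ := by
    intro g hg
    refine mul_mem hg ?_
    rw [mem_unitaryGroup_iff', star_eq_conjTranspose, diagonal_conjTranspose, diagonal_mul_diagonal,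
      ← diagonal_one]
    congr 1; funext i
    simp only [Pi.star_apply]
    split_ifs
    · rw [star_star, hdd g hg]
    · simp
  refine ⟨fun p => ρ (h1 p), hρc.comp (continuous_subtype_val.comp h1.continuous),
    fun p => hρu _ (h1 p).2, fun p => hρd _ (h1 p).2, fun y => ?_, fun y => ?_, fun t y hy => ?_⟩
  · simp only [h1.apply_zero]; exact hρ1 _ (hFd y)
  · simp only [h1.apply_one]
    have hne : ∀ i : Fin n, i ≠ l → (i : ℕ) < n - 1 := fun i hi => by
      have : (i : ℕ) ≠ n - 1 := fun h => hi (Fin.ext h)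
      omega
    have hD : (F' y : Matrix (Fin n) (Fin n) ℂ) =
        diagonal fun i : Fin n => if i = l then (F' y : Matrix (Fin n) (Fin n) ℂ) l l else 1 := by
      ext a b
      by_cases hb : b = l
      · subst hb
        by_cases ha : a = l
        · subst ha; simp
        · rw [perp_col (F' y) ha (h2 y a (hne a ha)), diagonal_apply_ne _ ha]
      · rw [h2 y b (hne b hb) a, diagonal_apply, one_apply]
        by_cases hab : a = b
        · subst hab; simp [hb]
        · simp [hab]
    have hdl : (F' y : Matrix (Fin n) (Fin n) ℂ).det = (F' y : Matrix (Fin n) (Fin n) ℂ) l l := by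
      conv_lhs => rw [hD]
      exact hdet _
    have hcs := hdd _ (F' y).2
    simp only [ρ]
    rw [hdl] at hcs ⊢
    generalize (F' y : Matrix (Fin n) (Fin n) ℂ) l l = c at hD hcs
    rw [hD, hdg, hcs]
    simp
  · have : h1 (t, y) = 1 := by
      rw [h1.eq_fst t hy]; exact Subtype.ext (hFC y hy)
    simp only [this]
    exact hρ1 _ det_one
end

end

/-! ### Bundles: gauge transformations and lifting -/

section
open Set Topology Module Matrix
open scoped ComplexOrder MatrixOrder unitInterval

section
variable {G E B : Type} [Group G] [TopologicalSpace G] [IsTopologicalGroup G] [CompactSpace G]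
  [TopologicalSpace E] [T2Space E] [MulAction G E] [ContinuousSMul G E] {Z : Subgroup G}

/-- Two lifts of the same map, over a simply connected space, differ by a continuous map to `G`. -/
theorem exists_gauge (hZ : IsDiscrete (Z : Set G)) (hs : ∀ (g : G) (a : E), g • a = a ↔ g ∈ Z)
    {X : Type} [TopologicalSpace X] [SimplyConnectedSpace X] [LocallyPathConnectedSpace X]
    {F F' : X → E} (hF : Continuous F) (hF' : Continuous F') (h : ∀ x, ∃ g : G, g • F x = F' x)
    (x₀ : X) {g₀ : G} (hg₀ : g₀ • F x₀ = F' x₀) :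
    ∃ g : C(X, G), g x₀ = g₀ ∧ ∀ x, g x • F x = F' x := by
  have hst : ∀ (a : E) (g g' : G), g • a = g' • a ↔ (QuotientGroup.mk g : G ⧸ Z) = QuotientGroup.mk g' := by
    intro a g g'
    rw [QuotientGroup.eq, ← hs _ a, mul_smul, inv_smul_eq_iff, eq_comm]
  choose c hc using h
  have hcc : Continuous fun x => (QuotientGroup.mk (c x) : G ⧸ Z) := by
    refine continuous_iff_isClosed.2 fun K hK => ?_
    have hK' : IsCompact ((QuotientGroup.mk : G → G ⧸ Z) ⁻¹' K) :=
      (hK.preimage continuous_quot_mk).isCompact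
    have := isClosed_exists_of_isCompact hK' (R := {q : X × G | q.2 • F q.1 = F' q.1})
      (isClosed_eq (continuous_snd.smul (hF.comp continuous_fst)) (hF'.comp continuous_fst))
    convert this using 1
    ext x
    refine ⟨fun hx => ⟨c x, hx, hc x⟩, ?_⟩
    rintro ⟨g, hg, hgx⟩
    have e := (hst (F x) (c x) g).1 ((hc x).trans hgx.symm)
    show (QuotientGroup.mk (c x) : G ⧸ Z) ∈ K
    rw [e]; exact hg
  obtain ⟨g, ⟨h1, h2⟩, -⟩ := (Z.isQuotientCoveringMap hZ).isCoveringMap.existsUnique_continuousMap_lifts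
    ⟨_, hcc⟩ x₀ g₀ ((hst (F x₀) _ _).1 (hg₀.trans (hc x₀).symm))
  refine ⟨g, h1, fun x => ?_⟩
  rw [← hc x, hst]
  exact congrFun h2 x

omit [IsTopologicalGroup G] [CompactSpace G] in
/-- A path in a discrete subgroup is constant. -/
theorem const_of_discrete (hZ : IsDiscrete (Z : Set G)) {c : I → G} (hc : Continuous c)
    (h : ∀ t, c t ∈ Z) (s t : I) : c s = c t := by
  have : DiscreteTopology Z := hZ.to_subtype
  have := PreconnectedSpace.constant (Y := Z) inferInstance (f := fun t => (⟨c t, h t⟩ : Z))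
    (hc.subtype_mk _) (x := s) (y := t)
  exact congrArg Subtype.val this

variable [TopologicalSpace B] {p : E → B}

/-- The projection of `ℝᵏ` onto a box. -/
noncomputable def boxProj {k : ℕ} (a b x : Fin k → ℝ) : Fin k → ℝ := fun i => max (a i) (min (b i) (x i))

theorem boxProj_mem {k : ℕ} {a b : Fin k → ℝ} (h : a ≤ b) (x) : boxProj a b x ∈ Icc a b :=
  ⟨fun _ => le_max_left _ _, fun i => max_le (h i) (min_le_left _ _)⟩

theorem boxProj_of_mem {k : ℕ} {a b x : Fin k → ℝ} (h : x ∈ Icc a b) : boxProj a b x = x := by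
  funext i
  rw [boxProj, min_eq_right (h.2 i), max_eq_right (h.1 i)]

theorem continuous_boxProj {k : ℕ} (a b : Fin k → ℝ) : Continuous (boxProj a b) := by
  unfold boxProj; fun_prop

omit [TopologicalSpace B] in
/-- Gluing lifts along a common face of two boxes. -/
theorem glue_lift (hZ : IsDiscrete (Z : Set G)) (hs : ∀ (g : G) (a : E), g • a = a ↔ g ∈ Z)
    (hp : ∀ a b, p a = p b ↔ ∃ g : G, g • a = b) {k : ℕ} {f : (Fin k → ℝ) → B}
    {a b : Fin k → ℝ} (hab : a ≤ b) (i : Fin k) {c : ℝ} (hc : c ∈ Icc (a i) (b i))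
    (h₁ : ∃ F : (Fin k → ℝ) → E, Continuous F ∧ ∀ x ∈ Icc a (Function.update b i c), p (F x) = f x)
    (h₂ : ∃ F : (Fin k → ℝ) → E, Continuous F ∧ ∀ x ∈ Icc (Function.update a i c) b, p (F x) = f x) :
    ∃ F : (Fin k → ℝ) → E, Continuous F ∧ ∀ x ∈ Icc a b, p (F x) = f x := by
  obtain ⟨F₁, hF₁, h₁⟩ := h₁
  obtain ⟨F₂, hF₂, h₂⟩ := h₂
  have m₁ : ∀ x ∈ Icc a b, x i ≤ c → x ∈ Icc a (Function.update b i c) := fun x hx hxc =>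
    ⟨hx.1, by rw [le_update_iff]; exact ⟨hxc, fun j _ => hx.2 j⟩⟩
  have m₂ : ∀ x ∈ Icc a b, c ≤ x i → x ∈ Icc (Function.update a i c) b := fun x hx hxc =>
    ⟨by rw [update_le_iff]; exact ⟨hxc, fun j _ => hx.1 j⟩, hx.2⟩
  let r : (Fin k → ℝ) → Fin k → ℝ := fun x => Function.update (boxProj a b x) i c
  have hr : Continuous r := (continuous_boxProj a b).update i continuous_const
  have hrm : ∀ x, r x ∈ Icc a b := fun x => by
    have := boxProj_mem hab x
    exact ⟨by rw [le_update_iff]; exact ⟨hc.1, fun j _ => this.1 j⟩,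
      by rw [update_le_iff]; exact ⟨hc.2, fun j _ => this.2 j⟩⟩
  have hri : ∀ x, r x i = c := fun x => Function.update_self ..
  have heq : ∀ x, ∃ g : G, g • F₂ (r x) = F₁ (r x) := fun x => by
    rw [← hp, h₁ _ (m₁ _ (hrm x) (hri x).le), h₂ _ (m₂ _ (hrm x) (hri x).ge)]
  obtain ⟨g, -, hg⟩ := exists_gauge hZ hs (hF₂.comp hr) (hF₁.comp hr) heq 0 (heq 0).choose_spec
  refine ⟨fun x => if x i ≤ c then F₁ (boxProj a b x) else g x • F₂ (boxProj a b x),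
    Continuous.if_le (hF₁.comp (continuous_boxProj a b))
      (g.continuous.smul (hF₂.comp (continuous_boxProj a b))) (continuous_apply i)
      continuous_const fun x hx => ?_, fun x hx => ?_⟩
  · have : r x = boxProj a b x := by
      refine Function.update_eq_self_iff.2 ?_
      rw [boxProj, hx, min_eq_right hc.2, max_eq_right hc.1]
    rw [← this]
    exact (hg x).symm
  · simp only [boxProj_of_mem hx]
    split_ifs with hxc
    · exact h₁ x (m₁ x hx hxc)
    · rw [← h₂ x (m₂ x hx (not_le.1 hxc).le), eq_comm, hp]
      exact ⟨_, rfl⟩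

/-- Maps from `ℝᵏ` lift over a box. -/
theorem exists_lift_box (hZ : IsDiscrete (Z : Set G)) (hs : ∀ (g : G) (a : E), g • a = a ↔ g ∈ Z)
    (hp : ∀ a b, p a = p b ↔ ∃ g : G, g • a = b)
    (hsec : ∀ b : B, ∃ N, IsOpen N ∧ b ∈ N ∧ ∃ s : B → E, ContinuousOn s N ∧ ∀ b ∈ N, p (s b) = b)
    {k : ℕ} {f : (Fin k → ℝ) → B} (hf : Continuous f) :
    ∃ F : (Fin k → ℝ) → E, Continuous F ∧ ∀ x ∈ Icc (0 : Fin k → ℝ) 1, p (F x) = f x := by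
  choose N hNo hbN s hsc hsp using hsec
  obtain ⟨δ, hδ, hL⟩ := lebesgue_number_lemma_of_metric (s := Icc (0 : Fin k → ℝ) 1)
    (c := fun b : B => f ⁻¹' N b) isCompact_Icc (fun b => (hNo b).preimage hf)
    (fun x _ => mem_iUnion.2 ⟨f x, hbN _⟩)
  -- every box inside the unit cube with widths at most `w` admits a lift
  let Q : (Fin k → ℝ) → Prop := fun w => ∀ a b : Fin k → ℝ, a ≤ b → Icc a b ⊆ Icc 0 1 →
    (∀ i, b i - a i ≤ w i) →
    ∃ F : (Fin k → ℝ) → E, Continuous F ∧ ∀ x ∈ Icc a b, p (F x) = f x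
  have hQ0 : Q fun _ => δ / 2 := by
    intro a b hab hsub hw
    obtain ⟨β, hβ⟩ := hL a (hsub (left_mem_Icc.2 hab))
    have hin : ∀ x ∈ Icc a b, f x ∈ N β := fun x hx => by
      refine hβ ?_
      rw [Metric.mem_ball]
      refine lt_of_le_of_lt ((dist_pi_le_iff (by linarith)).2 fun i => ?_) (half_lt_self hδ)
      rw [Real.dist_eq, abs_of_nonneg (sub_nonneg.2 (hx.1 i))]
      exact (sub_le_sub_right (hx.2 i) _).trans (hw i)
    refine ⟨fun x => s β (f (boxProj a b x)), ?_, fun x hx => ?_⟩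
    · exact (hsc β).comp_continuous (hf.comp (continuous_boxProj a b))
        fun x => hin _ (boxProj_mem hab x)
    · simp only [boxProj_of_mem hx]
      rw [hsp β _ (hin x hx)]
  have hstep : ∀ w : Fin k → ℝ, ∀ i, Q w → Q (Function.update w i (2 * w i)) := by
    intro w i hQ a b hab hsub hw
    have hwi := hw i
    rw [Function.update_self] at hwi
    have hwj : ∀ j, j ≠ i → b j - a j ≤ w j := fun j hj => by
      have := hw j; rwa [Function.update_of_ne hj] at this
    have hi := hab i
    set c := (a i + b i) / 2 with hc
    have hc1 : a i ≤ c := by rw [hc]; linarith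
    have hc2 : c ≤ b i := by rw [hc]; linarith
    have hb' : Function.update b i c ≤ b := by
      rw [update_le_iff]; exact ⟨hc2, fun j _ => le_rfl⟩
    have ha' : a ≤ Function.update a i c := by
      rw [le_update_iff]; exact ⟨hc1, fun j _ => le_rfl⟩
    refine glue_lift hZ hs hp hab i ⟨hc1, hc2⟩
      (hQ _ _ ?_ ((Icc_subset_Icc_right hb').trans hsub) ?_)
      (hQ _ _ ?_ ((Icc_subset_Icc_left ha').trans hsub) ?_)
    · rw [le_update_iff]; exact ⟨hc1, fun j _ => hab j⟩
    · intro j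
      by_cases hj : j = i
      · subst hj; rw [Function.update_self]; linarith
      · rw [Function.update_of_ne hj]; exact hwj j hj
    · rw [update_le_iff]; exact ⟨hc2, fun j _ => hab j⟩
    · intro j
      by_cases hj : j = i
      · subst hj; rw [Function.update_self]; linarith
      · rw [Function.update_of_ne hj]; exact hwj j hj
  have hdouble : ∀ w : Fin k → ℝ, Q w → Q fun i => 2 * w i := by
    intro w hw
    have : ∀ S : Finset (Fin k), Q fun i => if i ∈ S then 2 * w i else w i := by
      intro S
      induction S using Finset.induction_on with
      | empty => simpa using hw
      | insert i S hi ih =>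
        convert hstep _ i ih using 1
        funext j
        by_cases hj : j = i
        · subst hj; simp [hi]
        · simp [hj]
    simpa using this Finset.univ
  have hpow : ∀ m : ℕ, Q fun _ => 2 ^ m * (δ / 2) := by
    intro m
    induction m with
    | zero => simpa using hQ0
    | succ m ih =>
      convert hdouble _ ih using 2
      ring
  obtain ⟨m, hm⟩ := pow_unbounded_of_one_lt (2 / δ) one_lt_two
  refine hpow m 0 1 zero_le_one le_rfl fun i => ?_
  rw [div_lt_iff₀ hδ] at hm
  simp
  linarith

/-- `p : E → B` is a locally trivial quotient by an action of `G` all of whose stabilizers are the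
discrete subgroup `Z`. -/
structure IsBundle (p : E → B) (Z : Subgroup G) : Prop where
  discrete : IsDiscrete (Z : Set G)
  stab : ∀ (g : G) (a : E), g • a = a ↔ g ∈ Z
  fib : ∀ a b, p a = p b ↔ ∃ g : G, g • a = b
  cont : Continuous p
  sec : ∀ b : B, ∃ N, IsOpen N ∧ b ∈ N ∧ ∃ s : B → E, ContinuousOn s N ∧ ∀ b ∈ N, p (s b) = b

/-- The projection of `ℝᵏ` onto the unit cube. -/
noncomputable def cubeProj {k : ℕ} (x : Fin k → ℝ) : Fin k → I := fun i => projIcc 0 1 zero_le_one (x i)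

theorem continuous_cubeProj {k : ℕ} : Continuous (cubeProj (k := k)) :=
  continuous_pi fun i => continuous_projIcc.comp (continuous_apply i)

theorem cubeProj_coe {k : ℕ} (x : Fin k → I) : cubeProj (fun i => (x i : ℝ)) = x := by
  funext i; exact projIcc_val _ _

omit [CompactSpace G] [T2Space E] [IsTopologicalGroup G] [ContinuousSMul G E] in
theorem IsBundle.map_smul (hb : IsBundle p Z) (g : G) (a : E) : p (g • a) = p a :=
  ((hb.fib _ _).2 ⟨g, rfl⟩).symm

/-- Gauge transformations between lifts over a cube. -/
theorem IsBundle.exists_gauge (hb : IsBundle p Z) {k : ℕ} {F F' : (Fin k → I) → E}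
    (hF : Continuous F) (hF' : Continuous F') (h : ∀ x, p (F x) = p (F' x)) (x₀ : Fin k → I)
    {g₀ : G} (hg₀ : g₀ • F x₀ = F' x₀) :
    ∃ g : (Fin k → I) → G, Continuous g ∧ g x₀ = g₀ ∧ ∀ x, g x • F x = F' x := by
  obtain ⟨g, h1, h2⟩ := _root_.exists_gauge hb.discrete hb.stab (hF.comp continuous_cubeProj)
    (hF'.comp continuous_cubeProj) (fun x => (hb.fib _ _).1 (h _)) (fun i => (x₀ i : ℝ)) (g₀ := g₀)
    (by simpa only [Function.comp_apply, cubeProj_coe] using hg₀)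
  refine ⟨fun x => g fun i => (x i : ℝ), g.continuous.comp (by fun_prop), h1, fun x => ?_⟩
  have := h2 fun i => (x i : ℝ)
  simpa only [Function.comp_apply, cubeProj_coe] using this

/-- Lifting a map on a cube, relative to a lift on the fixed points of `r`. -/
theorem IsBundle.exists_lift (hb : IsBundle p Z) {k : ℕ} {f : (Fin k → I) → B} (hf : Continuous f)
    {r : (Fin k → I) → Fin k → I} (hr : Continuous r) {A : (Fin k → I) → E} (hA : Continuous A)
    (h : ∀ x, p (A x) = f (r x)) :
    ∃ F : (Fin k → I) → E, Continuous F ∧ (∀ x, p (F x) = f x) ∧ ∀ x, r x = x → F x = A x := by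
  obtain ⟨F, hF, hFf⟩ := exists_lift_box hb.discrete hb.stab hb.fib hb.sec
    (hf.comp continuous_cubeProj)
  have hFc : Continuous fun x : Fin k → I => F fun i => (x i : ℝ) := hF.comp (by fun_prop)
  have hFp : ∀ x : Fin k → I, p (F fun i => (x i : ℝ)) = f x := fun x => by
    rw [hFf _ ⟨fun i => (x i).2.1, fun i => (x i).2.2⟩]
    simp only [Function.comp_apply, cubeProj_coe]
  have heq : ∀ x, p (F fun i => (r x i : ℝ)) = p (A x) := fun x => by rw [hFp, h]
  obtain ⟨g₀, hg₀⟩ := (hb.fib _ _).1 (heq 0)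
  obtain ⟨g, hg, -, hgA⟩ := hb.exists_gauge (hFc.comp hr) hA heq 0 hg₀
  refine ⟨fun x => g x • F fun i => (x i : ℝ), hg.smul hFc, fun x => ?_, fun x hx => ?_⟩
  · rw [hb.map_smul, hFp]
  · have := hgA x
    simp only [Function.comp_apply, hx] at this
    exact this

/-- The boundary of a cube without its (open) top face. -/
def Walls (m : ℕ) : Set (Fin (m + 1) → I) :=
  {x | x (Fin.last m) = 0 ∨ ∃ i : Fin m, x i.castSucc = 0 ∨ x i.castSucc = 1}

/-- The retraction of a cube onto its walls, by projecting from a point above the top face. -/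
theorem exists_retraction (m : ℕ) : ∃ r : (Fin (m + 1) → I) → Fin (m + 1) → I,
    Continuous r ∧ (∀ x, r x ∈ Walls m) ∧ ∀ x ∈ Walls m, r x = x := by
  let M : (Fin (m + 1) → I) → ℝ := fun x => ‖fun i : Fin m => (x i.castSucc : ℝ) - 1 / 2‖
  have hMc : Continuous M := by fun_prop
  have hM0 : ∀ x, 0 ≤ M x := fun x => norm_nonneg _
  have hMi : ∀ x (i : Fin m), |(x i.castSucc : ℝ) - 1 / 2| ≤ M x := fun x i =>
    norm_le_pi_norm (fun i : Fin m => (x i.castSucc : ℝ) - 1 / 2) i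
  have hM1 : ∀ x, M x ≤ 1 / 2 := fun x => by
    refine (pi_norm_le_iff_of_nonneg (by norm_num)).2 fun i => ?_
    rw [Real.norm_eq_abs, abs_le]
    have := (x i.castSucc).2
    exact ⟨by linarith [this.1], by linarith [this.2]⟩
  let u : (Fin (m + 1) → I) → ℝ := fun x => x (Fin.last m)
  have huc : Continuous u := by fun_prop
  have hu0 : ∀ x, 0 ≤ u x := fun x => (x _).2.1
  let D : (Fin (m + 1) → I) → ℝ := fun x => max 1 (2 * M x * (1 + u x))
  have hDc : Continuous D := by fun_prop
  have hD1 : ∀ x, 0 < D x := fun x => lt_of_lt_of_le one_pos (le_max_left _ _)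
  let R : (Fin (m + 1) → I) → Fin (m + 1) → ℝ := fun x => Fin.snoc
    (fun i : Fin m => 1 / 2 + ((x i.castSucc : ℝ) - 1 / 2) * ((1 + u x) / D x))
    (2 * M x * (1 + u x) - 1)
  have hRl : ∀ x, R x (Fin.last m) = 2 * M x * (1 + u x) - 1 := fun x => by simp [R]
  have hRi : ∀ x i, R x (Fin.castSucc i) =
      1 / 2 + ((x i.castSucc : ℝ) - 1 / 2) * ((1 + u x) / D x) := fun x i => by simp [R]
  have hRc : Continuous R := by
    refine continuous_pi fun i => ?_
    refine Fin.lastCases ?_ (fun i => ?_) i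
    · simp only [hRl]; fun_prop
    · simp only [hRi]
      refine continuous_const.add (Continuous.mul (by fun_prop) ?_)
      exact (by fun_prop : Continuous fun x => 1 + u x).div hDc fun x => (hD1 x).ne'
  refine ⟨fun x => cubeProj (R x), continuous_cubeProj.comp hRc, fun x => ?_, fun x hx => ?_⟩
  · rcases le_or_gt (2 * M x * (1 + u x)) 1 with h | h
    · left
      exact projIcc_of_le_left _ (by rw [hRl]; linarith)
    · right
      have hMpos : 0 < M x := by
        by_contra! h0
        have : M x = 0 := le_antisymm h0 (hM0 x)
        rw [this] at h; linarith
      obtain ⟨i, hi⟩ : ∃ i : Fin m, |(x i.castSucc : ℝ) - 1 / 2| = M x := by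
        by_contra! hne
        have : M x < M x := (pi_norm_lt_iff hMpos).2 fun i => lt_of_le_of_ne (hMi x i) (hne i)
        exact lt_irrefl _ this
      refine ⟨i, ?_⟩
      have hD : D x = 2 * M x * (1 + u x) := max_eq_right h.le
      have hu := hu0 x
      have hval : M x * ((1 + u x) / D x) = 1 / 2 := by
        rw [hD]; field_simp
      rcases abs_choice ((x i.castSucc : ℝ) - 1 / 2) with h' | h'
      · right
        refine projIcc_of_right_le _ ?_
        rw [hRi, ← h', hi, hval]; norm_num
      · left
        refine projIcc_of_le_left _ ?_
        have : (x i.castSucc : ℝ) - 1 / 2 = -M x := by rw [← hi, h']; ring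
        rw [hRi, this, neg_mul, hval]; norm_num
  · have key : u x = 0 ∨ M x = 1 / 2 := by
      rcases hx with h | ⟨i, h⟩
      · left; simp [u, h]
      · right
        refine le_antisymm (hM1 x) (le_trans ?_ (hMi x i))
        rcases h with h | h <;> rw [h] <;> norm_num
    have h1 : (1 + u x) / D x = 1 := by
      rcases key with h | h
      · have : D x = 1 := max_eq_left (by rw [h]; linarith [hM1 x])
        rw [this, h]; norm_num
      · have hu := hu0 x
        have : D x = 1 + u x := by
          simp only [D]; rw [h, max_eq_right (by linarith)]; ring
        rw [this, div_self (by linarith)]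
    funext i
    refine Fin.lastCases ?_ (fun i => ?_) i
    · rcases key with h | h
      · refine (projIcc_of_le_left _ ?_).trans ?_
        · rw [hRl, h]; linarith [hM1 x]
        · exact Subtype.ext h.symm
      · show projIcc 0 1 zero_le_one _ = _
        rw [hRl, h, show 2 * (1 / 2 : ℝ) * (1 + u x) - 1 = u x by ring]
        exact projIcc_val _ _
    · show projIcc 0 1 zero_le_one _ = _
      rw [hRi, h1, mul_one, add_sub_cancel]
      exact projIcc_val _ _
end

end

/-! ### The connecting map -/

section
open Set Topology Module Matrix
open scoped ComplexOrder MatrixOrder unitInterval Topology.Homotopy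

section
variable {G E B : Type} [Group G] [TopologicalSpace G] [TopologicalSpace E] [MulAction G E]
  {Z : Subgroup G} [TopologicalSpace B] {p : E → B} {e : E}

/-- The graph of the connecting map `π₂(B) → Z`: the loop `f` lifts to a square `F` which is
constant on three sides, and on the fourth one is the orbit of a path in `G` from `1` to `z`. -/
def Connects (p : E → B) (e : E) (f : Ω^ (Fin 2) B (p e)) (z : G) : Prop :=
  ∃ (F : (Fin 2 → I) → E) (g : I → G), Continuous F ∧ Continuous g ∧ (∀ x, p (F x) = f x) ∧
    (∀ x ∈ Walls 1, F x = e) ∧ g 0 = 1 ∧ g 1 = z ∧ ∀ s, F ![s, 1] = g s • e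

theorem walls_one {x : Fin 2 → I} : x ∈ Walls 1 ↔ x 1 = 0 ∨ x 0 = 0 ∨ x 0 = 1 := by
  refine or_congr Iff.rfl ⟨?_, fun h => ⟨0, h⟩⟩
  rintro ⟨i, hi⟩
  rwa [Subsingleton.elim i 0] at hi

theorem walls_two {x : Fin 3 → I} : x ∈ Walls 2 ↔ x 0 = 0 ∨ x 0 = 1 ∨ ![x 1, x 2] ∈ Walls 1 := by
  rw [walls_one]
  have : x ∈ Walls 2 ↔ x 2 = 0 ∨ ∃ i : Fin 2, x i.castSucc = 0 ∨ x i.castSucc = 1 := Iff.rfl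
  rw [this, Fin.exists_fin_two]
  show x 2 = 0 ∨ (x 0 = 0 ∨ x 0 = 1) ∨ x 1 = 0 ∨ x 1 = 1 ↔
    x 0 = 0 ∨ x 0 = 1 ∨ x 2 = 0 ∨ x 1 = 0 ∨ x 1 = 1
  tauto

theorem boundary_two {x : Fin 2 → I} : x ∈ Cube.boundary (Fin 2) ↔ x ∈ Walls 1 ∨ x 1 = 1 := by
  rw [walls_one]
  show (∃ i, x i = 0 ∨ x i = 1) ↔ _
  rw [Fin.exists_fin_two]
  tauto

variable [IsTopologicalGroup G] [CompactSpace G] [T2Space E] [ContinuousSMul G E]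

omit [IsTopologicalGroup G] [CompactSpace G] [T2Space E] [ContinuousSMul G E] in
theorem Connects.mem (hb : IsBundle p Z) {f z} (h : Connects p e f z) : z ∈ Z := by
  obtain ⟨F, g, -, -, -, hW, -, h1, h2⟩ := h
  rw [← hb.stab z e, ← h1, ← h2, hW _ (walls_one.2 (by simp))]

/-- Lift `f` to a square starting at `e` on the walls; on the top face the lift stays in the fibre of
`e`, so it is the orbit of a path in `G`. -/
theorem exists_connects (hb : IsBundle p Z) (f : Ω^ (Fin 2) B (p e)) : ∃ z : G, Connects p e f z := by
  obtain ⟨r, hr, hrW, hrf⟩ := exists_retraction 1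
  obtain ⟨F, hF, hFf, hFe⟩ := hb.exists_lift (f := f) (map_continuous f) hr
    (A := fun _ => e) continuous_const
    fun x => (f.2 _ (boundary_two.2 (.inl (hrW x)))).symm
  have hW : ∀ x ∈ Walls 1, F x = e := fun x hx => hFe x (hrf x hx)
  obtain ⟨g, hg, hg0, hgF⟩ := hb.exists_gauge (k := 1) (F := fun _ => e)
    (F' := fun y => F ![y 0, 1]) continuous_const (hF.comp (by fun_prop))
    (fun y => by rw [hFf]; exact (f.2 _ (boundary_two.2 (.inr rfl))).symm) 0 (g₀ := 1)
    (by rw [one_smul, hW _ (walls_one.2 (by simp))])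
  exact ⟨_, F, fun s => g fun _ => s, hF, hg.comp (by fun_prop), hFf, hW, hg0, rfl,
    fun s => (hgF fun _ => s).symm⟩

/-- The value of the connecting map depends on the homotopy class of `f` only: a lift of a homotopy
from `f` to `f'` extending the given lifts is, on its top face, the orbit of a map from a square to
`G`, and on the two sides of that square where the lift is `e` this map is constant, because `Z` is
discrete. -/
theorem Connects.unique (hb : IsBundle p Z) {f f' : Ω^ (Fin 2) B (p e)} {z z' : G}
    (hff : GenLoop.Homotopic f f') (h : Connects p e f z) (h' : Connects p e f' z') : z = z' := by
  obtain ⟨H⟩ := hff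
  obtain ⟨F, g, hF, hg, hFf, hW, hg0, hg1, hgF⟩ := h
  obtain ⟨F', g', hF', hg', hFf', hW', hg0', hg1', hgF'⟩ := h'
  obtain ⟨r, hr, hrW, hrf⟩ := exists_retraction 2
  have hHe : ∀ t x, x ∈ Cube.boundary (Fin 2) → H (t, x) = p e := fun t x hx => by
    rw [H.eq_fst t hx]; exact f.2 x hx
  have hlast : Continuous fun x : Fin 3 → I => (![x 1, x 2] : Fin 2 → I) := by fun_prop
  let A : (Fin 3 → I) → E := fun x => if x 0 = 0 then F ![x 1, x 2] else
    if x 0 = 1 then F' ![x 1, x 2] else e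
  have hA0 : ∀ x, x 0 = 0 → A x = F ![x 1, x 2] := fun x hx => by simp [A, hx]
  have hA1 : ∀ x, x 0 = 1 → A x = F' ![x 1, x 2] := fun x hx => by simp [A, hx]
  have hAW : ∀ x, ![x 1, x 2] ∈ Walls 1 → A x = e := fun x hx => by
    simp only [A]
    split_ifs
    · exact hW _ hx
    · exact hW' _ hx
    · rfl
  have hWc : IsClosed (Walls 1) := by
    have : Walls 1 = {x : Fin 2 → I | x 1 = 0 ∨ x 0 = 0 ∨ x 0 = 1} := by
      ext x; exact walls_one
    rw [this]
    exact (isClosed_eq (continuous_apply _) continuous_const).union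
      ((isClosed_eq (continuous_apply _) continuous_const).union
      (isClosed_eq (continuous_apply _) continuous_const))
  have hAc : ContinuousOn A ({x | x 0 = 0} ∪ ({x | x 0 = 1} ∪ {x | ![x 1, x 2] ∈ Walls 1})) := by
    refine ContinuousOn.union_of_isClosed ((hF.comp hlast).continuousOn.congr hA0)
      (ContinuousOn.union_of_isClosed ((hF'.comp hlast).continuousOn.congr hA1)
        (continuousOn_const.congr hAW) ?_ ?_) ?_ (IsClosed.union ?_ ?_)
    · exact isClosed_eq (continuous_apply _) continuous_const
    · exact hWc.preimage hlast
    · exact isClosed_eq (continuous_apply _) continuous_const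
    · exact isClosed_eq (continuous_apply _) continuous_const
    · exact hWc.preimage hlast
  obtain ⟨K, hK, hKf, hKA⟩ := hb.exists_lift (f := fun x : Fin 3 → I => H (x 0, ![x 1, x 2]))
    (H.continuous.comp ((continuous_apply 0).prodMk hlast)) hr (A := fun x => A (r x))
    (hAc.comp_continuous hr fun x => walls_two.1 (hrW x)) (fun x => by
      have hx := hrW x
      generalize r x = y at hx
      rcases walls_two.1 hx with h | h | h
      · rw [hA0 y h, hFf, h]; exact (H.apply_zero _).symm
      · rw [hA1 y h, hFf', h]; exact (H.apply_one _).symm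
      · rw [hAW y h, hHe _ _ (boundary_two.2 (.inl h))])
  replace hKA : ∀ x, x ∈ Walls 2 → K x = A x := fun x hx => by
    rw [hKA x (hrf x hx), hrf x hx]
  have hK0 : ∀ s, K ![0, s, 1] = g s • e := fun s => by
    rw [hKA _ (walls_two.2 (.inl rfl)), hA0 _ rfl]; exact hgF s
  have hK1 : ∀ s, K ![1, s, 1] = g' s • e := fun s => by
    rw [hKA _ (walls_two.2 (.inr (.inl rfl))), hA1 _ rfl]; exact hgF' s
  have hKs : ∀ t s, s = 0 ∨ s = 1 → K ![t, s, 1] = e := fun t s hs => by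
    have : ![s, 1] ∈ Walls 1 := walls_one.2 (.inr hs)
    rw [hKA _ (walls_two.2 (.inr (.inr this))), hAW _ this]
  obtain ⟨γ, hγ, hγ0, hγK⟩ := hb.exists_gauge (k := 2) (F := fun _ => e)
    (F' := fun y => K ![y 0, y 1, 1]) continuous_const (hK.comp (by fun_prop))
    (fun y => by rw [hKf]; exact (hHe _ _ (boundary_two.2 (.inr rfl))).symm) ![0, 0] (g₀ := 1)
    (by rw [one_smul]; exact (hKs 0 0 (.inl rfl)).symm)
  replace hγK : ∀ t s, γ ![t, s] • e = K ![t, s, 1] := fun t s => hγK _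
  have hγc : ∀ {a b : I → I}, Continuous a → Continuous b → Continuous fun t => γ ![a t, b t] :=
    fun ha hb => hγ.comp (by fun_prop)
  have hZ2 : ∀ {a b : G}, a • e = b • e → a⁻¹ * b ∈ Z := fun {a b} h => by
    rw [← hb.stab _ e, mul_smul, ← h, inv_smul_smul]
  have hZ1 : ∀ {a : G}, a • e = e → a ∈ Z := fun {a} h => (hb.stab _ _).1 h
  -- follow the path `γ` around the three sides `t = 0`, `s = 1`, `t = 1` and along `s = 0`
  have e1 := const_of_discrete hb.discrete ((hγc continuous_const continuous_id).inv.mul hg)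
    (fun s => hZ2 ((hγK 0 s).trans (hK0 s))) 0 1
  have e2 := const_of_discrete hb.discrete (hγc continuous_id continuous_const)
    (fun t => hZ1 ((hγK t 0).trans (hKs t 0 (.inl rfl)))) 0 1
  have e3 := const_of_discrete hb.discrete (hγc continuous_id continuous_const)
    (fun t => hZ1 ((hγK t 1).trans (hKs t 1 (.inr rfl)))) 0 1
  have e4 := const_of_discrete hb.discrete ((hγc continuous_const continuous_id).inv.mul hg')
    (fun s => hZ2 ((hγK 1 s).trans (hK1 s))) 0 1
  simp only [id, Pi.mul_apply, Pi.inv_apply] at e1 e2 e3 e4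
  rw [hγ0] at e1 e2
  rw [hg0, hg1, inv_one, one_mul, eq_comm, inv_mul_eq_one] at e1
  rw [← e2, hg0', hg1', inv_one, one_mul, eq_comm, inv_mul_eq_one] at e4
  rw [← e1, e3, e4]

/-- The connecting map is multiplicative: lifts of `f` and `f'` are glued side by side, and since `z`
fixes `e` the path `g` from `1` to `z` can be continued by `g' z`. -/
theorem Connects.mul (hb : IsBundle p Z) {f f' : Ω^ (Fin 2) B (p e)} {z z' : G}
    (h : Connects p e f z) (h' : Connects p e f' z') :
    Connects p e (GenLoop.transAt 0 f f') (z' * z) := by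
  have hz := h.mem hb
  obtain ⟨F, g, hF, hg, hFf, hW, hg0, hg1, hgF⟩ := h
  obtain ⟨F', g', hF', hg', hFf', hW', hg0', hg1', hgF'⟩ := h'
  have hupd : ∀ {q : ℝ → ℝ}, Continuous q → Continuous fun x : Fin 2 → I =>
      Function.update x 0 (projIcc (0 : ℝ) 1 zero_le_one (q (x 0))) := fun hq =>
    continuous_id.update 0 (continuous_projIcc.comp
      (hq.comp (continuous_subtype_val.comp (continuous_apply 0))))
  have hh : ∀ s : I, (s : ℝ) = 1 / 2 → projIcc (0 : ℝ) 1 zero_le_one (2 * s) = 1 ∧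
      projIcc (0 : ℝ) 1 zero_le_one (2 * s - 1) = 0 := fun s hs => by
    rw [hs]
    exact ⟨projIcc_of_right_le _ (by norm_num), projIcc_of_le_left _ (by norm_num)⟩
  refine ⟨fun x => if (x 0 : ℝ) ≤ 1 / 2 then
      F (Function.update x 0 (projIcc 0 1 zero_le_one (2 * x 0))) else
      F' (Function.update x 0 (projIcc 0 1 zero_le_one (2 * x 0 - 1))),
    fun s => if (s : ℝ) ≤ 1 / 2 then g (projIcc 0 1 zero_le_one (2 * s)) else
      g' (projIcc 0 1 zero_le_one (2 * s - 1)) * z, ?_, ?_, ?_, ?_, ?_, ?_, ?_⟩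
  · refine Continuous.if_le (hF.comp (hupd (q := fun t => 2 * t) (by fun_prop)))
      (hF'.comp (hupd (q := fun t => 2 * t - 1) (by fun_prop)))
      (continuous_subtype_val.comp (continuous_apply 0)) continuous_const fun x hx => ?_
    obtain ⟨h1, h2⟩ := hh _ hx
    simp only [h1, h2]
    rw [hW _ (walls_one.2 (by simp)), hW' _ (walls_one.2 (by simp))]
  · refine Continuous.if_le (hg.comp (continuous_projIcc.comp (by fun_prop)))
      ((hg'.comp (continuous_projIcc.comp (by fun_prop))).mul continuous_const)
      continuous_subtype_val continuous_const fun s hs => ?_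
    obtain ⟨h1, h2⟩ := hh _ hs
    simp only [h1, h2, hg1, hg0', one_mul]
  · intro x
    show p (if _ then _ else _) = if (x 0 : ℝ) ≤ 1 / 2 then f _ else f' _
    split_ifs
    · exact hFf _
    · exact hFf' _
  · intro x hx
    have key : (x 1 = 0 ∨ x 0 = 0 ∨ x 0 = 1) := walls_one.1 hx
    dsimp only
    split_ifs with hc
    · refine hW _ (walls_one.2 ?_)
      rcases key with h | h | h
      · left; simpa using h
      · right; left; rw [Function.update_self, h]; exact projIcc_of_le_left _ (by norm_num)
      · rw [h] at hc; norm_num at hc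
    · refine hW' _ (walls_one.2 ?_)
      rcases key with h | h | h
      · left; simpa using h
      · rw [h] at hc; norm_num at hc
      · right; right; rw [Function.update_self, h]; exact projIcc_of_right_le _ (by norm_num)
  · dsimp only
    rw [if_pos (by norm_num), projIcc_of_le_left _ (by norm_num)]; exact hg0
  · dsimp only
    rw [if_neg (by norm_num), projIcc_of_right_le _ (by norm_num)]
    exact congrArg (· * z) hg1'
  · intro s
    have hu : ∀ a : I, Function.update (![s, 1] : Fin 2 → I) 0 a = ![a, 1] := fun a => by
      funext i; fin_cases i <;> rfl
    simp only [hu, cons_val_zero]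
    split_ifs
    · exact hgF _
    · rw [hgF', mul_smul, (hb.stab _ _).2 hz]
end

end

/-! ### The second homotopy group of the base -/

section
open Set Topology Module Matrix
open scoped ComplexOrder MatrixOrder unitInterval Topology.Homotopy

section
variable {G E B : Type} [Group G] [TopologicalSpace G] [IsTopologicalGroup G] [CompactSpace G]
  [TopologicalSpace E] [T2Space E] [MulAction G E] [ContinuousSMul G E] {Z : Subgroup G}
  [TopologicalSpace B] {p : E → B} {e : E}

/-- The part of the long exact sequence of `G / Z → E → B` that computes `π₂(B)`: the connecting
map is an isomorphism onto `Z = π₁(G / Z)` if `G` is simply connected, `π₂(E) = 0`, and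
the orbits of paths in `G` from `1` to `Z` are null-homotopic loops in `E`. -/
theorem IsBundle.homotopyGroup_equiv (hb : IsBundle p Z)
    (hconn : ∀ z ∈ Z, ∃ g : I → G, Continuous g ∧ g 0 = 1 ∧ g 1 = z)
    (hsc : ∀ g : I → G, Continuous g → g 0 = 1 → g 1 = 1 → ∃ k : I × I → G, Continuous k ∧
      (∀ s, k (0, s) = g s) ∧ (∀ s, k (1, s) = 1) ∧ ∀ t s, s = 0 ∨ s = 1 → k (t, s) = 1)
    (hE1 : ∀ g : I → G, Continuous g → g 0 = 1 → g 1 ∈ Z → ∃ K : I × I → E, Continuous K ∧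
      (∀ s, K (0, s) = g s • e) ∧ (∀ s, K (1, s) = e) ∧ ∀ t s, s = 0 ∨ s = 1 → K (t, s) = e)
    (hE2 : ∀ F : (Fin 2 → I) → E, Continuous F → (∀ x ∈ Cube.boundary (Fin 2), F x = e) →
      ∃ K : I × (Fin 2 → I) → E, Continuous K ∧ (∀ x, K (0, x) = F x) ∧ (∀ x, K (1, x) = e) ∧
        ∀ t, ∀ x ∈ Cube.boundary (Fin 2), K (t, x) = e) :
    Nonempty (HomotopyGroup (Fin 2) B (p e) ≃* Z) := by
  choose δ hδ using exists_connects (e := e) hb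
  let d : HomotopyGroup (Fin 2) B (p e) → Z := Quotient.lift (fun f => ⟨δ f, (hδ f).mem hb⟩)
    fun f f' h => Subtype.ext (Connects.unique hb h (hδ f) (hδ f'))
  let c : Ω^ (Fin 2) B (p e) → HomotopyGroup (Fin 2) B (p e) := fun f => ⟦f⟧
  have hc : ∀ a, ∃ f, c f = a := Quotient.exists_rep
  have hd : ∀ f, (d (c f) : G) = δ f := fun f => rfl
  have hmul : ∀ a b, d (a * b) = d a * d b := by
    intro a b
    obtain ⟨a, rfl⟩ := hc a
    obtain ⟨b, rfl⟩ := hc b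
    have h1 : c a * c b = c (GenLoop.transAt 0 b a) := HomotopyGroup.mul_spec
    refine Subtype.ext ?_
    rw [h1, hd, Subgroup.coe_mul, hd, hd]
    exact Connects.unique hb (GenLoop.Homotopic.refl _) (hδ _) (Connects.mul hb (hδ b) (hδ a))
  let D : HomotopyGroup (Fin 2) B (p e) →* Z := MonoidHom.mk' d hmul
  refine ⟨MulEquiv.ofBijective D ⟨(injective_iff_map_eq_one D).2 fun a ha => ?_, fun z => ?_⟩⟩
  · obtain ⟨f, rfl⟩ := hc a
    have h1 : δ f = 1 := congrArg Subtype.val ha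
    obtain ⟨F, g, hF, hg, hFf, hW, hg0, hg1, hgF⟩ := hδ f
    obtain ⟨k, hk, hk0, hk1, hkb⟩ := hsc g hg hg0 (hg1.trans h1)
    obtain ⟨K, hK, hK0, hK1, hKb⟩ := hE2 (fun x => (k (unitInterval.symm (x 1), x 0))⁻¹ • F x)
      ((hk.comp (by fun_prop)).inv.smul hF) fun x hx => by
        rcases boundary_two.1 hx with h | h
        · have : k (unitInterval.symm (x 1), x 0) = 1 := by
            rcases walls_one.1 h with h | h
            · rw [h, unitInterval.symm_zero, hk1]
            · exact hkb _ _ h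
          rw [this, inv_one, one_smul, hW _ h]
        · have hx : x = ![x 0, 1] := by
            funext i; fin_cases i
            · rfl
            · exact h
          rw [h, unitInterval.symm_one, hk0, inv_smul_eq_iff, ← hgF, ← hx]
    rw [HomotopyGroup.one_def]
    refine Quotient.sound ⟨⟨⟨⟨fun y => p (K y), hb.cont.comp hK⟩, fun x => ?_, fun x => ?_⟩, ?_⟩⟩
    · show p (K (0, x)) = f x
      rw [hK0, hb.map_smul, hFf]
    · show p (K (1, x)) = p e
      rw [hK1]
    · intro t x hx
      show p (K (t, x)) = f x
      rw [hKb t x hx]; exact (f.2 x hx).symm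
  · obtain ⟨g, hg, hg0, hg1⟩ := hconn z z.2
    obtain ⟨K, hK, hK0, hK1, hKb⟩ := hE1 g hg hg0 (hg1 ▸ z.2)
    have hFW : ∀ x : Fin 2 → I, x ∈ Walls 1 → K (unitInterval.symm (x 1), x 0) = e := by
      intro x hx
      rcases walls_one.1 hx with h | h
      · rw [h, unitInterval.symm_zero, hK1]
      · exact hKb _ _ h
    let f : Ω^ (Fin 2) B (p e) := ⟨⟨fun x => p (K (unitInterval.symm (x 1), x 0)),
      hb.cont.comp (hK.comp (by fun_prop))⟩, fun x hx => by
        show p (K (unitInterval.symm (x 1), x 0)) = p e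
        rcases boundary_two.1 hx with h | h
        · rw [hFW x h]
        · rw [h, unitInterval.symm_one, hK0, hb.map_smul]⟩
    refine ⟨c f, Subtype.ext (Connects.unique hb (GenLoop.Homotopic.refl f) (hδ f) ?_)⟩
    refine ⟨fun x => K (unitInterval.symm (x 1), x 0), g, hK.comp (by fun_prop), hg,
      fun x => rfl, hFW, hg0, hg1, fun s => ?_⟩
    show K (unitInterval.symm 1, s) = _
    rw [unitInterval.symm_one, hK0]
end

end

/-! ### Best intertwiners -/

section
open Set Topology Module Matrix
open scoped ComplexOrder MatrixOrder unitInterval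

section
variable {n r : ℕ}

/-- The square of the Frobenius norm. -/
noncomputable def frob (M : Matrix (Fin n) (Fin n) ℂ) : ℝ := ∑ i, ∑ j, ‖M i j‖ ^ 2

theorem continuous_frob : Continuous (frob (n := n)) := continuous_frobenius

theorem frob_nonneg (M : Matrix (Fin n) (Fin n) ℂ) : 0 ≤ frob M :=
  Finset.sum_nonneg fun _ _ => Finset.sum_nonneg fun _ _ => by positivity

theorem frob_smul (c : ℂ) (M : Matrix (Fin n) (Fin n) ℂ) : frob (c • M) = ‖c‖ ^ 2 * frob M :=
  frobenius_smul c M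

theorem frob_parallelogram (X Y : Matrix (Fin n) (Fin n) ℂ) :
    frob (X + Y) + frob (X - Y) = 2 * frob X + 2 * frob Y := by
  simp only [frob, Finset.mul_sum, ← Finset.sum_add_distrib]
  refine Finset.sum_congr rfl fun i _ => Finset.sum_congr rfl fun j _ => ?_
  have := parallelogram_law_with_norm ℝ (X i j) (Y i j)
  simp only [Matrix.add_apply, Matrix.sub_apply]
  nlinarith

theorem frob_eq_trace (M : Matrix (Fin n) (Fin n) ℂ) : ((frob M : ℝ) : ℂ) = (star M * M).trace := by
  rw [frob, Finset.sum_comm]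
  simp only [trace, diag_apply, mul_apply, star_apply, Complex.ofReal_sum]
  refine Finset.sum_congr rfl fun i _ => Finset.sum_congr rfl fun j _ => ?_
  rw [Complex.star_def, mul_comm, Complex.mul_conj, Complex.normSq_eq_norm_sq]

theorem frob_mul_mul {g h : Matrix (Fin n) (Fin n) ℂ} (hg : g ∈ unitaryGroup (Fin n) ℂ)
    (hh : h ∈ unitaryGroup (Fin n) ℂ) (M : Matrix (Fin n) (Fin n) ℂ) :
    frob (g * M * h) = frob M := by
  have h1 := mem_unitaryGroup_iff'.1 hg
  have h2 := mem_unitaryGroup_iff.1 hh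
  refine Complex.ofReal_injective ?_
  rw [frob_eq_trace, frob_eq_trace, star_mul, star_mul, mul_assoc, trace_mul_comm]
  congr 1
  calc star M * star g * (g * M * h) * star h
      = star M * (star g * g) * M * (h * star h) := by simp only [mul_assoc]
    _ = _ := by rw [h1, h2, mul_one, mul_one]

/-- The failure of `M` to intertwine the tuples `B` and `A`. -/
noncomputable def defect (A B : Fin r → Matrix (Fin n) (Fin n) ℂ) (M : Matrix (Fin n) (Fin n) ℂ) :
    ℝ := ∑ i, frob (B i * M - M * A i)

theorem defect_smul (A B : Fin r → Matrix (Fin n) (Fin n) ℂ) (c : ℂ)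
    (M : Matrix (Fin n) (Fin n) ℂ) : defect A B (c • M) = ‖c‖ ^ 2 * defect A B M := by
  rw [defect, defect, Finset.mul_sum]
  refine Finset.sum_congr rfl fun i _ => ?_
  rw [mul_smul_comm, smul_mul_assoc, ← smul_sub, frob_smul]

theorem defect_parallelogram (A B : Fin r → Matrix (Fin n) (Fin n) ℂ)
    (X Y : Matrix (Fin n) (Fin n) ℂ) :
    defect A B (X + Y) + defect A B (X - Y) = 2 * defect A B X + 2 * defect A B Y := by
  simp only [defect, Finset.mul_sum, ← Finset.sum_add_distrib]
  refine Finset.sum_congr rfl fun i _ => ?_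
  rw [← frob_parallelogram]
  congr 2 <;> simp only [mul_add, add_mul, mul_sub, sub_mul] <;> abel

theorem defect_conjT {g : Matrix (Fin n) (Fin n) ℂ} (hg : g ∈ unitaryGroup (Fin n) ℂ)
    (A B : Fin r → Matrix (Fin n) (Fin n) ℂ) (M : Matrix (Fin n) (Fin n) ℂ) :
    defect A (conjT g B) (g * M) = defect A B M := by
  refine Finset.sum_congr rfl fun i _ => ?_
  rw [← frob_mul_mul hg (one_mem _) (B i * M - M * A i), conjT, mul_one, mul_sub]
  congr 2
  · rw [mul_assoc, ← mul_assoc (star g), mem_unitaryGroup_iff'.1 hg, one_mul, mul_assoc]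
  · rw [mul_assoc]

theorem continuous_defect (A : Fin r → Matrix (Fin n) (Fin n) ℂ) :
    Continuous fun x : (Fin r → Matrix (Fin n) (Fin n) ℂ) × Matrix (Fin n) (Fin n) ℂ =>
      defect A x.1 x.2 :=
  continuous_finsetSum _ fun i _ => continuous_frob.comp (by fun_prop)

/-- `M` is a best intertwiner, among matrices of norm `1`, of the tuples `B` and `A`. -/
def IsBest (A B : Fin r → Matrix (Fin n) (Fin n) ℂ) (M : Matrix (Fin n) (Fin n) ℂ) : Prop :=
  frob M = 1 ∧ ∀ M', frob M' = 1 → defect A B M ≤ defect A B M'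

theorem isCompact_frob_eq_one : IsCompact {M : Matrix (Fin n) (Fin n) ℂ | frob M = 1} :=
  isCompact_of_frobenius (isClosed_eq continuous_frob continuous_const) fun _ h => h

theorem isClosed_isBest (A : Fin r → Matrix (Fin n) (Fin n) ℂ) :
    IsClosed {x : (Fin r → Matrix (Fin n) (Fin n) ℂ) × Matrix (Fin n) (Fin n) ℂ |
      IsBest A x.1 x.2} := by
  have : {x : (Fin r → Matrix (Fin n) (Fin n) ℂ) × Matrix (Fin n) (Fin n) ℂ | IsBest A x.1 x.2} =
      {x | frob x.2 = 1} ∩ ⋂ M' : {M : Matrix (Fin n) (Fin n) ℂ // frob M = 1},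
        {x | defect A x.1 x.2 ≤ defect A x.1 M'} := by
    ext x
    simp [IsBest]
  rw [this]
  refine (isClosed_eq (continuous_frob.comp continuous_snd) continuous_const).inter
    (isClosed_iInter fun M' => ?_)
  have h1 : Continuous fun x : (Fin r → Matrix (Fin n) (Fin n) ℂ) × Matrix (Fin n) (Fin n) ℂ =>
      (x.1, M'.1) := by fun_prop
  have h2 := Continuous.comp (continuous_defect A) h1
  exact isClosed_le (continuous_defect A) h2

theorem exists_isBest [NeZero n] (A B : Fin r → Matrix (Fin n) (Fin n) ℂ) : ∃ M, IsBest A B M := by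
  have hne : {M : Matrix (Fin n) (Fin n) ℂ | frob M = 1}.Nonempty := by
    refine ⟨Matrix.single 0 0 1, ?_⟩
    show frob _ = 1
    rw [frob, Finset.sum_eq_single 0, Finset.sum_eq_single 0]
    · simp
    · intro j _ hj; rw [Matrix.single_apply_of_col_ne _ _ hj.symm]; simp
    · simp
    · intro i _ hi
      refine Finset.sum_eq_zero fun j _ => ?_
      rw [Matrix.single_apply_of_row_ne hi.symm]; simp
    · simp
  have hc : Continuous fun M : Matrix (Fin n) (Fin n) ℂ => (B, M) := by fun_prop
  obtain ⟨M, hM, h⟩ := isCompact_frob_eq_one.exists_isMinOn hne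
    (Continuous.comp (continuous_defect A) hc).continuousOn
  exact ⟨M, hM, fun M' hM' => h hM'⟩

variable {A B : Fin r → Matrix (Fin n) (Fin n) ℂ} {M M' : Matrix (Fin n) (Fin n) ℂ}

theorem frob_pos (hM : M ≠ 0) : 0 < frob M := frobenius_pos hM

theorem exists_normalize (hM : M ≠ 0) : ∃ c : ℂ, c ≠ 0 ∧ ‖c‖ ^ 2 * frob M = 1 := by
  have := frob_pos hM
  have h1 : ‖(((Real.sqrt (frob M))⁻¹ : ℝ) : ℂ)‖ ^ 2 * frob M = 1 := by
    rw [Complex.norm_real, Real.norm_eq_abs, sq_abs, inv_pow, Real.sq_sqrt this.le,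
      inv_mul_cancel₀ this.ne']
  refine ⟨_, fun h => ?_, h1⟩
  rw [h] at h1
  simp at h1

theorem IsBest.mul_frob_le (h : IsBest A B M) (X : Matrix (Fin n) (Fin n) ℂ) :
    defect A B M * frob X ≤ defect A B X := by
  by_cases hX : X = 0
  · have h0 := defect_smul A B 0 X
    have h1 := frob_smul 0 X
    simp only [zero_smul, norm_zero, ne_eq, OfNat.ofNat_ne_zero, not_false_eq_true, zero_pow,
      zero_mul] at h0 h1
    rw [hX, h0, h1, mul_zero]
  · obtain ⟨c, -, hc⟩ := exists_normalize hX
    have h1 := h.2 (c • X) (by rw [frob_smul, hc])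
    rw [defect_smul] at h1
    calc defect A B M * frob X ≤ ‖c‖ ^ 2 * defect A B X * frob X :=
          mul_le_mul_of_nonneg_right h1 (frob_nonneg X)
      _ = (‖c‖ ^ 2 * frob X) * defect A B X := by ring
      _ = _ := by rw [hc, one_mul]

/-- Best intertwiners are, up to scaling, the nonzero elements of a linear subspace. -/
theorem IsBest.comb (h : IsBest A B M) (h' : IsBest A B M') (a b : ℂ) (h0 : a • M + b • M' ≠ 0) :
    ∃ c : ℂ, c ≠ 0 ∧ IsBest A B (c • (a • M + b • M')) := by
  obtain ⟨c, hc0, hc⟩ := exists_normalize h0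
  refine ⟨c, hc0, by rw [frob_smul, hc], fun N hN => ?_⟩
  have hm : defect A B M' = defect A B M := le_antisymm (h'.2 _ h.1) (h.2 _ h'.1)
  have h1 := h.mul_frob_le (a • M - b • M')
  have h2 := frob_parallelogram (a • M) (b • M')
  have h3 := defect_parallelogram A B (a • M) (b • M')
  rw [frob_smul, frob_smul, h.1, h'.1] at h2
  rw [defect_smul, defect_smul, hm] at h3
  have h4 : defect A B (a • M + b • M') ≤ defect A B M * frob (a • M + b • M') := by
    have : frob (a • M + b • M') = 2 * (‖a‖ ^ 2 * 1) + 2 * (‖b‖ ^ 2 * 1) - frob (a • M - b • M') := by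
      linarith
    rw [this]
    nlinarith
  have h5 := mul_le_mul_of_nonneg_left h4 (sq_nonneg ‖c‖)
  rw [defect_smul]
  calc _ ≤ _ := h5
    _ = defect A B M * (‖c‖ ^ 2 * frob (a • M + b • M')) := by ring
    _ = defect A B M := by rw [hc, mul_one]
    _ ≤ _ := h.2 N hN

theorem IsBest.conjT {g : Matrix (Fin n) (Fin n) ℂ} (hg : g ∈ unitaryGroup (Fin n) ℂ)
    (h : IsBest A B M) : IsBest A (conjT g B) (g * M) := by
  refine ⟨by rw [← h.1, ← frob_mul_mul hg (one_mem _) M, mul_one], fun N hN => ?_⟩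
  have h1 : g * star g = 1 := mem_unitaryGroup_iff.1 hg
  have h2 : N = g * (star g * N) := by rw [← mul_assoc, h1, one_mul]
  rw [h2, defect_conjT hg, defect_conjT hg]
  refine h.2 _ ?_
  rw [← hN, ← frob_mul_mul (Unitary.star_mem hg) (one_mem _) N, mul_one]

/-- If all best intertwiners have nonzero trace then the best intertwiner is unique up to a
phase. -/
theorem IsBest.eq_smul (htr : ∀ N, IsBest A B N → N.trace ≠ 0) (h : IsBest A B M)
    (h' : IsBest A B M') : M' = (M'.trace / M.trace) • M ∧ ‖M'.trace / M.trace‖ = 1 := by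
  have hM : M' = (M'.trace / M.trace) • M := by
    by_contra hne
    obtain ⟨c, hc, hb⟩ := h.comb h' (M'.trace / M.trace) (-1) (fun h0 => hne (by
      rw [neg_smul, one_smul, ← sub_eq_add_neg, sub_eq_zero] at h0
      exact h0.symm))
    refine htr _ hb ?_
    rw [trace_smul, trace_add, trace_smul, trace_smul, smul_eq_mul, smul_eq_mul, smul_eq_mul,
      div_mul_cancel₀ _ (htr _ h)]
    ring
  refine ⟨hM, ?_⟩
  have h1 := frob_smul (M'.trace / M.trace) M
  rw [← hM, h.1, h'.1, mul_one] at h1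
  nlinarith [norm_nonneg (M'.trace / M.trace)]
end

end

/-! ### Local slices -/

section
open Set Topology Module Matrix
open scoped ComplexOrder MatrixOrder unitInterval

section
variable {n r : ℕ} [NeZero n]

/-- A local slice for simultaneous conjugation near an irreducible tuple `A`: conjugate `B` by the
unitary part of the best intertwiner of `B` and `A`. -/
theorem exists_slice {A : Fin r → Matrix (Fin n) (Fin n) ℂ} (hA : Irr A) :
    ∃ (N : Set (Fin r → Matrix (Fin n) (Fin n) ℂ))
      (s : (Fin r → Matrix (Fin n) (Fin n) ℂ) → Fin r → Matrix (Fin n) (Fin n) ℂ),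
      IsOpen N ∧ A ∈ N ∧ ContinuousOn s N ∧
      (∀ B ∈ N, ∃ g ∈ unitaryGroup (Fin n) ℂ, s B = conjT g B) ∧
      ∀ B ∈ N, ∀ g ∈ unitaryGroup (Fin n) ℂ, conjT g B ∈ N → s (conjT g B) = s B := by
  have hn : (n : ℂ) ≠ 0 := by exact_mod_cast NeZero.ne n
  set N : Set (Fin r → Matrix (Fin n) (Fin n) ℂ) :=
    {B | ∀ M ∈ {M : Matrix (Fin n) (Fin n) ℂ | frob M = 1}, (B, M) ∉
      {x : (Fin r → Matrix (Fin n) (Fin n) ℂ) × Matrix (Fin n) (Fin n) ℂ |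
        IsBest A x.1 x.2 ∧ (x.2.trace = 0 ∨ x.2.det = 0)}} with hN
  -- `N` consists of the tuples all of whose best intertwiners have nonzero trace and determinant;
  -- nonzero traces make the best intertwiner unique up to a phase
  have hNo : IsOpen N := by
    refine isOpen_forall_of_isCompact isCompact_frob_eq_one ((isClosed_isBest A).inter ?_)
    exact (isClosed_eq (by fun_prop) continuous_const).union
      (isClosed_eq (by fun_prop) continuous_const)
  have hNtr : ∀ B ∈ N, ∀ M, IsBest A B M → M.trace ≠ 0 := fun B hB M hM h =>
    hB M hM.1 ⟨hM, .inl h⟩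
  have hNdet : ∀ B ∈ N, ∀ M, IsBest A B M → M.det ≠ 0 := fun B hB M hM h =>
    hB M hM.1 ⟨hM, .inr h⟩
  have hAN : A ∈ N := by
    rintro M hM ⟨hb : IsBest A A M, h⟩
    have hd : defect A A M ≤ 0 := by
      obtain ⟨c, -, hc⟩ := exists_normalize (one_ne_zero (α := Matrix (Fin n) (Fin n) ℂ))
      refine (hb.2 (c • 1) (by rw [frob_smul, hc])).trans_eq ?_
      refine Finset.sum_eq_zero fun i _ => ?_
      rw [mul_smul_comm, smul_mul_assoc, mul_one, one_mul, sub_self]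
      simp [frob]
    obtain ⟨c, rfl⟩ := hA.eq_smul_one (M := M) fun i => by
      by_contra hne
      refine (lt_of_lt_of_le (frob_pos (sub_ne_zero.2 hne)) ?_).not_ge hd
      exact Finset.single_le_sum (f := fun i => frob (A i * M - M * A i))
        (fun i _ => frob_nonneg _) (Finset.mem_univ i)
    have hc : c ≠ 0 := fun h0 => by
      have := hb.1
      rw [h0, frob_smul] at this
      simp at this
    rcases h with h | h
    · rw [trace_smul, trace_one, Fintype.card_fin, smul_eq_mul] at h
      exact mul_ne_zero hc hn h
    · rw [det_smul, det_one, mul_one] at h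
      exact pow_ne_zero _ hc h
  -- the phase is fixed by making the trace positive
  have hex : ∀ B, ∃ M, B ∈ N → IsBest A B M ∧ M.trace = (‖M.trace‖ : ℂ) := by
    intro B
    by_cases hB : B ∈ N
    · obtain ⟨M, hM⟩ := exists_isBest A B
      have h0 := hNtr B hB M hM
      have h1 : (‖M.trace‖ : ℂ) ≠ 0 := by exact_mod_cast norm_ne_zero_iff.2 h0
      have hc : ‖(‖M.trace‖ : ℂ) / M.trace‖ = 1 := by
        rw [norm_div, Complex.norm_real, norm_norm, div_self (norm_ne_zero_iff.2 h0)]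
      refine ⟨((‖M.trace‖ : ℂ) / M.trace) • M, fun _ => ⟨⟨?_, fun M' hM' => ?_⟩, ?_⟩⟩
      · rw [frob_smul, hc, hM.1]; norm_num
      · rw [defect_smul, hc]; simpa using hM.2 M' hM'
      · rw [trace_smul, smul_eq_mul, div_mul_cancel₀ _ h0, Complex.norm_real, norm_norm]
    · exact ⟨0, fun h => (hB h).elim⟩
  choose f hf using hex
  have hfc : ContinuousOn f N := by
    rw [continuousOn_iff_continuous_domRestrict]
    refine continuous_of_closed_graph (X := N) (K := {M : Matrix (Fin n) (Fin n) ℂ | frob M = 1})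
      (R := {x | IsBest A x.1 x.2 ∧ x.2.trace = (‖x.2.trace‖ : ℂ)}) isCompact_frob_eq_one ?_
      (fun B => ⟨(hf B B.2).1.1, hf B B.2⟩) fun B M hM hR => ?_
    · refine IsClosed.inter ((isClosed_isBest A).preimage
        (f := fun x : N × Matrix (Fin n) (Fin n) ℂ => ((x.1 : Fin r → Matrix (Fin n) (Fin n) ℂ), x.2))
        (by fun_prop)) ?_
      exact isClosed_eq (by fun_prop) (by fun_prop)
    · obtain ⟨h1, h2⟩ := (hf B B.2).1.eq_smul (hNtr B B.2) hR.1
      have h3 : (M.trace / (f B).trace : ℂ) = 1 := by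
        rw [norm_div, div_eq_one_iff_eq (norm_ne_zero_iff.2 (hNtr B B.2 _ (hf B B.2).1))] at h2
        rw [hR.2, (hf B B.2).2, h2]
        refine div_self ?_
        exact_mod_cast norm_ne_zero_iff.2 (hNtr B B.2 _ (hf B B.2).1)
      rw [h3, one_smul] at h1
      exact h1
  refine ⟨N, fun B => conjT (star (polar (f B))) B, hNo, hAN, ?_, fun B hB => ⟨_, ?_, rfl⟩,
    fun B hB g hg hgB => ?_⟩
  · have h1 : ContinuousOn (fun B => polar (f B)) N :=
      continuousOn_polar.comp hfc fun B hB => hNdet B hB _ (hf B hB).1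
    refine continuousOn_pi.2 fun i => ?_
    exact ((h1.star).mul (continuous_apply i).continuousOn).mul h1.star.star
  · exact Unitary.star_mem (polar_spec (hNdet B hB _ (hf B hB).1)).1
  · have hd := hNdet B hB _ (hf B hB).1
    obtain ⟨h1, h2⟩ := ((hf B hB).1.conjT hg).eq_smul (hNtr _ hgB) (hf _ hgB).1
    generalize (f (conjT g B)).trace / (g * f B).trace = c at h1 h2
    have hc : star c * c = 1 := by
      rw [Complex.star_def, Complex.conj_mul', h2]; norm_num
    have hc' : c * star c = 1 := by rw [mul_comm, hc]
    dsimp only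
    rw [h1, ← smul_mul_assoc, polar_mul hd (smul_mem_unitary hc hg), conjT_conjT, star_mul,
      star_smul, mul_assoc, smul_mul_assoc, mem_unitaryGroup_iff'.1 hg]
    funext i
    simp only [conjT, mul_smul_comm, smul_mul_assoc, star_smul, star_star, mul_one, smul_smul]
    rw [hc', one_smul]
end

end

/-! ### The action of the special unitary group on irreducible tuples -/

section
open Set Topology Module Matrix
open scoped ComplexOrder MatrixOrder unitInterval

section
variable {n r : ℕ} {D : Prop}

theorem mem_SU {g : Un n} : g ∈ SUsubgroup n ↔ (g : Matrix (Fin n) (Fin n) ℂ).det = 1 := by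
  rw [SUsubgroup, MonoidHom.mem_ker]; rfl

/-- The underlying matrix of an element of `SU(n)`. -/
def SUn.mat (g : SUn n) : Matrix (Fin n) (Fin n) ℂ := ((g : Un n) : Matrix (Fin n) (Fin n) ℂ)

theorem SUn.mat_mem (g : SUn n) : g.mat ∈ unitaryGroup (Fin n) ℂ := g.1.2
theorem SUn.det_mat (g : SUn n) : g.mat.det = 1 := mem_SU.1 g.2
theorem SUn.mat_mul (g h : SUn n) : (g * h).mat = g.mat * h.mat := rfl
theorem SUn.mat_one : (1 : SUn n).mat = 1 := rfl
theorem SUn.mat_injective : Function.Injective (SUn.mat (n := n)) := fun _ _ h =>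
  Subtype.ext (Subtype.ext h)
theorem SUn.continuous_mat : Continuous (SUn.mat (n := n)) :=
  continuous_subtype_val.comp continuous_subtype_val

/-- An element of `SU(n)` given by its matrix. -/
def SUn.mk (M : Matrix (Fin n) (Fin n) ℂ) (h : M ∈ unitaryGroup (Fin n) ℂ) (hd : M.det = 1) :
    SUn n := ⟨⟨M, h⟩, mem_SU.2 hd⟩

theorem SUn.mat_mk {M : Matrix (Fin n) (Fin n) ℂ} (h : M ∈ unitaryGroup (Fin n) ℂ)
    (hd : M.det = 1) : (SUn.mk M h hd).mat = M := rfl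

theorem SUn.continuous_mk {X : Type} [TopologicalSpace X] {M : X → Matrix (Fin n) (Fin n) ℂ}
    (hM : Continuous M) (h : ∀ x, M x ∈ unitaryGroup (Fin n) ℂ) (hd : ∀ x, (M x).det = 1) :
    Continuous fun x => SUn.mk (M x) (h x) (hd x) :=
  (hM.subtype_mk _).subtype_mk _

instance : CompactSpace (Un n) := isCompact_iff_compactSpace.1 isCompact_unitaryGroup

instance : CompactSpace (SUn n) := by
  refine isCompact_iff_compactSpace.1 (IsClosed.isCompact ?_)
  have : (SUsubgroup n : Set (Un n)) = {g : Un n | (g : Matrix (Fin n) (Fin n) ℂ).det = 1} := by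
    ext g; exact mem_SU
  rw [this]
  exact isClosed_eq (by fun_prop) continuous_const

theorem det_conj {g : Matrix (Fin n) (Fin n) ℂ} (hg : g ∈ unitaryGroup (Fin n) ℂ)
    (A : Matrix (Fin n) (Fin n) ℂ) : (g * A * star g).det = A.det := by
  rw [det_mul, det_mul, mul_right_comm, ← det_mul, mem_unitaryGroup_iff.1 hg, det_one, one_mul]

theorem conjT_mem_ESet {g : Matrix (Fin n) (Fin n) ℂ} (hg : g ∈ unitaryGroup (Fin n) ℂ)
    {A : Fin r → Matrix (Fin n) (Fin n) ℂ} (hA : A ∈ ESet n r D) : conjT g A ∈ ESet n r D :=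
  ⟨fun i => mul_mem (mul_mem hg (hA.1 i)) (Unitary.star_mem hg), hA.2.1.conjT hg,
    fun hD i => (det_conj hg _).trans (hA.2.2 hD i)⟩

/-- The action of `SU(n)` on irreducible tuples by simultaneous conjugation. -/
instance : MulAction (SUn n) (ESet n r D) where
  smul g A := ⟨conjT g.mat A, conjT_mem_ESet g.mat_mem A.2⟩
  one_smul _ := Subtype.ext (conjT_one _)
  mul_smul _ _ _ := Subtype.ext (conjT_conjT _ _ _).symm

theorem ESet.coe_smul (g : SUn n) (A : ESet n r D) :
    ((g • A : ESet n r D) : Fin r → Matrix (Fin n) (Fin n) ℂ) = conjT g.mat A := rfl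

theorem continuous_conjT {X : Type} [TopologicalSpace X] {g : X → Matrix (Fin n) (Fin n) ℂ}
    {A : X → Fin r → Matrix (Fin n) (Fin n) ℂ} (hg : Continuous g) (hA : Continuous A) :
    Continuous fun x => conjT (g x) (A x) :=
  continuous_pi fun i => (hg.mul ((continuous_apply i).comp hA)).mul hg.star

instance : ContinuousSMul (SUn n) (ESet n r D) :=
  ⟨(continuous_conjT (SUn.continuous_mat.comp continuous_fst)
    (continuous_subtype_val.comp continuous_snd)).subtype_mk _⟩

/-- The group of scalar matrices in `SU(n)`. -/
def SUcenter (n : ℕ) : Subgroup (SUn n) where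
  carrier := {g | ∃ c : ℂ, g.mat = c • 1}
  one_mem' := ⟨1, by rw [SUn.mat_one, one_smul]⟩
  mul_mem' := by
    rintro a b ⟨c, hc⟩ ⟨d, hd⟩
    exact ⟨c * d, by rw [SUn.mat_mul, hc, hd, smul_mul_smul_comm, one_mul]⟩
  inv_mem' := by
    rintro a ⟨c, hc⟩
    refine ⟨star c, ?_⟩
    show star a.mat = _
    rw [hc, star_smul, star_one]

theorem mem_SUcenter {g : SUn n} : g ∈ SUcenter n ↔ ∃ c : ℂ, g.mat = c • 1 := Iff.rfl

theorem scalar_mem_unitary {c : ℂ} (hc : star c * c = 1) :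
    c • (1 : Matrix (Fin n) (Fin n) ℂ) ∈ unitaryGroup (Fin n) ℂ :=
  smul_mem_unitary hc (one_mem _)

theorem star_mul_self_of_scalar [NeZero n] {c : ℂ}
    (h : c • (1 : Matrix (Fin n) (Fin n) ℂ) ∈ unitaryGroup (Fin n) ℂ) : star c * c = 1 := by
  have := mem_unitaryGroup_iff'.1 h
  rw [star_smul, star_one, smul_mul_smul_comm, one_mul] at this
  simpa using congrFun (congrFun this 0) 0

theorem star_mul_self_of_pow [NeZero n] {c : ℂ} (h : c ^ n = 1) : star c * c = 1 := by
  rw [Complex.star_def, Complex.conj_mul', Complex.norm_eq_one_of_pow_eq_one h (NeZero.ne n)]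
  norm_num

/-- The scalar matrices in `SU(n)` form a cyclic group of order `n`. -/
theorem exists_SUcenter_equiv [NeZero n] : Nonempty (SUcenter n ≃* Multiplicative (ZMod n)) := by
  have hmem : ∀ ζ : rootsOfUnity n ℂ, ((ζ : ℂˣ) : ℂ) ^ n = 1 := fun ζ =>
    (mem_rootsOfUnity' n (ζ : ℂˣ)).1 ζ.2
  let φ : rootsOfUnity n ℂ →* SUcenter n := MonoidHom.mk'
    (fun ζ => ⟨SUn.mk (((ζ : ℂˣ) : ℂ) • 1) (scalar_mem_unitary (star_mul_self_of_pow (hmem ζ)))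
      (by rw [det_smul, det_one, mul_one, Fintype.card_fin, hmem]), _, rfl⟩) (fun a b => by
      refine Subtype.ext (SUn.mat_injective ?_)
      show (((a * b : rootsOfUnity n ℂ) : ℂˣ) : ℂ) • (1 : Matrix (Fin n) (Fin n) ℂ) =
        (((a : ℂˣ) : ℂ) • (1 : Matrix (Fin n) (Fin n) ℂ)) * (((b : ℂˣ) : ℂ) • 1)
      rw [smul_mul_smul_comm, one_mul]; rfl)
  have hφ : ∀ ζ, (φ ζ : SUn n).mat = ((ζ : ℂˣ) : ℂ) • 1 := fun ζ => rfl
  have hbij : Function.Bijective φ := by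
    constructor
    · intro a b hab
      have h1 : (φ a : SUn n).mat = (φ b : SUn n).mat := by rw [hab]
      rw [hφ, hφ] at h1
      refine Subtype.ext (Units.ext ?_)
      simpa using congrFun (congrFun h1 0) 0
    · rintro ⟨g, c, hc⟩
      have hd : c ^ n = 1 := by
        have := g.det_mat
        rwa [hc, det_smul, det_one, mul_one, Fintype.card_fin] at this
      refine ⟨rootsOfUnity.mkOfPowEq c hd, Subtype.ext (SUn.mat_injective ?_)⟩
      rw [hφ, hc, rootsOfUnity.val_mkOfPowEq_coe]
  have hcard : Nat.card (rootsOfUnity n ℂ) = n := by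
    rw [Complex.card_rootsOfUnity]
  have e := zmodCyclicMulEquiv (G := rootsOfUnity n ℂ) inferInstance
  rw [hcard] at e
  exact ⟨(MulEquiv.ofBijective φ hbij).symm.trans e.symm⟩

theorem isDiscrete_SUcenter [NeZero n] : IsDiscrete (SUcenter n : Set (SUn n)) := by
  obtain ⟨e⟩ := exists_SUcenter_equiv (n := n)
  have : Finite (SUcenter n) := Finite.of_injective e e.injective
  exact ⟨inferInstance⟩

/-- Unitarily conjugate tuples are conjugate under the special unitary group. -/
theorem exists_SU_conjT [NeZero n] {u : Matrix (Fin n) (Fin n) ℂ}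
    (hu : u ∈ unitaryGroup (Fin n) ℂ) : ∃ g : SUn n,
    ∀ A : Fin r → Matrix (Fin n) (Fin n) ℂ, conjT g.mat A = conjT u A := by
  have h1 := norm_det_of_unitary hu
  have h2 := star_rootInv_mul (n := n) h1
  refine ⟨SUn.mk (rootInv n u.det • u) (smul_mem_unitary h2 hu) ?_, fun A => ?_⟩
  · rw [det_smul, Fintype.card_fin, rootInv_pow]
    intro h0; rw [h0] at h1; simp at h1
  · funext i
    rw [SUn.mat_mk, conjT, conjT, star_smul, smul_mul_assoc, smul_mul_assoc, mul_smul_comm,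
      smul_smul, mul_comm, h2, one_smul]

/-- The quotient of the space of irreducible tuples by unitary conjugation is a bundle for `SU(n)`:
stabilizers are scalar by Schur's lemma, and local sections come from the slices `exists_slice`. -/
theorem isBundle_of_conj [NeZero n] {B : Type} [TopologicalSpace B] {p : ESet n r D → B}
    (hc : Continuous p) (ho : IsOpenMap p) (hs : Function.Surjective p)
    (hp : ∀ a b, p a = p b ↔ ∃ u ∈ unitaryGroup (Fin n) ℂ,
      conjT u (a : Fin r → Matrix (Fin n) (Fin n) ℂ) = b) : IsBundle p (SUcenter n) where
  discrete := isDiscrete_SUcenter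
  stab g a := by
    constructor
    · intro h
      exact a.2.2.1.scalar_of_conjT_eq g.mat_mem (congrArg Subtype.val h)
    · rintro ⟨c, hc⟩
      have h1 := star_mul_self_of_scalar (hc ▸ g.mat_mem)
      refine Subtype.ext (funext fun i => ?_)
      rw [ESet.coe_smul, hc, conjT, star_smul, star_one, smul_mul_assoc, one_mul, mul_smul_comm,
        mul_one, smul_smul, h1, one_smul]
  fib a b := by
    rw [hp]
    constructor
    · rintro ⟨u, hu, h⟩
      obtain ⟨g, hg⟩ := exists_SU_conjT (r := r) hu
      exact ⟨g, Subtype.ext ((hg _).trans h)⟩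
    · rintro ⟨g, rfl⟩
      exact ⟨g.mat, g.mat_mem, rfl⟩
  cont := hc
  sec b := by
    obtain ⟨a, rfl⟩ := hs b
    obtain ⟨N, s, hN, haN, hsc, hs1, hs2⟩ := exists_slice a.2.2.1
    have hN' : IsOpen ((↑) ⁻¹' N : Set (ESet n r D)) := hN.preimage continuous_subtype_val
    have hE : ∀ x : ESet n r D, ∃ y : ESet n r D, (x : Fin r → Matrix (Fin n) (Fin n) ℂ) ∈ N →
        (y : Fin r → Matrix (Fin n) (Fin n) ℂ) = s x ∧ p y = p x := by
      intro x
      by_cases hx : (x : Fin r → Matrix (Fin n) (Fin n) ℂ) ∈ N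
      · obtain ⟨g, hg, h⟩ := hs1 x hx
        refine ⟨⟨s x, h ▸ conjT_mem_ESet hg x.2⟩, fun _ => ⟨rfl, ?_⟩⟩
        exact ((hp _ _).2 ⟨g, hg, h.symm⟩).symm
      · exact ⟨x, fun h => (hx h).elim⟩
    choose S hS using hE
    have hSc : ContinuousOn S ((↑) ⁻¹' N) := by
      rw [Topology.IsInducing.subtypeVal.continuousOn_iff]
      exact (hsc.comp continuous_subtype_val.continuousOn fun x hx => hx).congr
        fun x hx => (hS x hx).1
    have hsec : ∀ b : B, ∃ x : ESet n r D, b ∈ p '' ((↑) ⁻¹' N) →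
        (x : Fin r → Matrix (Fin n) (Fin n) ℂ) ∈ N ∧ p x = b := by
      intro b
      by_cases hb : b ∈ p '' ((↑) ⁻¹' N)
      · obtain ⟨x, hx, h⟩ := hb
        exact ⟨x, fun _ => ⟨hx, h⟩⟩
      · exact ⟨a, fun h => (hb h).elim⟩
    choose t ht using hsec
    have hkey : ∀ x : ESet n r D, (x : Fin r → Matrix (Fin n) (Fin n) ℂ) ∈ N →
        S (t (p x)) = S x := by
      intro x hx
      obtain ⟨h1, h2⟩ := ht (p x) ⟨x, hx, rfl⟩
      obtain ⟨u, hu, h⟩ := (hp _ _).1 h2.symm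
      refine Subtype.ext ?_
      rw [(hS _ h1).1, (hS _ hx).1, ← h]
      exact hs2 _ hx u hu (h ▸ h1)
    have hap : p a ∈ p '' ((↑) ⁻¹' N) := ⟨a, by exact haN, rfl⟩
    refine ⟨p '' ((↑) ⁻¹' N), ho _ hN', hap, fun b => S (t b), ?_, fun b hb => ?_⟩
    · rw [continuousOn_open_iff (ho _ hN')]
      intro V hV
      convert ho _ (hSc.isOpen_inter_preimage hN' hV) using 1
      ext b
      constructor
      · rintro ⟨⟨x, hx, rfl⟩, hb⟩
        exact ⟨x, ⟨hx, by rw [mem_preimage, ← hkey x hx]; exact hb⟩, rfl⟩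
      · rintro ⟨x, ⟨hx, hxV⟩, rfl⟩
        exact ⟨⟨x, hx, rfl⟩, by rw [mem_preimage, hkey x hx]; exact hxV⟩
    · obtain ⟨h1, h2⟩ := ht b hb
      rw [(hS _ h1).2, h2]
end

end

/-! ### Homotopy of the space of irreducible tuples -/

section
open Set Topology Module Matrix
open scoped ComplexOrder MatrixOrder unitInterval

section
variable {n r : ℕ} {D : Prop}

theorem star_exp_mul_self (t : ℝ) :
    star (Complex.exp (t * Complex.I)) * Complex.exp (t * Complex.I) = 1 := by
  rw [Complex.star_def, Complex.conj_mul', Complex.norm_exp_ofReal_mul_I]; norm_num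

/-- A family of irreducible tuples over a space of dimension at most two is null-homotopic rel `C`,
provided the arguments of the determinants lift to `ℝ`. -/
theorem exists_null (h : 2 ≤ (r - 1) * (n - 1)) {Y E : Type} [NormedAddCommGroup E]
    [NormedSpace ℝ E] [FiniteDimensional ℝ E] (hE : finrank ℝ E ≤ 2)
    [TopologicalSpace Y] [CompactSpace Y] [T2Space Y] {j : Y → E} (hj : IsClosedEmbedding j)
    {C : Set Y} (hC : IsClosed C) {F : Y → ESet n r D} (hF : Continuous F) {a : ESet n r D}
    (hFC : ∀ y ∈ C, F y = a) {θ : Fin r → Y → ℝ} (hθ : ∀ i, Continuous (θ i))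
    (hθC : ∀ i, ∀ y ∈ C, θ i y = 0)
    (hdet : ∀ i y, ((F y : Fin r → Matrix (Fin n) (Fin n) ℂ) i).det =
      Complex.exp (θ i y * Complex.I) * ((a : Fin r → Matrix (Fin n) (Fin n) ℂ) i).det)
    (hθD : D → ∀ i y, θ i y = 0) :
    ∃ K : I × Y → ESet n r D, Continuous K ∧ (∀ y, K (0, y) = F y) ∧ (∀ y, K (1, y) = a) ∧
      ∀ t, ∀ y ∈ C, K (t, y) = a := by
  have hn : NeZero n := ⟨by rintro rfl; simp at h⟩
  have hn0 : (n : ℂ) ≠ 0 := by exact_mod_cast NeZero.ne n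
  have ha : ∀ i, star ((a : Fin r → Matrix (Fin n) (Fin n) ℂ) i) * (a : Fin r → Matrix (Fin n) (Fin n) ℂ) i = 1 :=
    fun i => mem_unitaryGroup_iff'.1 (a.2.1 i)
  have ha' : ∀ i, (a : Fin r → Matrix (Fin n) (Fin n) ℂ) i * star ((a : Fin r → Matrix (Fin n) (Fin n) ℂ) i) = 1 :=
    fun i => mem_unitaryGroup_iff.1 (a.2.1 i)
  have hFi : ∀ i, Continuous fun y => (F y : Fin r → Matrix (Fin n) (Fin n) ℂ) i := fun i =>
    (continuous_apply i).comp (continuous_subtype_val.comp hF)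
  -- the phase by which the determinant has to be corrected, at time `t` of the homotopy
  let c : Fin r → ℝ → Y → ℂ := fun i t y => Complex.exp (((1 - t) * (θ i y / n) : ℝ) * Complex.I)
  have hc : ∀ i t y, star (c i t y) * c i t y = 1 := fun i t y => star_exp_mul_self _
  have hc1 : ∀ i y, c i 1 y = 1 := fun i y => by simp [c]
  have hcC : ∀ i t y, θ i y = 0 → c i t y = 1 := fun i t y hy => by simp [c, hy]
  have hcn : ∀ i y, c i 0 y ^ n = Complex.exp (θ i y * Complex.I) := fun i y => by
    simp only [c]
    rw [← Complex.exp_nat_mul]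
    congr 1
    push_cast
    field_simp
    ring
  have hcc : ∀ i, Continuous fun x : I × Y => c i x.1 x.2 := fun i => by
    have := hθ i
    simp only [c]
    fun_prop
  have hcc0 : ∀ i, Continuous fun y : Y => c i 0 y := fun i => by
    have := hθ i
    simp only [c]
    fun_prop
  have key : ∀ i, ∃ G : I × Y → Matrix (Fin n) (Fin n) ℂ, Continuous G ∧
      (∀ p, G p ∈ unitaryGroup (Fin n) ℂ) ∧ (∀ p, (G p).det = 1) ∧
      (∀ y, G (0, y) = star (c i 0 y) • ((F y : Fin r → Matrix (Fin n) (Fin n) ℂ) i *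
        star ((a : Fin r → Matrix (Fin n) (Fin n) ℂ) i))) ∧ (∀ y, G (1, y) = 1) ∧
      ∀ t, ∀ y ∈ C, G (t, y) = 1 := by
    intro i
    refine su_null hE hj (NeZero.pos n) hC ?_ (fun y => ?_) (fun y => ?_) fun y hy => ?_
    · exact (hcc0 i).star.smul ((hFi i).mul continuous_const)
    · exact smul_mem_unitary (by rw [star_star, mul_comm, hc])
        (mul_mem ((F y).2.1 i) (Unitary.star_mem (a.2.1 i)))
    · rw [det_smul, Fintype.card_fin, det_mul, hdet, ← star_pow, hcn, mul_assoc, ← det_mul, ha',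
        det_one, mul_one, star_exp_mul_self]
    · rw [hFC y hy, ha', hcC i 0 y (hθC i y hy)]; simp
  choose G hG hGu hGd hG0 hG1 hGC using key
  have hsides : IsClosed {x : I × Y | x.1 = 0 ∨ x.1 = 1 ∨ x.2 ∈ C} :=
    (isClosed_eq continuous_fst continuous_const).union
      ((isClosed_eq continuous_fst continuous_const).union (hC.preimage continuous_snd))
  let H : I × Y → Fin r → Matrix (Fin n) (Fin n) ℂ := fun x i =>
    c i x.1 x.2 • (G i x * (a : Fin r → Matrix (Fin n) (Fin n) ℂ) i)
  have hH0 : ∀ y, H (0, y) = F y := fun y => by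
    funext i
    show c i 0 y • (G i (0, y) * _) = _
    rw [hG0, smul_mul_assoc, smul_smul, mul_comm (c i 0 y), hc, one_smul, mul_assoc, ha, mul_one]
  have hH1 : ∀ y, H (1, y) = a := fun y => by
    funext i
    show c i 1 y • (G i (1, y) * _) = _
    rw [hG1, hc1, one_smul, one_mul]
  have hHC : ∀ t, ∀ y ∈ C, H (t, y) = a := fun t y hy => by
    funext i
    show c i t y • (G i (t, y) * _) = _
    rw [hGC i t y hy, hcC i _ y (hθC i y hy), one_smul, one_mul]
  obtain ⟨K, hK, hKE, hKH⟩ := exists_push h D (E := ℝ × E) (by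
      rw [finrank_prod, finrank_self]; omega)
    (j := Prod.map (fun t : I => (t : ℝ)) j)
    ((isClosed_Icc.isClosedEmbedding_subtypeVal).prodMap hj) (H := H)
    (continuous_pi fun i => (hcc i).smul ((hG i).mul continuous_const))
    (fun x i => smul_mem_unitary (hc _ _ _) (mul_mem (hGu i x) (a.2.1 i)))
    (fun hD x i => by
      show (c i x.1 x.2 • (G i x * _)).det = 1
      rw [hcC i _ _ (hθD hD i x.2), one_smul, det_mul, hGd, one_mul, a.2.2.2 hD])
    hsides (fun x hx => by
      obtain ⟨t, y⟩ := x
      rcases hx with rfl | rfl | hx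
      · rw [hH0]; exact (F y).2.2.1
      · rw [hH1]; exact a.2.2.1
      · rw [hHC t y hx]; exact a.2.2.1)
  refine ⟨fun x => ⟨K x, hKE x⟩, hK.subtype_mk _, fun y => Subtype.ext ?_, fun y => Subtype.ext ?_,
    fun t y hy => Subtype.ext ?_⟩
  · exact (hKH _ (.inl rfl)).trans (hH0 y)
  · exact (hKH _ (.inr (.inl rfl))).trans (hH1 y)
  · exact (hKH _ (.inr (.inr hy))).trans (hHC t y hy)

/-- A map from the square to the circle, equal to `1` on the boundary, has a logarithm which
vanishes on the boundary. -/
theorem exists_log {d : (Fin 2 → I) → Circle} (hd : Continuous d)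
    (hb : ∀ x ∈ Cube.boundary (Fin 2), d x = 1) :
    ∃ θ : (Fin 2 → I) → ℝ, Continuous θ ∧ (∀ x, Circle.exp (θ x) = d x) ∧
      ∀ x ∈ Cube.boundary (Fin 2), θ x = 0 := by
  have hb0 : ∀ x : Fin 2 → I, x 1 = 0 ∨ x 0 = 0 ∨ x 0 = 1 ∨ x 1 = 1 → d x = 1 := fun x hx => by
    refine hb x (boundary_two.2 ?_)
    rw [walls_one]; tauto
  obtain ⟨L, ⟨hL0, hL⟩, -⟩ := Circle.isCoveringMap_exp.existsUnique_continuousMap_lifts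
    (⟨fun x : Fin 2 → ℝ => d (cubeProj x), hd.comp continuous_cubeProj⟩ : C(Fin 2 → ℝ, Circle))
    (fun _ => 0) 0 (by
      show Circle.exp 0 = d _
      rw [hb0 _ (.inl ?_), Circle.exp_zero]
      show projIcc (0 : ℝ) 1 zero_le_one 0 = (⟨0, by simp⟩ : I)
      exact projIcc_of_le_left _ le_rfl)
  let θ : (Fin 2 → I) → ℝ := fun x => L fun i => (x i : ℝ)
  have hθ : Continuous θ := L.continuous.comp (by fun_prop)
  have hθd : ∀ x, Circle.exp (θ x) = d x := fun x => by
    have := congrFun hL (fun i => (x i : ℝ))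
    exact this.trans (congrArg d (cubeProj_coe x))
  have hconst : ∀ γ : I → Fin 2 → I, Continuous γ → (∀ t, d (γ t) = 1) → ∀ s t,
      θ (γ s) = θ (γ t) := fun γ hγ h1 s t =>
    Circle.isCoveringMap_exp.const_of_comp (hθ.comp hγ)
      (fun s t => by rw [Function.comp_apply, Function.comp_apply, hθd, hθd, h1, h1]) s t
  have h00 : θ ![0, 0] = 0 := by
    rw [← hL0]
    refine congrArg L (funext fun i => ?_)
    fin_cases i <;> rfl
  have h1 : ∀ s, θ ![s, 0] = 0 := fun s =>
    (hconst (fun s => ![s, 0]) (by fun_prop) (fun t => hb0 _ (.inl rfl)) s 0).trans h00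
  have h2 : ∀ u, θ ![0, u] = 0 := fun u =>
    (hconst (fun u => ![0, u]) (by fun_prop) (fun t => hb0 _ (.inr (.inl rfl))) u 0).trans h00
  have h3 : ∀ u, θ ![1, u] = 0 := fun u =>
    (hconst (fun u => ![1, u]) (by fun_prop) (fun t => hb0 _ (.inr (.inr (.inl rfl)))) u 0).trans
      (h1 1)
  have h4 : ∀ s, θ ![s, 1] = 0 := fun s =>
    (hconst (fun s => ![s, 1]) (by fun_prop) (fun t => hb0 _ (.inr (.inr (.inr rfl)))) s 0).trans
      (h2 1)
  refine ⟨θ, hθ, hθd, fun x hx => ?_⟩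
  have hx' : x = ![x 0, x 1] := by funext i; fin_cases i <;> rfl
  rw [hx']
  rcases boundary_two.1 hx with h | h
  · rcases walls_one.1 h with h | h | h
    · rw [h]; exact h1 _
    · rw [h]; exact h2 _
    · rw [h]; exact h3 _
  · rw [h]; exact h4 _

theorem isClosed_ends : IsClosed {s : I | s = 0 ∨ s = 1} :=
  (isClosed_eq continuous_id continuous_const).union (isClosed_eq continuous_id continuous_const)

/-- Orbits of paths in `SU(n)` from `1` to the center are null-homotopic. -/
theorem exists_orbit_null (h : 2 ≤ (r - 1) * (n - 1)) (e : ESet n r D) (g : I → SUn n)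
    (hg : Continuous g) (hg0 : g 0 = 1) (hg1 : g 1 • e = e) :
    ∃ K : I × I → ESet n r D, Continuous K ∧
      (∀ s, K (0, s) = g s • e) ∧ (∀ s, K (1, s) = e) ∧ ∀ t s, s = 0 ∨ s = 1 → K (t, s) = e := by
  obtain ⟨K, hK, h0, h1, h2⟩ := exists_null h (E := ℝ) (by rw [finrank_self]; norm_num)
    (isClosed_Icc.isClosedEmbedding_subtypeVal) isClosed_ends (F := fun s => g s • e) (a := e)
    (hg.smul continuous_const) (fun s hs => by
      rcases hs with rfl | rfl
      · rw [hg0, one_smul]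
      · exact hg1)
    (θ := fun _ _ => 0) (fun _ => continuous_const) (fun _ _ _ => rfl) (fun i s => by
      rw [ESet.coe_smul, conjT, det_conj (g s).mat_mem]; simp) (fun _ _ _ => rfl)
  exact ⟨K, hK, h0, h1, h2⟩

/-- The second homotopy group of the space of irreducible tuples vanishes. -/
theorem exists_square_null (h : 2 ≤ (r - 1) * (n - 1)) (e : ESet n r D)
    (F : (Fin 2 → I) → ESet n r D) (hF : Continuous F)
    (hFe : ∀ x ∈ Cube.boundary (Fin 2), F x = e) :
    ∃ K : I × (Fin 2 → I) → ESet n r D, Continuous K ∧ (∀ x, K (0, x) = F x) ∧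
      (∀ x, K (1, x) = e) ∧ ∀ t, ∀ x ∈ Cube.boundary (Fin 2), K (t, x) = e := by
  have hCl : IsClosed (Cube.boundary (Fin 2)) := by
    have : Cube.boundary (Fin 2) = ⋃ i : Fin 2, (fun x : Fin 2 → I => x i) ⁻¹' {s | s = 0 ∨ s = 1} := by
      ext x; simp [Cube.boundary]
    rw [this]
    exact isClosed_iUnion_of_finite fun i => isClosed_ends.preimage (continuous_apply i)
  have hθ : ∃ θ : Fin r → (Fin 2 → I) → ℝ, (∀ i, Continuous (θ i)) ∧
      (∀ i, ∀ x ∈ Cube.boundary (Fin 2), θ i x = 0) ∧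
      (∀ i x, ((F x : Fin r → Matrix (Fin n) (Fin n) ℂ) i).det =
        Complex.exp (θ i x * Complex.I) * ((e : Fin r → Matrix (Fin n) (Fin n) ℂ) i).det) ∧
      (D → ∀ i x, θ i x = 0) := by
    by_cases hD : D
    · refine ⟨fun _ _ => 0, fun _ => continuous_const, fun _ _ _ => rfl, fun i x => ?_,
        fun _ _ _ => rfl⟩
      rw [(F x).2.2.2 hD, e.2.2.2 hD]; simp
    · have hne : ∀ i, star ((e : Fin r → Matrix (Fin n) (Fin n) ℂ) i).det *
          ((e : Fin r → Matrix (Fin n) (Fin n) ℂ) i).det = 1 := fun i => by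
        rw [Complex.star_def, Complex.conj_mul', norm_det_of_unitary (e.2.1 i)]; norm_num
      have key : ∀ i, ∃ θ : (Fin 2 → I) → ℝ, Continuous θ ∧
          (∀ x ∈ Cube.boundary (Fin 2), θ x = 0) ∧
          ∀ x, ((F x : Fin r → Matrix (Fin n) (Fin n) ℂ) i).det =
            Complex.exp (θ x * Complex.I) * ((e : Fin r → Matrix (Fin n) (Fin n) ℂ) i).det := by
        intro i
        let d : (Fin 2 → I) → ℂ := fun x => ((F x : Fin r → Matrix (Fin n) (Fin n) ℂ) i).det *
          star ((e : Fin r → Matrix (Fin n) (Fin n) ℂ) i).det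
        have hdc : Continuous d := Continuous.mul
          (((continuous_apply i).comp (continuous_subtype_val.comp hF)).matrix_det) continuous_const
        have hd1 : ∀ x, d x ∈ Submonoid.unitSphere ℂ := fun x => by
          show d x ∈ Metric.sphere (0 : ℂ) 1
          rw [mem_sphere_zero_iff_norm, norm_mul, norm_star, norm_det_of_unitary ((F x).2.1 i),
            norm_det_of_unitary (e.2.1 i), one_mul]
        obtain ⟨θ, h1, h2, h3⟩ := exists_log (d := fun x => (⟨d x, hd1 x⟩ : Circle))
          (hdc.subtype_mk _) fun x hx => by
            refine Circle.ext ?_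
            show _ * _ = (1 : ℂ)
            rw [hFe x hx, mul_comm, hne]
        refine ⟨θ, h1, h3, fun x => ?_⟩
        have h4 := congrArg (fun z : Circle => (z : ℂ)) (h2 x)
        simp only [Circle.coe_exp] at h4
        rw [h4]
        show _ = _ * _ * _
        rw [mul_assoc, hne, mul_one]
      choose θ h1 h2 h3 using key
      exact ⟨θ, h1, h2, h3, fun hD' => (hD hD').elim⟩
  obtain ⟨θ, h1, h2, h3, h4⟩ := hθ
  exact exists_null h (E := Fin 2 → ℝ) (by rw [finrank_fin_fun])
    (Topology.IsClosedEmbedding.piMap fun _ : Fin 2 => isClosed_Icc.isClosedEmbedding_subtypeVal)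
    hCl hF hFe h1 h2 h3 h4

/-- `SU(n)` is path connected. -/
theorem exists_path_SU (hn : 0 < n) (z : SUn n) :
    ∃ g : I → SUn n, Continuous g ∧ g 0 = 1 ∧ g 1 = z := by
  obtain ⟨G, hG, hGu, hGd, hG0, hG1, -⟩ := su_null (Y := Unit) (E := ℝ) (j := fun _ => 0)
    (by rw [finrank_self]; norm_num)
    (Topology.IsClosedEmbedding.of_continuous_injective_isClosedMap continuous_const
      (fun _ _ _ => rfl) (fun s _ => (Set.toFinite _).isClosed)) hn isClosed_empty
    (F := fun _ => z.mat) continuous_const (fun _ => z.mat_mem) (fun _ => z.det_mat)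
    (fun y hy => hy.elim)
  refine ⟨fun t => SUn.mk (G (unitInterval.symm t, ())) (hGu _) (hGd _),
    SUn.continuous_mk (hG.comp (by fun_prop)) _ _, SUn.mat_injective ?_, SUn.mat_injective ?_⟩
  · rw [SUn.mat_mk, unitInterval.symm_zero, hG1, SUn.mat_one]
  · rw [SUn.mat_mk, unitInterval.symm_one, hG0]

/-- `SU(n)` is simply connected. -/
theorem exists_loop_null (hn : 0 < n) (g : I → SUn n) (hg : Continuous g) (hg0 : g 0 = 1)
    (hg1 : g 1 = 1) : ∃ k : I × I → SUn n, Continuous k ∧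
      (∀ s, k (0, s) = g s) ∧ (∀ s, k (1, s) = 1) ∧ ∀ t s, s = 0 ∨ s = 1 → k (t, s) = 1 := by
  obtain ⟨G, hG, hGu, hGd, hG0, hG1, hGC⟩ := su_null (E := ℝ) (by rw [finrank_self]; norm_num)
    (isClosed_Icc.isClosedEmbedding_subtypeVal) hn isClosed_ends
    (F := fun s => (g s).mat) (SUn.continuous_mat.comp hg) (fun s => (g s).mat_mem)
    (fun s => (g s).det_mat) (fun s hs => by
      rcases hs with rfl | rfl
      · rw [hg0, SUn.mat_one]
      · rw [hg1, SUn.mat_one])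
  exact ⟨fun x => SUn.mk (G x) (hGu x) (hGd x), SUn.continuous_mk hG _ _,
    fun s => SUn.mat_injective (hG0 s), fun s => SUn.mat_injective (hG1 s),
    fun t s hs => SUn.mat_injective (hGC t s hs)⟩

/-- `π₂` of the quotient of irreducible tuples by conjugation, for `U(n)` (`D` false) and `SU(n)`
(`D` true). The quotient enters through any open surjection with the conjugacy classes as fibres. -/
theorem homotopyGroup_of_conj (h : 2 ≤ (r - 1) * (n - 1)) {B : Type} [TopologicalSpace B]
    {p : ESet n r D → B} (hc : Continuous p) (ho : IsOpenMap p) (hs : Function.Surjective p)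
    (hp : ∀ a b, p a = p b ↔ ∃ u ∈ unitaryGroup (Fin n) ℂ,
      conjT u (a : Fin r → Matrix (Fin n) (Fin n) ℂ) = b) (x : B) :
    Nonempty (HomotopyGroup (Fin 2) B x ≃* Multiplicative (ZMod n)) := by
  have hn : NeZero n := ⟨by rintro rfl; simp at h⟩
  obtain ⟨e, rfl⟩ := hs x
  have hb := isBundle_of_conj hc ho hs hp
  obtain ⟨φ⟩ := hb.homotopyGroup_equiv (e := e) (fun z _ => exists_path_SU (NeZero.pos n) z)
    (exists_loop_null (NeZero.pos n))
    (fun g hg hg0 hg1 => exists_orbit_null h e g hg hg0 ((hb.stab _ _).2 hg1))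
    (exists_square_null h e)
  obtain ⟨ψ⟩ := exists_SUcenter_equiv (n := n)
  exact ⟨φ.trans ψ⟩
end

end

/-! ### The irreducible loci -/

section
open Set Topology Module Matrix

section
variable {n r : ℕ}

/-- The restriction of an open map `q` to a full preimage of a set `L` is open. Here `φ` identifies
`E` with that preimage. -/
theorem isOpenMap_of_saturated {E X Q : Type} [TopologicalSpace E] [TopologicalSpace X]
    [TopologicalSpace Q] {φ : E → X} (hφ : IsInducing φ) {q : X → Q} (hq : IsOpenMap q)
    {L : Set Q} {p : E → L} (hp : ∀ e, (p e : Q) = q (φ e))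
    (hr : ∀ x, q x ∈ L → ∃ e, φ e = x) : IsOpenMap p := by
  intro U hU
  obtain ⟨V, hV, rfl⟩ := hφ.isOpen_iff.1 hU
  refine isOpen_induced_iff.2 ⟨q '' V, hq V hV, ?_⟩
  ext ⟨x, hx⟩
  constructor
  · rintro ⟨v, hv, rfl⟩
    obtain ⟨e, rfl⟩ := hr v hx
    exact ⟨e, hv, Subtype.ext (hp e)⟩
  · rintro ⟨e, he, h⟩
    exact ⟨φ e, he, by rw [← hp, h]⟩

instance continuousConstSMul_conjAct {G : Type} [Group G] [TopologicalSpace G] [ContinuousMul G] :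
    ContinuousConstSMul (ConjAct G) G where
  continuous_const_smul g := by
    simp only [ConjAct.smul_def]
    fun_prop



theorem mk_eq_mk_U {A B : Fin r → Un n} :
    Quotient.mk (MulAction.orbitRel (ConjAct (Un n)) (Fin r → Un n)) A = Quotient.mk _ B ↔
      ∃ g : Un n, conjT (g : Matrix (Fin n) (Fin n) ℂ)
        (fun i => (A i : Matrix (Fin n) (Fin n) ℂ)) = fun i => (B i : Matrix (Fin n) (Fin n) ℂ) := by
  rw [eq_comm, Quotient.eq, MulAction.orbitRel_apply, MulAction.mem_orbit_iff]
  constructor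
  · rintro ⟨g, rfl⟩
    exact ⟨ConjAct.ofConjAct g, rfl⟩
  · rintro ⟨g, hg⟩
    exact ⟨ConjAct.toConjAct g, funext fun i => Subtype.ext (congrFun hg i)⟩

theorem mk_eq_mk_SU {A B : Fin r → SUn n} :
    Quotient.mk (MulAction.orbitRel (ConjAct (SUn n)) (Fin r → SUn n)) A = Quotient.mk _ B ↔
      ∃ g : SUn n, conjT g.mat (fun i => (A i).mat) = fun i => (B i).mat := by
  rw [eq_comm, Quotient.eq, MulAction.orbitRel_apply, MulAction.mem_orbit_iff]
  constructor
  · rintro ⟨g, rfl⟩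
    exact ⟨ConjAct.ofConjAct g, rfl⟩
  · rintro ⟨g, hg⟩
    exact ⟨ConjAct.toConjAct g, funext fun i => SUn.mat_injective (congrFun hg i)⟩

/-- An irreducible tuple of unitary matrices, as an element of `U(n)^r`. -/
def ESet.toU (A : ESet n r False) : Fin r → Un n := fun i => ⟨A.1 i, A.2.1 i⟩

/-- An irreducible tuple of special unitary matrices, as an element of `SU(n)^r`. -/
def ESet.toSU (A : ESet n r True) : Fin r → SUn n := fun i =>
  SUn.mk (A.1 i) (A.2.1 i) (A.2.2.2 trivial i)

theorem ESet.isInducing_toU : IsInducing (ESet.toU (n := n) (r := r)) := by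
  have h : IsInducing fun B : Fin r → Un n => fun i => (B i : Matrix (Fin n) (Fin n) ℂ) :=
    IsInducing.piMap fun _ => IsInducing.subtypeVal
  refine h.of_comp_iff.1 ?_
  exact IsInducing.subtypeVal

theorem ESet.isInducing_toSU : IsInducing (ESet.toSU (n := n) (r := r)) := by
  have h : IsInducing fun B : Fin r → SUn n => fun i => (B i).mat :=
    IsInducing.piMap fun _ => IsInducing.subtypeVal.comp IsInducing.subtypeVal
  refine h.of_comp_iff.1 ?_
  exact IsInducing.subtypeVal

theorem pi2_U (h : 2 ≤ (r - 1) * (n - 1)) (x : ↥(irrLocusU n r)) :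
    Nonempty (HomotopyGroup (Fin 2) ↥(irrLocusU n r) x ≃* Multiplicative (ZMod n)) := by
  let p : ESet n r False → irrLocusU n r := fun A => ⟨Quotient.mk _ (ESet.toU A), ESet.toU A, A.2.2.1, rfl⟩
  have hq := isOpenMap_quotient_mk'_mul (Γ := ConjAct (Un n)) (T := Fin r → Un n)
  refine homotopyGroup_of_conj h (p := p) ?_ ?_ ?_ (fun a b => ?_) x
  · exact (continuous_quotient_mk'.comp ESet.isInducing_toU.continuous).subtype_mk _
  · refine isOpenMap_of_saturated ESet.isInducing_toU hq (fun _ => rfl) ?_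
    rintro x ⟨A, hA, hx⟩
    obtain ⟨g, hg⟩ := mk_eq_mk_U.1 hx
    have := conjT_mem_ESet (D := False) g.2 (A := fun i => (A i : Matrix (Fin n) (Fin n) ℂ))
      ⟨fun i => (A i).2, hA, False.elim⟩
    rw [hg] at this
    exact ⟨⟨_, this⟩, rfl⟩
  · rintro ⟨_, A, hA, rfl⟩
    exact ⟨⟨fun i => A i, fun i => (A i).2, hA, False.elim⟩, rfl⟩
  · rw [Subtype.ext_iff]
    refine mk_eq_mk_U.trans ⟨?_, ?_⟩
    · rintro ⟨g, hg⟩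
      exact ⟨g, g.2, hg⟩
    · rintro ⟨u, hu, h⟩
      exact ⟨⟨u, hu⟩, h⟩

theorem pi2_SU (h : 2 ≤ (r - 1) * (n - 1)) (x : ↥(irrLocusSU n r)) :
    Nonempty (HomotopyGroup (Fin 2) ↥(irrLocusSU n r) x ≃* Multiplicative (ZMod n)) := by
  have hn : NeZero n := ⟨by rintro rfl; simp at h⟩
  let p : ESet n r True → irrLocusSU n r := fun A =>
    ⟨Quotient.mk _ (ESet.toSU A), ESet.toSU A, A.2.2.1, rfl⟩
  have hq := isOpenMap_quotient_mk'_mul (Γ := ConjAct (SUn n)) (T := Fin r → SUn n)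
  refine homotopyGroup_of_conj h (p := p) ?_ ?_ ?_ (fun a b => ?_) x
  · exact (continuous_quotient_mk'.comp ESet.isInducing_toSU.continuous).subtype_mk _
  · refine isOpenMap_of_saturated ESet.isInducing_toSU hq (fun _ => rfl) ?_
    rintro x ⟨A, hA, hx⟩
    obtain ⟨g, hg⟩ := mk_eq_mk_SU.1 hx
    have := conjT_mem_ESet (D := True) g.mat_mem (A := fun i => (A i).mat)
      ⟨fun i => (A i).mat_mem, hA, fun _ i => (A i).det_mat⟩
    rw [hg] at this
    exact ⟨⟨_, this⟩, rfl⟩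
  · rintro ⟨_, A, hA, rfl⟩
    exact ⟨⟨fun i => (A i).mat, fun i => (A i).mat_mem, hA, fun _ i => (A i).det_mat⟩, rfl⟩
  · rw [Subtype.ext_iff]
    refine mk_eq_mk_SU.trans ⟨?_, ?_⟩
    · rintro ⟨g, hg⟩
      exact ⟨g.mat, g.mat_mem, hg⟩
    · rintro ⟨u, hu, h⟩
      obtain ⟨g, hg⟩ := exists_SU_conjT (r := r) hu
      exact ⟨g, (hg _).trans h⟩

end

end

/-- If `(r−1)(n−1) ≥ 2`, then the second homotopy group of the irreducible locus
`X_r(U(n))^{irr}` is cyclic of order `n`, and the same holds for `SU(n)`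
(both spaces are path connected, so this holds at every basepoint). -/
theorem pi2_irrLocus_unitary_and_specialUnitary (n r : ℕ) (h : 2 ≤ (r - 1) * (n - 1)) :
    (∀ x : ↥(irrLocusU n r),
      Nonempty (HomotopyGroup (Fin 2) ↥(irrLocusU n r) x ≃* Multiplicative (ZMod n))) ∧
    (∀ y : ↥(irrLocusSU n r),
      Nonempty (HomotopyGroup (Fin 2) ↥(irrLocusSU n r) y ≃* Multiplicative (ZMod n))) :=
  ⟨pi2_U h, pi2_SU h⟩
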